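/- The subgroup Π of G has index 864 in G, is torsion-free (no element of Π other than the identity has finite order), and the abelianization Π/[Π,Π] is isomorphic to ℤ². -/

import Mathlib

/-- Generators of the Cartwright–Steger lattice presentation. -/
inductive CSgen : Type
  | u : CSgen
  | v : CSgen
  | b : CSgen

open FreeGroup in
/-- Relators of the Cartwright–Steger lattice:
`u³ = v⁴ = b³ = 1`, `(uv)² = (vu)²`, `vb = bv`, `(buv)³ = 1`, `(buvu)²v = 1`. -/
def csRels : Set (FreeGroup CSgen) :=
  { (of CSgen.u) ^ 3,
    (of CSgen.v) ^ 4,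
    (of CSgen.b) ^ 3,
    (of CSgen.u * of CSgen.v) ^ 2 * ((of CSgen.v * of CSgen.u) ^ 2)⁻¹,
    of CSgen.v * of CSgen.b * (of CSgen.b * of CSgen.v)⁻¹,
    (of CSgen.b * of CSgen.u * of CSgen.v) ^ 3,
    (of CSgen.b * of CSgen.u * of CSgen.v * of CSgen.u) ^ 2 * of CSgen.v }

/-- The Cartwright–Steger lattice, as an abstract presented group. -/
abbrev CS : Type := PresentedGroup csRels

def gu : CS := PresentedGroup.of CSgen.u
def gv : CS := PresentedGroup.of CSgen.v
def gb : CS := PresentedGroup.of CSgen.b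
/-- `j = (uv)²`. -/
def gj : CS := (gu * gv) ^ 2

/-- `a₁ = vuv⁻¹j⁴buvj²`. -/
def a1 : CS := gv * gu * gv⁻¹ * gj ^ 4 * gb * gu * gv * gj ^ 2
/-- `a₂ = v²ubuv⁻¹uv²j`. -/
def a2 : CS := gv ^ 2 * gu * gb * gu * gv⁻¹ * gu * gv ^ 2 * gj
/-- `a₃ = u⁻¹v²uj⁹bv⁻¹uv⁻¹j⁸`. -/
def a3 : CS := gu⁻¹ * gv ^ 2 * gu * gj ^ 9 * gb * gv⁻¹ * gu * gv⁻¹ * gj ^ 8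

/-- The subgroup `Π` generated by `a₁`, `a₂`, `a₃`. -/
def PiGrp : Subgroup CS := Subgroup.closure {a1, a2, a3}

lemma a1_mem : a1 ∈ PiGrp := Subgroup.subset_closure (Set.mem_insert _ _)
lemma a2_mem : a2 ∈ PiGrp :=
  Subgroup.subset_closure (Set.mem_insert_of_mem _ (Set.mem_insert _ _))
lemma a3_mem : a3 ∈ PiGrp :=
  Subgroup.subset_closure (Set.mem_insert_of_mem _ (Set.mem_insert_of_mem _ (Set.mem_singleton _)))

/-!
The lattice acts on the complex hyperbolic plane through a projective unitary representation of
signature `(2, 1)` over `ℤ[exp(πi/6)]`, in which the finite group `K = ⟨u, v⟩` fixes the point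
represented by the third basis vector. The convex sets of points that are close to a point of the
orbit of this vector form charts of the unit ball indexed by the group. As the ball is connected,
and the transitions between charts that meet lie in `K ∪ KbK ∪ KcK` with `c = bu⁻¹b`, an argument
of Macbeath type shows that two elements of the group whose charts meet differ by one of these
transitions, so that the representation is faithful. Moreover an element of finite order fixes a
point of the ball, hence is conjugate to an element of `K ∪ KbK ∪ KcK` whose powers all move the
base point by a small amount.

The cosets of `Π` are permuted as described by a table of `864` entries, which carries a cocycle
with values in `ℤ²`. The table gives the index of `Π` and a homomorphism from `Π` to `ℤ²`, and a
single relation between `a₁`, `a₂`, `a₃` shows that it induces an isomorphism on the abelianization.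
Finally, `K` acts freely on the cosets, and the elements of `KbK ∪ KcK` that fix a coset have powers
that move the base point far away.
-/

namespace CartwrightSteger

/-! ### Words in the generators -/

/-- The letters of the words below: the generators of `CS`, and `j` as an abbreviation of `uvuv`. -/
inductive Letter : Type
  | u : Letter
  | v : Letter
  | b : Letter
  | j : Letter
deriving DecidableEq

/-- The element of `CS` denoted by a letter. -/
def Letter.val : Letter → CS
  | .u => gu
  | .v => gv
  | .b => gb
  | .j => gj

/-- Positive words; they represent all elements of `CS` since the generators have finite order. -/
abbrev Word := List Letter

/-- The element of `CS` denoted by a word. -/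
def Word.val (w : Word) : CS := (w.map Letter.val).prod

@[simp] lemma Word.val_nil : Word.val [] = 1 := rfl

@[simp] lemma Word.val_cons (s : Letter) (w : Word) : Word.val (s :: w) = s.val * Word.val w :=
  List.prod_cons

@[simp] lemma Word.val_append (w w' : Word) : Word.val (w ++ w') = Word.val w * Word.val w' := by
  simp [Word.val]

@[simp] lemma Word.val_replicate (n : ℕ) (s : Letter) :
    Word.val (List.replicate n s) = s.val ^ n := by
  simp [Word.val]

/-! ### Consequences of the relations -/

lemma mk_eq_mk_of_mul_inv_mem {x y : FreeGroup CSgen} (h : x * y⁻¹ ∈ csRels) :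
    PresentedGroup.mk csRels x = PresentedGroup.mk csRels y := by
  have h1 := PresentedGroup.one_of_mem h
  rwa [map_mul, map_inv, mul_inv_eq_one] at h1

lemma u_pow_three : gu ^ 3 = 1 :=
  PresentedGroup.one_of_mem (x := FreeGroup.of CSgen.u ^ 3) (by simp [csRels])

lemma v_pow_four : gv ^ 4 = 1 :=
  PresentedGroup.one_of_mem (x := FreeGroup.of CSgen.v ^ 4) (by simp [csRels])

lemma b_pow_three : gb ^ 3 = 1 :=
  PresentedGroup.one_of_mem (x := FreeGroup.of CSgen.b ^ 3) (by simp [csRels])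

lemma j_eq_vu_sq : gj = (gv * gu) ^ 2 :=
  mk_eq_mk_of_mul_inv_mem (x := (FreeGroup.of CSgen.u * FreeGroup.of CSgen.v) ^ 2)
    (y := (FreeGroup.of CSgen.v * FreeGroup.of CSgen.u) ^ 2) (by simp [csRels])

lemma commute_v_b : Commute gv gb :=
  mk_eq_mk_of_mul_inv_mem (x := FreeGroup.of CSgen.v * FreeGroup.of CSgen.b)
    (y := FreeGroup.of CSgen.b * FreeGroup.of CSgen.v) (by simp [csRels])

lemma buv_pow_three : (gb * gu * gv) ^ 3 = 1 :=
  PresentedGroup.one_of_mem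
    (x := (FreeGroup.of CSgen.b * FreeGroup.of CSgen.u * FreeGroup.of CSgen.v) ^ 3)
    (by simp [csRels])

lemma buvu_sq_mul_v : (gb * gu * gv * gu) ^ 2 * gv = 1 :=
  PresentedGroup.one_of_mem
    (x := (FreeGroup.of CSgen.b * FreeGroup.of CSgen.u * FreeGroup.of CSgen.v *
      FreeGroup.of CSgen.u) ^ 2 * FreeGroup.of CSgen.v)
    (by simp [csRels])

lemma isOfFinOrder_of (s : CSgen) : IsOfFinOrder (PresentedGroup.of s : CS) := by
  cases s
  exacts [isOfFinOrder_iff_pow_eq_one.2 ⟨3, by decide, u_pow_three⟩,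
    isOfFinOrder_iff_pow_eq_one.2 ⟨4, by decide, v_pow_four⟩,
    isOfFinOrder_iff_pow_eq_one.2 ⟨3, by decide, b_pow_three⟩]

lemma u_inv : gu⁻¹ = gu * gu := by
  rw [inv_eq_iff_mul_eq_one, ← u_pow_three, pow_three]

lemma v_inv : gv⁻¹ = gv * gv * gv := by
  rw [inv_eq_iff_mul_eq_one, ← v_pow_four]; simp only [pow_succ, pow_zero, one_mul, mul_assoc]

lemma b_inv : gb⁻¹ = gb * gb := by
  rw [inv_eq_iff_mul_eq_one, ← b_pow_three, pow_three]

lemma j_mul_v_inv : gj * gv⁻¹ = gu * gv * gu := by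
  rw [gj, pow_two, ← mul_assoc, mul_inv_cancel_right]

lemma j_mul_u_inv : gj * gu⁻¹ = gv * gu * gv := by
  rw [j_eq_vu_sq, pow_two, ← mul_assoc, mul_inv_cancel_right]

lemma commute_j_u : Commute gj gu := by
  rw [commute_iff_eq]; nth_rw 1 [gj]; rw [j_eq_vu_sq, pow_two, pow_two]; group

lemma commute_j_v : Commute gj gv := by
  rw [commute_iff_eq]; nth_rw 1 [j_eq_vu_sq]; rw [gj, pow_two, pow_two]; group

/-! ### The group `K` -/

lemma v_mul_u : gv * gu = gu⁻¹ * gj * gv⁻¹ := by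
  rw [← commute_j_u.inv_right.eq, j_mul_u_inv, mul_inv_cancel_right]

lemma v_inv_mul_u_inv : gv⁻¹ * gu⁻¹ = gu * gj⁻¹ * gv := by
  rw [commute_j_u.symm.inv_right.eq, mul_assoc, eq_inv_mul_iff_mul_eq, ← mul_assoc, j_mul_v_inv,
    mul_inv_cancel_right]

lemma u_mul_u : gu * gu = gu⁻¹ := u_inv.symm

lemma v_sq_mul_v_sq : gv * gv * (gv * gv) = 1 := by
  rw [← v_pow_four, pow_succ, pow_three', mul_assoc, mul_assoc, mul_assoc]

lemma v_mul_u_mul_v_sq_mul_u_inv :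
    gv * (gu * (gv * gv) * gu⁻¹) = gj * gj * gj * (gu * (gv * gv) * gu⁻¹ * gv⁻¹) :=
  calc gv * (gu * (gv * gv) * gu⁻¹) = gj * (gu * (gu * gv * gu) * gu) := by
        grind [j_mul_u_inv, u_mul_u]
    _ = gj * gu * (gv * gv) * (gv * (gu * gv * gu) * (gv * gu)) := by
        grind [j_mul_v_inv, v_sq_mul_v_sq, commute_j_u.eq, commute_j_v.eq, commute_j_v.inv_right.eq,
          mul_inv_cancel gv, inv_mul_cancel gv]
    _ = gj * gj * gj * (gu * (gv * gv) * gu⁻¹ * gv⁻¹) := by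
        rw [show gv * (gu * gv * gu) * (gv * gu) = gv * gu * gv * (gu * gv * gu) by group,
          ← j_mul_u_inv, ← j_mul_v_inv]
        grind [commute_j_u.inv_right.eq, commute_j_v.eq, commute_j_u.eq]

/-- The finite subgroup of `CS` generated by `u` and `v`. -/
def K : Subgroup CS := Subgroup.closure {gu, gv}

lemma u_mem_K : gu ∈ K := Subgroup.subset_closure (Set.mem_insert _ _)

lemma v_mem_K : gv ∈ K := Subgroup.subset_closure (Set.mem_insert_of_mem _ rfl)

lemma j_mem_K : gj ∈ K := pow_mem (mul_mem u_mem_K v_mem_K) 2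

lemma commute_j_of_mem_K {k : CS} (hk : k ∈ K) : Commute gj k := by
  induction hk using Subgroup.closure_induction with
  | mem x hx => rcases hx with rfl | rfl; exacts [commute_j_u, commute_j_v]
  | one => exact Commute.one_right gj
  | mul x y _ _ hx hy => exact hx.mul_right hy
  | inv x _ hx => exact hx.inv_right

-- By the previous relation `v` is conjugate in `K` to `j³v⁻¹`.
lemma j_pow_twelve : gj ^ 12 = 1 := by
  set x := gu * (gv * gv) * gu⁻¹ with hx
  have hxK : x ∈ K := mul_mem (mul_mem u_mem_K (mul_mem v_mem_K v_mem_K)) (inv_mem u_mem_K)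
  have h : x⁻¹ * gv * x⁻¹⁻¹ = gj ^ 3 * gv⁻¹ := by
    rw [inv_inv, mul_assoc, inv_mul_eq_iff_eq_mul, hx, v_mul_u_mul_v_sq_mul_u_inv, ← hx,
      ← pow_three', ← mul_assoc (gj ^ 3) x, ← mul_assoc x, ((commute_j_of_mem_K hxK).pow_left 3).eq]
  calc gj ^ 12 = (gj ^ 3 * gv⁻¹) ^ 4 := by
        rw [(commute_j_v.inv_right.pow_left 3).mul_pow, inv_pow, v_pow_four, ← pow_mul, inv_one,
          mul_one]
    _ = 1 := by rw [← h, conj_pow, v_pow_four, mul_one, mul_inv_cancel]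

lemma Word.val_mem_K {w : Word} (hw : Letter.b ∉ w) : w.val ∈ K := by
  induction w with
  | nil => exact one_mem K
  | cons s w ih =>
    rw [List.mem_cons, not_or] at hw
    refine mul_mem ?_ (ih hw.2)
    cases s with
    | u => exact u_mem_K
    | v => exact v_mem_K
    | b => exact absurd rfl hw.1
    | j => exact j_mem_K

/-- Representatives `x₀, …, x₅` of the cosets of the abelian subgroup `⟨j, v⟩` in `K`. -/
def kRepWord : ℕ → Word
  | 0 => []
  | 1 => [.u]
  | 2 => [.u, .u]
  | 3 => [.v, .u, .u]
  | 4 => [.v, .v, .u, .u]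
  | _ => [.u, .v, .v, .u, .u]

/-- The word `xᵢ jᶜ vᵃ` attached to the triple `(i, c, a)`. For `i < 6`, `c < 12`, `a < 4` these
words represent the elements of `K`. -/
def kWord (t : ℕ × ℕ × ℕ) : Word :=
  kRepWord t.1 ++ List.replicate t.2.1 .j ++ List.replicate t.2.2 .v

lemma kWord_val (t : ℕ × ℕ × ℕ) :
    (kWord t).val = (kRepWord t.1).val * gj ^ t.2.1 * gv ^ t.2.2 := by
  simp [kWord, Letter.val, mul_assoc]

lemma b_notMem_kRepWord (i : ℕ) : Letter.b ∉ kRepWord i := by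
  rcases i with _ | _ | _ | _ | _ | i <;> simp [kRepWord]

lemma b_notMem_kWord (t : ℕ × ℕ × ℕ) : Letter.b ∉ kWord t := by
  simp [kWord, b_notMem_kRepWord]

/-- The triple `(i', c', a')` such that `s xᵢ = xᵢ' jᶜ' vᵃ'`, for a letter `s ≠ b`. -/
def kLeftMul : Letter → ℕ → ℕ × ℕ × ℕ
  | .u, 0 => (1, 0, 0)
  | .u, 1 => (2, 0, 0)
  | .u, 2 => (0, 0, 0)
  | .u, 3 => (4, 2, 3)
  | .u, 4 => (5, 0, 0)
  | .u, _ => (3, 10, 1)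
  | .v, 0 => (0, 0, 1)
  | .v, 1 => (2, 1, 3)
  | .v, 2 => (3, 0, 0)
  | .v, 3 => (4, 0, 0)
  | .v, 4 => (1, 11, 1)
  | .v, _ => (5, 3, 3)
  | _, i => (i, 1, 0)

/-- Left multiplication by a letter `s ≠ b` on triples encoding elements of `K`. -/
def kStep (s : Letter) (t : ℕ × ℕ × ℕ) : ℕ × ℕ × ℕ :=
  ((kLeftMul s t.1).1, ((kLeftMul s t.1).2.1 + t.2.1) % 12, ((kLeftMul s t.1).2.2 + t.2.2) % 4)

/-- The triple encoding the element of `K` represented by a word without the letter `b`. -/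
def kNormal (w : Word) : ℕ × ℕ × ℕ := w.foldr kStep (0, 0, 0)

lemma j_pow_ten : gj ^ 10 = gj⁻¹ * gj⁻¹ := by
  rw [← mul_inv_rev, eq_inv_iff_mul_eq_one, ← pow_two, ← pow_add, j_pow_twelve]

lemma j_pow_eleven : gj ^ 11 = gj⁻¹ := by
  rw [eq_inv_iff_mul_eq_one, ← pow_succ, j_pow_twelve]

lemma v_pow_three : gv ^ 3 = gv⁻¹ := by
  rw [eq_inv_iff_mul_eq_one, ← pow_succ, v_pow_four]

lemma u_mul_v_mul_u_inv : gu * (gv * gu⁻¹) = gv * (gv * gu⁻¹) * gj ^ 2 * gv⁻¹ :=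
  calc gu * (gv * gu⁻¹) = gj * (gv⁻¹ * gu) := by
        rw [u_inv, ← mul_assoc, ← mul_assoc, ← j_mul_v_inv, mul_assoc]
    _ = gv * gv * (gu⁻¹ * gj * gv⁻¹) * gj := by
        rw [← v_mul_u, (commute_j_of_mem_K (mul_mem (inv_mem v_mem_K) u_mem_K)).eq, ← v_pow_three,
          pow_three']
        simp only [mul_assoc]
    _ = gv * (gv * gu⁻¹) * gj ^ 2 * gv⁻¹ := by
        simp only [mul_assoc, pow_two, ← commute_j_v.inv_right.eq]

lemma u_inv_mul_v_mul_v_mul_u_inv :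
    gu⁻¹ * (gv * (gv * gu⁻¹)) = gv * gu⁻¹ * (gj⁻¹ * gj⁻¹) * gv := by
  have hj : Commute (gj * gj)⁻¹ (gv * gu⁻¹) :=
    have h := commute_j_of_mem_K (mul_mem v_mem_K (inv_mem u_mem_K))
    (h.mul_left h).inv_left
  rw [← mul_inv_rev, ← hj.eq, mul_assoc, eq_inv_mul_iff_mul_eq]
  calc gj * gj * (gu⁻¹ * (gv * (gv * gu⁻¹)))
      = gj * gu⁻¹ * (gv * gv) * (gj * gu⁻¹) := by
        grind [commute_j_u.inv_right.eq, commute_j_v.eq]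
    _ = gv * gu⁻¹ * gv := by grind [j_mul_u_inv, v_sq_mul_v_sq, u_mul_u]

lemma val_mul_kRepWord {s : Letter} (hs : s ≠ .b) (i : ℕ) :
    s.val * (kRepWord i).val =
      (kRepWord (kLeftMul s i).1).val * gj ^ (kLeftMul s i).2.1 * gv ^ (kLeftMul s i).2.2 := by
  cases s
  case b => exact absurd rfl hs
  case j =>
    have h := commute_j_of_mem_K (Word.val_mem_K (b_notMem_kRepWord i))
    simpa [kLeftMul, Letter.val] using h.eq
  all_goals
    rcases i with _ | _ | _ | _ | _ | i <;>
    simp only [kRepWord, Letter.val, kLeftMul, j_pow_ten, j_pow_eleven, v_pow_three, u_mul_u,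
      Word.val_cons, Word.val_nil, mul_one, one_mul, pow_zero, pow_one, mul_inv_cancel]
  case u.succ.succ.succ.zero => exact u_mul_v_mul_u_inv
  case u.succ.succ.succ.succ.succ =>
    rw [← mul_assoc, u_mul_u, u_inv_mul_v_mul_v_mul_u_inv]
  case v.succ.zero => exact v_mul_u
  case v.succ.succ.succ.succ.zero =>
    rw [← v_inv_mul_u_inv, ← v_pow_three, pow_three, mul_assoc, mul_assoc]
  case v.succ.succ.succ.succ.succ =>
    have h := v_mul_u_mul_v_sq_mul_u_inv
    have hx : gu * (gv * (gv * gu⁻¹)) ∈ K :=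
      mul_mem u_mem_K (mul_mem v_mem_K (mul_mem v_mem_K (inv_mem u_mem_K)))
    rw [← ((commute_j_of_mem_K hx).pow_left 3).eq, pow_three']
    simpa only [mul_assoc] using h

lemma kWord_kStep_val {s : Letter} (hs : s ≠ .b) (t : ℕ × ℕ × ℕ) :
    (kWord (kStep s t)).val = s.val * (kWord t).val := by
  rw [kWord_val, kWord_val, kStep, ← pow_eq_pow_mod _ j_pow_twelve, ← pow_eq_pow_mod _ v_pow_four,
    ← mul_assoc, ← mul_assoc, val_mul_kRepWord hs, pow_add, pow_add,
    mul_assoc _ (gv ^ _) (gj ^ _), (commute_j_v.symm.pow_pow _ _).eq]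
  simp only [mul_assoc]

lemma kWord_kNormal_val {w : Word} (hw : Letter.b ∉ w) : (kWord (kNormal w)).val = w.val := by
  induction w with
  | nil => rfl
  | cons s w ih =>
    rw [List.mem_cons, not_or] at hw
    rw [Word.val_cons, ← ih hw.2]
    exact kWord_kStep_val (Ne.symm hw.1) _

lemma kStep_fst_lt (s : Letter) {t : ℕ × ℕ × ℕ} (ht : t.1 < 6) : (kStep s t).1 < 6 := by
  obtain ⟨i, c, a⟩ := t
  simp only [kStep] at ht ⊢
  cases s <;> interval_cases i <;> decide

lemma exists_b_notMem_val_eq {k : CS} (hk : k ∈ K) : ∃ w : Word, Letter.b ∉ w ∧ w.val = k := by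
  have hfin : ∀ x ∈ ({gu, gv} : Set CS), IsOfFinOrder x := by
    rintro _ (rfl | rfl)
    exacts [isOfFinOrder_of .u, isOfFinOrder_of .v]
  rw [K, ← Subgroup.mem_toSubmonoid, Subgroup.closure_toSubmonoid_of_isOfFinOrder hfin] at hk
  induction hk using Submonoid.closure_induction_left with
  | one => exact ⟨[], by simp, rfl⟩
  | mul_left x hx y _ ih =>
    obtain ⟨w, hw, rfl⟩ := ih
    rcases hx with rfl | rfl
    exacts [⟨.u :: w, by simpa using hw, Word.val_cons _ _⟩,
      ⟨.v :: w, by simpa using hw, Word.val_cons _ _⟩]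

lemma exists_kWord_val_eq {k : CS} (hk : k ∈ K) :
    ∃ i < 6, ∃ c < 12, ∃ a < 4, (kWord (i, c, a)).val = k := by
  obtain ⟨w, hw, rfl⟩ := exists_b_notMem_val_eq hk
  have hlt (w : Word) : (kNormal w).1 < 6 ∧ (kNormal w).2.1 < 12 ∧ (kNormal w).2.2 < 4 := by
    cases w with
    | nil => decide
    | cons s w =>
      refine ⟨?_, Nat.mod_lt _ (by decide), Nat.mod_lt _ (by decide)⟩
      induction w generalizing s with
      | nil => exact kStep_fst_lt s (by decide)
      | cons s' w ih => exact kStep_fst_lt s (ih s')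
  exact ⟨_, (hlt w).1, _, (hlt w).2.1, _, (hlt w).2.2, kWord_kNormal_val hw⟩

lemma exists_word_val_eq (g : CS) : ∃ w : Word, w.val = g := by
  have hg : g ∈ (⊤ : Subgroup CS).toSubmonoid := Submonoid.mem_top g
  rw [← PresentedGroup.closure_range_of csRels,
    Subgroup.closure_toSubmonoid_of_isOfFinOrder (Set.forall_mem_range.2 isOfFinOrder_of)] at hg
  induction hg using Submonoid.closure_induction_left with
  | one => exact ⟨[], rfl⟩
  | mul_left x hx y _ ih =>
    obtain ⟨w, rfl⟩ := ih
    obtain ⟨_ | _ | _, rfl⟩ := hx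
    exacts [⟨.u :: w, Word.val_cons _ _⟩, ⟨.v :: w, Word.val_cons _ _⟩,
      ⟨.b :: w, Word.val_cons _ _⟩]

/-! ### The double cosets of `b` and `bu⁻¹b` -/

/-- The element `c = bu⁻¹b`. -/
def gc : CS := gb * gu⁻¹ * gb

/-- The union of the double cosets `K`, `KbK` and `KcK`. -/
def Neighbors : Set CS :=
  (K ∪ DoubleCoset.doubleCoset gb K K) ∪ DoubleCoset.doubleCoset gc K K

lemma mem_neighbors {g : CS} :
    g ∈ Neighbors ↔ g ∈ K ∨ ∃ d, (d = gb ∨ d = gc) ∧ ∃ k ∈ K, ∃ k' ∈ K, g = k * d * k' := by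
  simp only [Neighbors, Set.mem_union, DoubleCoset.mem_doubleCoset, SetLike.mem_coe, or_assoc,
    or_and_right, exists_or, exists_eq_left]

lemma mem_neighbors_of_mem_K {k : CS} (hk : k ∈ K) : k ∈ Neighbors := Or.inl (Or.inl hk)

lemma mul_mem_neighbors {k g k' : CS} (hk : k ∈ K) (hg : g ∈ Neighbors) (hk' : k' ∈ K) :
    k * g * k' ∈ Neighbors := by
  rw [mem_neighbors] at hg ⊢
  rcases hg with hg | ⟨d, hd, x, hx, y, hy, rfl⟩
  · exact Or.inl (mul_mem (mul_mem hk hg) hk')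
  · exact Or.inr ⟨d, hd, k * x, mul_mem hk hx, y * k', mul_mem hy hk', by group⟩

lemma b_mem_neighbors : gb ∈ Neighbors :=
  Or.inl (Or.inr (DoubleCoset.mem_doubleCoset_self K K gb))

lemma c_mem_neighbors : gc ∈ Neighbors :=
  Or.inr (DoubleCoset.mem_doubleCoset_self K K gc)

lemma b_mul_b : gb * gb = gb⁻¹ := b_inv.symm

lemma b_mul_j_mul_b : gb * gj * gb = gv * gj⁻¹ := by
  rw [eq_mul_inv_iff_mul_eq, ← mul_inv_eq_one]
  calc gb * gj * gb * gj * gv⁻¹ = gb * (gj * gv⁻¹) * gb * (gj * gv⁻¹) * gv := by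
        grind [commute_v_b.inv_left.eq, commute_j_v.inv_right.eq, inv_mul_cancel gv]
    _ = 1 := by rw [j_mul_v_inv, ← buvu_sq_mul_v]; simp only [pow_two, mul_assoc]

lemma b_inv_eq : gb⁻¹ = gj * gb * gj * gv⁻¹ := by
  rw [inv_eq_iff_mul_eq_one, ← mul_assoc, ← mul_assoc, ← mul_assoc, b_mul_j_mul_b]; group

lemma j_mul_b : gj * gb = gb⁻¹ * gv * gj⁻¹ := by
  rw [mul_assoc, ← b_mul_j_mul_b]; group

lemma b_mul_j : gb * gj = gv * gj⁻¹ * gb⁻¹ := by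
  rw [← b_mul_j_mul_b]; group

lemma b_mul_u_mul_b : gb * gu * gb = gu * gb * gu := by
  have h : gb * gu * gb * (gj * gu⁻¹ * gb * gu * gv) = 1 := by
    rw [j_mul_u_inv, ← buv_pow_three, pow_three]
    grind [commute_v_b.eq]
  calc gb * gu * gb = gv⁻¹ * gu⁻¹ * gb⁻¹ * gu * gj⁻¹ := by rw [eq_inv_of_mul_eq_one_left h]; group
    _ = gv⁻¹ * gu⁻¹ * gj * gb * (gj * (gv⁻¹ * gu)) * gj⁻¹ := by rw [b_inv_eq]; group
    _ = gv⁻¹ * gu⁻¹ * gj * (gb * gv⁻¹) * gu := by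
        rw [(commute_j_v.inv_right.mul_right commute_j_u).eq]; group
    _ = gv⁻¹ * gu⁻¹ * gj * gv⁻¹ * gb * gu := by rw [← commute_v_b.inv_left.eq]; group
    _ = gu * gb * gu := by rw [mul_assoc _ gj, j_mul_v_inv]; group

lemma b_inv_mul_u_mul_b : gb⁻¹ * gu * gb = gu * gb * gu⁻¹ := by
  rw [mul_assoc, inv_mul_eq_iff_eq_mul, ← mul_assoc, ← mul_assoc, eq_mul_inv_iff_mul_eq,
    b_mul_u_mul_b]

lemma b_mul_u_mul_b_inv : gb * gu * gb⁻¹ = gu⁻¹ * gb * gu := by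
  rw [mul_inv_eq_iff_eq_mul, mul_assoc, mul_assoc, eq_inv_mul_iff_mul_eq, ← mul_assoc, ← mul_assoc,
    b_mul_u_mul_b]

lemma b_inv_mul_u_mul_b_inv : gb⁻¹ * gu * gb⁻¹ = gu * gc := by
  rw [gc, ← mul_assoc, ← mul_assoc, ← b_inv_mul_u_mul_b, mul_assoc _ gb gb, b_mul_b]

lemma commute_u_c : Commute gu gc := by
  rw [commute_iff_eq, ← b_inv_mul_u_mul_b_inv, gc, ← b_mul_b]
  grind [b_mul_u_mul_b_inv, b_mul_b]

lemma c_mul_c : gc * gc = gu⁻¹ := by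
  rw [gc]
  calc gb * gu⁻¹ * gb * (gb * gu⁻¹ * gb) = gb * gu⁻¹ * (gb * gb) * gu⁻¹ * gb := by group
    _ = gb * (gu * gb * gu)⁻¹ * gb := by rw [b_mul_b]; group
    _ = gu⁻¹ := by rw [← b_mul_u_mul_b]; group

lemma c_inv : gc⁻¹ = gc * gu := by
  rw [inv_eq_iff_mul_eq_one, ← mul_assoc, c_mul_c, inv_mul_cancel]

lemma b_mul_c : gb * gc = gu * gb⁻¹ * gu⁻¹ := by
  calc gb * gc = (gb⁻¹ * gu * gb)⁻¹ := by rw [gc, ← mul_assoc, ← mul_assoc, b_mul_b]; group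
    _ = gu * gb⁻¹ * gu⁻¹ := by rw [b_inv_mul_u_mul_b]; group

lemma c_mul_b : gc * gb = gu⁻¹ * gb⁻¹ * gu := by
  calc gc * gb = (gb * gu * gb⁻¹)⁻¹ := by rw [gc, mul_assoc, b_mul_b]; group
    _ = gu⁻¹ * gb⁻¹ * gu := by rw [b_mul_u_mul_b_inv]; group

lemma b_mul_j_sq_mul_b : gb * (gj * gj) * gb = gv * gj⁻¹ * gb * (gv * gj⁻¹) := by
  calc gb * (gj * gj) * gb = gb * gj * (gj * gb) := by group
    _ = gv * gj⁻¹ * (gb⁻¹ * gb⁻¹) * (gv * gj⁻¹) := by rw [b_mul_j, j_mul_b]; group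
    _ = gv * gj⁻¹ * gb * (gv * gj⁻¹) := by rw [← mul_inv_rev, b_mul_b, inv_inv]

lemma b_mul_uj_mul_b : gb * (gu * gj) * gb = gu⁻¹ * gb * (gu * gv * gj⁻¹) := by
  calc gb * (gu * gj) * gb = gb * gu * (gj * gb) := by group
    _ = gb * gu * gb⁻¹ * gv * gj⁻¹ := by rw [j_mul_b]; group
    _ = gu⁻¹ * gb * (gu * gv * gj⁻¹) := by rw [b_mul_u_mul_b_inv]; group

lemma b_mul_ujj_mul_b : gb * (gu * (gj * gj)) * gb = gv * gj⁻¹ * gu * gc * (gv * gj⁻¹) := by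
  calc gb * (gu * (gj * gj)) * gb = gb * gj * gu * (gj * gb) := by
        rw [← mul_assoc gu, ← commute_j_u.eq]; group
    _ = gv * gj⁻¹ * (gb⁻¹ * gu * gb⁻¹) * (gv * gj⁻¹) := by rw [b_mul_j, j_mul_b]; group
    _ = gv * gj⁻¹ * gu * gc * (gv * gj⁻¹) := by rw [b_inv_mul_u_mul_b_inv]; group

lemma b_mul_j_mul_c : gb * gj * gc = gv * gj⁻¹ * gu⁻¹ * gb := by
  rw [gc, ← mul_assoc, ← mul_assoc, b_mul_j_mul_b]

lemma c_mul_j_mul_b : gc * gj * gb = gb * (gu⁻¹ * gv * gj⁻¹) := by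
  rw [gc, mul_assoc, mul_assoc _ gb, ← mul_assoc gb gj, b_mul_j_mul_b]; group

lemma c_mul_v_mul_c : gc * gv * gc = gv * gj⁻¹ * gu * gc * (gv⁻¹ * gu⁻¹) := by
  have huvu : gu⁻¹ * (gv * gu) = gj * gu * gv⁻¹ := by
    rw [v_mul_u, ← mul_assoc, ← mul_assoc, ← mul_inv_rev, u_mul_u, inv_inv, commute_j_u.eq]
  calc gc * gv * gc = gb * gu⁻¹ * (gb * gv) * gb * gu⁻¹ * gb := by rw [gc]; group
    _ = gb * gu⁻¹ * gv * (gb * gb) * gu⁻¹ * gb := by rw [← commute_v_b.eq]; group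
    _ = gb * gu⁻¹ * gv * (gb⁻¹ * gu * gb)⁻¹ := by rw [b_mul_b]; group
    _ = gb * (gu⁻¹ * (gv * gu)) * gb⁻¹ * gu⁻¹ := by rw [b_inv_mul_u_mul_b]; group
    _ = gb * gj * gu * (gv⁻¹ * gb⁻¹) * gu⁻¹ := by rw [huvu]; group
    _ = gv * gj⁻¹ * (gb⁻¹ * gu * gb⁻¹) * (gv⁻¹ * gu⁻¹) := by
        rw [commute_v_b.inv_inv.eq, b_mul_j]; group
    _ = gv * gj⁻¹ * gu * gc * (gv⁻¹ * gu⁻¹) := by rw [b_inv_mul_u_mul_b_inv]; group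

lemma c_mul_vj_inv_mul_c : gc * (gv * gj⁻¹) * gc = gu⁻¹ * gv * gu * gc * (gv * gu⁻¹) := by
  calc gc * (gv * gj⁻¹) * gc = gc * gb * gj * (gb * gc) := by rw [← b_mul_j_mul_b]; group
    _ = gu⁻¹ * gb⁻¹ * (gu * gj * gu) * gb⁻¹ * gu⁻¹ := by rw [c_mul_b, b_mul_c]; group
    _ = gu⁻¹ * gb⁻¹ * (gv * gu * gv) * gb⁻¹ * gu⁻¹ := by
        rw [← commute_j_u.eq, mul_assoc gj, u_mul_u, j_mul_u_inv]
    _ = gu⁻¹ * (gb⁻¹ * gv) * gu * (gv * gb⁻¹) * gu⁻¹ := by group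
    _ = gu⁻¹ * (gv * gb⁻¹) * gu * (gb⁻¹ * gv) * gu⁻¹ := by rw [commute_v_b.inv_right.eq]
    _ = gu⁻¹ * gv * (gb⁻¹ * gu * gb⁻¹) * (gv * gu⁻¹) := by group
    _ = gu⁻¹ * gv * gu * gc * (gv * gu⁻¹) := by rw [b_inv_mul_u_mul_b_inv]; group

lemma inv_mem_neighbors {g : CS} (hg : g ∈ Neighbors) : g⁻¹ ∈ Neighbors := by
  rw [mem_neighbors] at hg
  rcases hg with hg | ⟨d, hd, x, hx, y, hy, rfl⟩
  · exact mem_neighbors_of_mem_K (inv_mem hg)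
  · rw [show (x * d * y)⁻¹ = y⁻¹ * d⁻¹ * x⁻¹ by group]
    refine mul_mem_neighbors (inv_mem hy) ?_ (inv_mem hx)
    rcases hd with rfl | rfl
    · rw [b_inv_eq, mul_assoc _ gj]
      exact mul_mem_neighbors j_mem_K b_mem_neighbors (mul_mem j_mem_K (inv_mem v_mem_K))
    · rw [c_inv, ← one_mul gc]
      exact mul_mem_neighbors (one_mem K) c_mem_neighbors u_mem_K

/-! ### Matrices over `ℤ[ζ]`, `ζ = exp(πi/6)` -/

/-- The element `a + bζ + cζ² + dζ³` of `ℤ[ζ]`, where `ζ = exp(πi/6)`, in a form suited to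
evaluation. -/
structure CycInt where
  /-- The coefficient of `1`. -/
  a : ℤ
  /-- The coefficient of `ζ`. -/
  b : ℤ
  /-- The coefficient of `ζ²`. -/
  c : ℤ
  /-- The coefficient of `ζ³`. -/
  d : ℤ
deriving DecidableEq

namespace CycInt

instance : Zero CycInt := ⟨⟨0, 0, 0, 0⟩⟩

instance : One CycInt := ⟨⟨1, 0, 0, 0⟩⟩

instance : Add CycInt := ⟨fun x y => ⟨x.a + y.a, x.b + y.b, x.c + y.c, x.d + y.d⟩⟩

-- `ζ⁴ = ζ² - 1`
instance : Mul CycInt := ⟨fun x y =>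
  ⟨x.a * y.a - (x.b * y.d + x.c * y.c + x.d * y.b) - x.d * y.d,
   x.a * y.b + x.b * y.a - (x.c * y.d + x.d * y.c),
   x.a * y.c + x.b * y.b + x.c * y.a + (x.b * y.d + x.c * y.c + x.d * y.b),
   x.a * y.d + x.b * y.c + x.c * y.b + x.d * y.a + (x.c * y.d + x.d * y.c)⟩⟩

/-- Complex conjugation on `ℤ[ζ]`. -/
def conj (x : CycInt) : CycInt := ⟨x.a + x.c, x.b, -x.c, -x.b - x.d⟩

/-- The rational part of the squared absolute value, which lies in `ℤ[√3]`. -/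
def normRat (x : CycInt) : ℤ :=
  x.a * x.a + x.b * x.b + x.c * x.c + x.d * x.d + x.a * x.c + x.b * x.d

/-- The coefficient of `√3` in the squared absolute value. -/
def normSqrt (x : CycInt) : ℤ := x.a * x.b + x.b * x.c + x.c * x.d

/-- `ζ = exp(πi/6)`. -/
def zeta : CycInt := ⟨0, 1, 0, 0⟩

/-- The power `ζⁿ`. -/
def zetaPow : ℕ → CycInt
  | 0 => 1
  | n + 1 => zetaPow n * zeta

/-- The inclusion of `ℤ[ζ]` into `ℂ`. -/
noncomputable def toComplex (x : CycInt) : ℂ :=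
  ⟨x.a + x.c / 2 + x.b * √3 / 2, x.b / 2 + x.c * √3 / 2 + x.d⟩

@[simp] lemma toComplex_zero : toComplex 0 = 0 := by
  apply Complex.ext <;> simp [toComplex, show (0 : CycInt) = ⟨0, 0, 0, 0⟩ from rfl]

@[simp] lemma toComplex_one : toComplex 1 = 1 := by
  apply Complex.ext <;> simp [toComplex, show (1 : CycInt) = ⟨1, 0, 0, 0⟩ from rfl]

lemma toComplex_add (x y : CycInt) : (x + y).toComplex = x.toComplex + y.toComplex := by
  apply Complex.ext <;>
    simp only [toComplex, show x + y = ⟨x.a + y.a, x.b + y.b, x.c + y.c, x.d + y.d⟩ from rfl,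
      Complex.add_re, Complex.add_im] <;> push_cast <;> ring

lemma toComplex_mul (x y : CycInt) : (x * y).toComplex = x.toComplex * y.toComplex := by
  have h : √3 * √3 = 3 := Real.mul_self_sqrt (by norm_num)
  rw [show x * y = ⟨_, _, _, _⟩ from rfl]
  apply Complex.ext <;> simp only [toComplex, Complex.mul_re, Complex.mul_im] <;> push_cast
  · linear_combination (-(x.b * y.b - x.c * y.c) / 4 : ℝ) * h
  · linear_combination (-(x.b * y.c + x.c * y.b) / 4 : ℝ) * h

lemma toComplex_conj (x : CycInt) : x.conj.toComplex = (starRingEnd ℂ) x.toComplex := by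
  apply Complex.ext <;> simp [toComplex, conj] <;> ring

lemma normSq_toComplex (x : CycInt) :
    Complex.normSq x.toComplex = x.normRat + x.normSqrt * √3 := by
  have h : √3 * √3 = 3 := Real.mul_self_sqrt (by norm_num)
  simp only [toComplex, Complex.normSq_mk, normRat, normSqrt]; push_cast
  linear_combination (x.b * x.b + x.c * x.c : ℝ) / 4 * h

lemma eq_zero_of_add_mul_sqrt_three_eq_zero {m n : ℤ} (h : (m : ℝ) + n * √3 = 0) :
    m = 0 ∧ n = 0 := by
  have hn : n = 0 := by
    by_contra hn
    have hirr : Irrational (n * √3 : ℝ) :=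
      (Nat.prime_three.irrational_sqrt.intCast_mul hn)
    exact hirr ⟨-m, by push_cast; linarith⟩
  exact ⟨by simpa [hn] using h, hn⟩

lemma toComplex_injective : Function.Injective toComplex := by
  intro x y h
  have hre := congrArg Complex.re h
  have him := congrArg Complex.im h
  simp only [toComplex] at hre him
  have h1 := eq_zero_of_add_mul_sqrt_three_eq_zero
    (m := 2 * (x.a - y.a) + (x.c - y.c)) (n := x.b - y.b) (by push_cast; linarith)
  have h2 := eq_zero_of_add_mul_sqrt_three_eq_zero
    (m := (x.b - y.b) + 2 * (x.d - y.d)) (n := x.c - y.c) (by push_cast; linarith)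
  cases x; cases y; simp only [CycInt.mk.injEq] at *; omega

end CycInt

open CycInt

/-- `ζ = exp(πi/6)` as a complex number. -/
noncomputable def ζ : ℂ := zeta.toComplex

lemma toComplex_zetaPow (n : ℕ) : (zetaPow n).toComplex = ζ ^ n := by
  induction n with
  | zero => exact toComplex_one
  | succ n ih => rw [zetaPow, toComplex_mul, ih, pow_succ, ζ]

lemma zeta_pow_twelve : ζ ^ 12 = 1 := by
  rw [← toComplex_zetaPow, show zetaPow 12 = 1 by decide, toComplex_one]

@[simp] lemma normSq_zeta : Complex.normSq ζ = 1 := by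
  rw [ζ, normSq_toComplex]; simp [normRat, normSqrt, zeta]

lemma normSq_zeta_pow (n : ℕ) : Complex.normSq (ζ ^ n) = 1 := by
  rw [map_pow, normSq_zeta, one_pow]

lemma norm_zeta : ‖ζ‖ = 1 := by
  rw [← sq_eq_sq₀ (norm_nonneg _) zero_le_one, ← Complex.normSq_eq_norm_sq, normSq_zeta, one_pow]

lemma zeta_ne_zero : ζ ≠ 0 := norm_ne_zero_iff.1 (norm_zeta.trans_ne one_ne_zero)

/-- A vector over `ℤ[ζ]`. -/
structure CycVec where
  /-- The first coordinate. -/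
  x : CycInt
  /-- The second coordinate. -/
  y : CycInt
  /-- The third coordinate. -/
  z : CycInt
deriving DecidableEq

/-- A `3 × 3` matrix over `ℤ[ζ]`, given by its columns. -/
structure CycMat where
  /-- The first column. -/
  c₁ : CycVec
  /-- The second column. -/
  c₂ : CycVec
  /-- The third column. -/
  c₃ : CycVec
deriving DecidableEq

/-- The complex vector with the same coordinates. -/
noncomputable def CycVec.toVec (p : CycVec) : Fin 3 → ℂ :=
  ![p.x.toComplex, p.y.toComplex, p.z.toComplex]

lemma CycVec.toVec_injective : Function.Injective CycVec.toVec := by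
  intro p q h
  have hx := toComplex_injective (congrFun h 0)
  have hy := toComplex_injective (congrFun h 1)
  have hz := toComplex_injective (congrFun h 2)
  cases p; cases q
  exact congr (congr (congrArg CycVec.mk hx) hy) hz

namespace CycMat

/-- The product of a matrix and a vector. -/
def mulVec (A : CycMat) (p : CycVec) : CycVec :=
  ⟨A.c₁.x * p.x + A.c₂.x * p.y + A.c₃.x * p.z,
   A.c₁.y * p.x + A.c₂.y * p.y + A.c₃.y * p.z,
   A.c₁.z * p.x + A.c₂.z * p.y + A.c₃.z * p.z⟩

instance : Mul CycMat := ⟨fun A B => ⟨A.mulVec B.c₁, A.mulVec B.c₂, A.mulVec B.c₃⟩⟩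

/-- The diagonal matrix with diagonal `s, s, t`. -/
def diag (s t : CycInt) : CycMat := ⟨⟨s, 0, 0⟩, ⟨0, s, 0⟩, ⟨0, 0, t⟩⟩

instance : One CycMat := ⟨diag 1 1⟩

/-- The scalar matrix `ζⁿ`. -/
def scalar (n : ℕ) : CycMat := diag (zetaPow n) (zetaPow n)

/-- The conjugate transpose. -/
def conjTranspose (A : CycMat) : CycMat :=
  ⟨⟨A.c₁.x.conj, A.c₂.x.conj, A.c₃.x.conj⟩, ⟨A.c₁.y.conj, A.c₂.y.conj, A.c₃.y.conj⟩,
    ⟨A.c₁.z.conj, A.c₂.z.conj, A.c₃.z.conj⟩⟩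

/-- The complex matrix with the same entries. -/
noncomputable def toMatrix (A : CycMat) : Matrix (Fin 3) (Fin 3) ℂ :=
  (Matrix.of ![A.c₁.toVec, A.c₂.toVec, A.c₃.toVec]).transpose

lemma toVec_mulVec (A : CycMat) (p : CycVec) :
    (A.mulVec p).toVec = A.toMatrix.mulVec p.toVec := by
  ext i
  fin_cases i <;> simp [mulVec, CycVec.toVec, toMatrix, Matrix.mulVec, dotProduct,
    Fin.sum_univ_three, toComplex_add, toComplex_mul]

lemma toMatrix_mul (A B : CycMat) : (A * B).toMatrix = A.toMatrix * B.toMatrix := by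
  refine Matrix.ext_col fun j => ?_
  change _ = A.toMatrix.mulVec (B.toMatrix.col j)
  fin_cases j
  exacts [toVec_mulVec A B.c₁, toVec_mulVec A B.c₂, toVec_mulVec A B.c₃]

lemma toMatrix_conjTranspose (A : CycMat) :
    A.conjTranspose.toMatrix = A.toMatrix.conjTranspose := by
  ext i j
  fin_cases i <;> fin_cases j <;>
    simp [toMatrix, conjTranspose, CycVec.toVec, toComplex_conj]

lemma toMatrix_injective : Function.Injective toMatrix := by
  intro A B h
  have h₁ := CycVec.toVec_injective (congrFun (Matrix.transpose_injective h) 0)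
  have h₂ := CycVec.toVec_injective (congrFun (Matrix.transpose_injective h) 1)
  have h₃ := CycVec.toVec_injective (congrFun (Matrix.transpose_injective h) 2)
  cases A; cases B
  exact congr (congr (congrArg CycMat.mk h₁) h₂) h₃

@[simp] lemma toMatrix_one : toMatrix 1 = 1 := by
  ext i j
  fin_cases i <;> fin_cases j <;>
    simp [show (1 : CycMat) = diag 1 1 from rfl, diag, toMatrix, CycVec.toVec]

lemma toMatrix_scalar (n : ℕ) : (scalar n).toMatrix = ζ ^ n • 1 := by
  ext i j
  fin_cases i <;> fin_cases j <;>
    simp [scalar, diag, toMatrix, CycVec.toVec, toComplex_zetaPow]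

end CycMat

/-! ### The projective representation -/

/-- The matrices of a projective representation of `CS`. -/
def Letter.cycMat : Letter → CycMat
  | .u => ⟨⟨⟨0, -1, 1, 1⟩, ⟨-1, 0, 1, 1⟩, 0⟩, ⟨⟨1, -1, 0, 0⟩, ⟨0, 1, 0, -1⟩, 0⟩, ⟨0, 0, 1⟩⟩
  | .v => ⟨⟨⟨0, 0, 0, 1⟩, ⟨-1, -1, 1, 1⟩, 0⟩, ⟨0, 1, 0⟩, ⟨0, 0, 1⟩⟩
  | .b => ⟨⟨1, ⟨2, 2, -1, -2⟩, ⟨0, 1, 1, 0⟩⟩, ⟨0, ⟨-1, -1, 1, 1⟩, ⟨-1, 0, 0, -1⟩⟩,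
      ⟨0, ⟨0, 0, -1, -1⟩, ⟨1, 1, 0, -1⟩⟩⟩
  | .j => .diag zeta 1

/-- The invariant Hermitian form of signature `(1, 2)`. -/
def formMat : CycMat := ⟨⟨⟨-1, -2, 0, 1⟩, 1, 0⟩, ⟨1, ⟨1, -2, 0, 1⟩, 0⟩, ⟨0, 0, 1⟩⟩

/-- The matrix of a word, with exact entries. -/
def Word.cycMat : Word → CycMat
  | [] => 1
  | s :: w => s.cycMat * cycMat w

/-- The complex matrix of a word. -/
noncomputable def Word.matrix (w : Word) : Matrix (Fin 3) (Fin 3) ℂ := w.cycMat.toMatrix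

@[simp] lemma Word.matrix_nil : Word.matrix [] = 1 := CycMat.toMatrix_one

@[simp] lemma Word.matrix_cons (s : Letter) (w : Word) :
    Word.matrix (s :: w) = s.cycMat.toMatrix * Word.matrix w :=
  CycMat.toMatrix_mul _ _

lemma Word.matrix_append (w w' : Word) : Word.matrix (w ++ w') = w.matrix * w'.matrix := by
  induction w with
  | nil => simp
  | cons s w ih => simp [ih, mul_assoc]

lemma Word.conjTranspose_mul_form_mul (w : Word) :
    w.matrix.conjTranspose * formMat.toMatrix * w.matrix = formMat.toMatrix := by
  induction w with
  | nil => simp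
  | cons s w ih =>
    change Word at w
    have h : s.cycMat.conjTranspose * formMat * s.cycMat = formMat := by cases s <;> decide +kernel
    replace h := congrArg CycMat.toMatrix h
    simp only [CycMat.toMatrix_mul, CycMat.toMatrix_conjTranspose] at h
    calc _ = w.matrix.conjTranspose *
          (s.cycMat.toMatrix.conjTranspose * formMat.toMatrix * s.cycMat.toMatrix) * w.matrix := by
          simp only [Word.matrix_cons, Matrix.conjTranspose_mul, mul_assoc]
      _ = _ := by rw [h, ih]

lemma Letter.toMatrix_pow_twelve (s : Letter) : s.cycMat.toMatrix ^ 12 = 1 := by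
  have h : Word.cycMat (List.replicate 12 s) = 1 := by cases s <;> decide +kernel
  calc s.cycMat.toMatrix ^ 12 = Word.matrix (List.replicate 12 s) := by
        simp [List.replicate_succ, pow_succ, mul_assoc]
    _ = 1 := by rw [Word.matrix, h, CycMat.toMatrix_one]

/-- The invertible matrix of a letter. -/
noncomputable def Letter.unit (s : Letter) : (Matrix (Fin 3) (Fin 3) ℂ)ˣ :=
  .ofPowEqOne s.cycMat.toMatrix 12 s.toMatrix_pow_twelve (by norm_num)

/-- The invertible matrix of a word. -/
noncomputable def Word.unit (w : Word) : (Matrix (Fin 3) (Fin 3) ℂ)ˣ := (w.map Letter.unit).prod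

lemma Word.val_unit (w : Word) : (w.unit : Matrix (Fin 3) (Fin 3) ℂ) = w.matrix := by
  induction w with
  | nil => simp [unit]
  | cons s w ih => rw [Word.matrix_cons, ← ih]; rfl

/-- The scalar matrix `ζ`. -/
noncomputable def zetaUnit : (Matrix (Fin 3) (Fin 3) ℂ)ˣ :=
  .ofPowEqOne (ζ • 1) 12 (by rw [smul_pow, one_pow, zeta_pow_twelve, one_smul]) (by norm_num)

lemma val_zetaUnit_pow (n : ℕ) :
    ((zetaUnit ^ n : (Matrix (Fin 3) (Fin 3) ℂ)ˣ) : Matrix (Fin 3) (Fin 3) ℂ) = ζ ^ n • 1 := by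
  rw [Units.val_pow_eq_pow_val]
  exact (smul_pow _ _ _).trans (by rw [one_pow])

/-- The group of the scalar matrices `ζⁿ`. -/
noncomputable def scalars : Subgroup (Matrix (Fin 3) (Fin 3) ℂ)ˣ := .zpowers zetaUnit

instance : scalars.Normal := by
  have hcenter : scalars ≤ Subgroup.center _ :=
    Subgroup.zpowers_le.2 (Subgroup.mem_center_iff.2 fun A => Units.ext (by simp [zetaUnit]))
  refine ⟨fun A hA B => ?_⟩
  rwa [Subgroup.mem_center_iff.1 (hcenter hA) B, mul_inv_cancel_right]

lemma exists_val_eq_of_mem_scalars {A : (Matrix (Fin 3) (Fin 3) ℂ)ˣ} (h : A ∈ scalars) :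
    ∃ n : ℕ, (A : Matrix (Fin 3) (Fin 3) ℂ) = ζ ^ n • 1 := by
  have hfin : IsOfFinOrder zetaUnit :=
    isOfFinOrder_iff_pow_eq_one.2 ⟨12, by norm_num, Units.ext (by
      rw [val_zetaUnit_pow, zeta_pow_twelve, one_smul, Units.val_one])⟩
  obtain ⟨n, rfl⟩ := hfin.mem_powers_iff_mem_zpowers.2 h
  exact ⟨n, val_zetaUnit_pow n⟩

/-- The class of the matrix of a word modulo the scalars `ζⁿ`. -/
noncomputable def Word.proj (w : Word) : (Matrix (Fin 3) (Fin 3) ℂ)ˣ ⧸ scalars := w.unit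

lemma Word.proj_cons (s : Letter) (w : Word) : Word.proj (s :: w) = Word.proj [s] * w.proj := by
  simp [proj, unit]

lemma Word.proj_append (w w' : Word) : Word.proj (w ++ w') = w.proj * w'.proj := by
  simp [proj, unit]

lemma Word.proj_eq_of_cycMat {w w' : Word} (n : ℕ) (h : w.cycMat = .scalar n * w'.cycMat) :
    w.proj = w'.proj := by
  have hunit : w.unit = w'.unit * zetaUnit ^ n := by
    ext1
    rw [Units.val_mul, val_zetaUnit_pow, val_unit, val_unit, matrix, h, CycMat.toMatrix_mul,
      CycMat.toMatrix_scalar, matrix, smul_mul_assoc, one_mul, mul_smul_comm, mul_one]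
  exact (QuotientGroup.eq.2 (by
    rw [hunit, inv_mul_cancel_left]; exact Subgroup.npow_mem_zpowers _ n)).symm

lemma Word.exists_matrix_eq_of_proj_eq {w w' : Word} (h : w.proj = w'.proj) :
    ∃ n : ℕ, w.matrix = ζ ^ n • w'.matrix := by
  obtain ⟨n, hn⟩ := exists_val_eq_of_mem_scalars (QuotientGroup.eq.1 h.symm)
  refine ⟨n, ?_⟩
  rw [← val_unit, ← val_unit, ← mul_inv_cancel_left w'.unit w.unit, Units.val_mul, hn,
    mul_smul_comm, mul_one]

/-- The one-letter word of a generator. -/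
def genWord : CSgen → Word
  | .u => [.u]
  | .v => [.v]
  | .b => [.b]

lemma lift_proj_genWord_eq_one :
    ∀ r ∈ csRels, FreeGroup.lift (fun s => (genWord s).proj) r = 1 := by
  have h_of (w w' : Word) (n : ℕ) (h : w.cycMat = .scalar n * w'.cycMat) :
      w.proj * w'.proj⁻¹ = 1 := mul_inv_eq_one.2 (Word.proj_eq_of_cycMat n h)
  rintro r (rfl | rfl | rfl | rfl | rfl | rfl | rfl)
  · exact (by simp [genWord, Word.proj, Word.unit, pow_succ, mul_assoc] : _ = _).trans
      (h_of [.u, .u, .u] [] 0 (by decide +kernel))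
  · exact (by simp [genWord, Word.proj, Word.unit, pow_succ, mul_assoc] : _ = _).trans
      (h_of [.v, .v, .v, .v] [] 0 (by decide +kernel))
  · exact (by simp [genWord, Word.proj, Word.unit, pow_succ, mul_assoc] : _ = _).trans
      (h_of [.b, .b, .b] [] 0 (by decide +kernel))
  · exact (by simp [genWord, Word.proj, Word.unit, pow_succ, mul_assoc] : _ = _).trans
      (h_of [.u, .v, .u, .v] [.v, .u, .v, .u] 0 (by decide +kernel))
  · exact (by simp [genWord, Word.proj, Word.unit, mul_assoc] : _ = _).trans
      (h_of [.v, .b] [.b, .v] 0 (by decide +kernel))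
  · exact (by simp [genWord, Word.proj, Word.unit, pow_succ, mul_assoc] : _ = _).trans
      (h_of [.b, .u, .v, .b, .u, .v, .b, .u, .v] [] 11 (by decide +kernel))
  · exact (by simp [genWord, Word.proj, Word.unit, pow_succ, mul_assoc] : _ = _).trans
      (h_of [.b, .u, .v, .u, .b, .u, .v, .u, .v] [] 11 (by decide +kernel))

/-- The projective representation of `CS`. -/
noncomputable def projRep : CS →* (Matrix (Fin 3) (Fin 3) ℂ)ˣ ⧸ scalars :=
  PresentedGroup.toGroup lift_proj_genWord_eq_one

lemma projRep_of (s : CSgen) : projRep (PresentedGroup.of s) = (genWord s).proj :=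
  PresentedGroup.toGroup.of _

lemma projRep_val (w : Word) : projRep w.val = w.proj := by
  have hj : projRep gj = Word.proj [.j] := by
    rw [Word.proj_eq_of_cycMat (w := [.j]) (w' := [.u, .v] ++ [.u, .v]) 0 (by decide +kernel),
      Word.proj_append, gj, pow_two, map_mul,
      map_mul, gu, gv, projRep_of, projRep_of, Word.proj_cons]
    rfl
  induction w with
  | nil => exact map_one projRep
  | cons s w ih =>
    rw [Word.val_cons, map_mul, ih, Word.proj_cons]
    congr 1
    cases s
    exacts [projRep_of .u, projRep_of .v, projRep_of .b, hj]

lemma exists_matrix_eq_of_val_eq {w w' : Word} (h : w.val = w'.val) :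
    ∃ n : ℕ, w.matrix = ζ ^ n • w'.matrix :=
  Word.exists_matrix_eq_of_proj_eq (by rw [← projRep_val, h, projRep_val])

/-- A matrix representing `g`; it is well defined up to a power of `ζ`. -/
noncomputable def rep (g : CS) : Matrix (Fin 3) (Fin 3) ℂ := (exists_word_val_eq g).choose.matrix

lemma exists_rep_val_eq (w : Word) : ∃ n : ℕ, rep w.val = ζ ^ n • w.matrix :=
  exists_matrix_eq_of_val_eq (exists_word_val_eq _).choose_spec

lemma exists_rep_mul_eq (g h : CS) : ∃ n : ℕ, rep (g * h) = ζ ^ n • (rep g * rep h) := by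
  rw [rep, rep, rep, ← Word.matrix_append]
  apply exists_matrix_eq_of_val_eq
  rw [Word.val_append, (exists_word_val_eq _).choose_spec, (exists_word_val_eq _).choose_spec,
    (exists_word_val_eq _).choose_spec]

/-! ### Heights -/

/-- The squared absolute value of the last entry of a matrix of `g`. -/
noncomputable def height (g : CS) : ℝ := Complex.normSq (rep g 2 2)

/-- The last entry of the matrix of a word. -/
def Word.corner (w : Word) : CycInt := w.cycMat.c₃.z

lemma height_val (w : Word) : height w.val = w.corner.normRat + w.corner.normSqrt * √3 := by
  obtain ⟨n, hn⟩ := exists_rep_val_eq w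
  rw [height, hn, Matrix.smul_apply, smul_eq_mul, map_mul, normSq_zeta_pow, one_mul,
    ← normSq_toComplex]
  rfl

lemma matrix_apply_of_b_notMem {w : Word} (hw : Letter.b ∉ w) :
    w.matrix 0 2 = 0 ∧ w.matrix 1 2 = 0 ∧ w.matrix 2 0 = 0 ∧ w.matrix 2 1 = 0 ∧
      w.matrix 2 2 = 1 := by
  induction w with
  | nil => simp
  | cons s w ih =>
    obtain ⟨hs, hw⟩ := not_or.1 (List.mem_cons.not.1 hw)
    obtain ⟨h1, h2, h3, h4, h5⟩ := ih hw
    cases s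
    case b => exact (hs rfl).elim
    all_goals
      simp [Matrix.mul_apply, Fin.sum_univ_three, h1, h2, h3, h4, h5, Letter.cycMat,
        CycMat.toMatrix, CycVec.toVec, CycMat.diag]

lemma rep_apply_of_mem_K {k : CS} (hk : k ∈ K) : ∃ n : ℕ, rep k 0 2 = 0 ∧ rep k 1 2 = 0 ∧
    rep k 2 0 = 0 ∧ rep k 2 1 = 0 ∧ rep k 2 2 = ζ ^ n := by
  obtain ⟨w, hw, rfl⟩ := exists_b_notMem_val_eq hk
  obtain ⟨n, hn⟩ := exists_rep_val_eq w
  obtain ⟨h1, h2, h3, h4, h5⟩ := matrix_apply_of_b_notMem hw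
  exact ⟨n, by simp [hn, h1, h2, h3, h4, h5]⟩

lemma height_mul_of_mem_K_left {k : CS} (hk : k ∈ K) (g : CS) : height (k * g) = height g := by
  obtain ⟨n, -, -, h3, h4, h5⟩ := rep_apply_of_mem_K hk
  obtain ⟨m, hm⟩ := exists_rep_mul_eq k g
  simp [height, hm, Matrix.mul_apply, Fin.sum_univ_three, h3, h4, h5]

lemma height_mul_of_mem_K_right {k : CS} (hk : k ∈ K) (g : CS) : height (g * k) = height g := by
  obtain ⟨n, h1, h2, -, -, h5⟩ := rep_apply_of_mem_K hk
  obtain ⟨m, hm⟩ := exists_rep_mul_eq g k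
  simp [height, hm, Matrix.mul_apply, Fin.sum_univ_three, h1, h2, h5]

/-- A decidable sufficient condition for the height to be at least `9`. -/
def Word.IsHigh (w : Word) : Prop :=
  0 ≤ w.corner.normSqrt ∧ 9 ≤ w.corner.normRat + w.corner.normSqrt

instance (w : Word) : Decidable w.IsHigh := inferInstanceAs (Decidable (_ ∧ _))

lemma Word.IsHigh.nine_le_height {w : Word} (h : w.IsHigh) : 9 ≤ height w.val := by
  have h1 : (0 : ℝ) ≤ w.corner.normSqrt := by exact_mod_cast h.1
  have h2 : (9 : ℝ) ≤ w.corner.normRat + w.corner.normSqrt := by exact_mod_cast h.2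
  have : (1 : ℝ) ≤ √3 := Real.one_le_sqrt.2 (by norm_num)
  rw [height_val]
  nlinarith

/-! ### Products of neighbors -/

/-- A word for `c`. -/
def cWord : Word := [.b, .u, .u, .b]

lemma cWord_val : cWord.val = gc := by
  simp [cWord, Letter.val, gc, u_inv, mul_assoc]

/-- The triple encoding `k jᶜ`, where `t` encodes `k`. -/
def kShift (c : ℕ) (t : ℕ × ℕ × ℕ) : ℕ × ℕ × ℕ := (t.1, (t.2.1 + c) % 12, t.2.2)

lemma kWord_kShift_val (c : ℕ) (t : ℕ × ℕ × ℕ) :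
    (kWord (kShift c t)).val = (kWord t).val * gj ^ c := by
  have hcomm := ((commute_j_of_mem_K (pow_mem v_mem_K t.2.2)).pow_left c).eq
  rw [kWord_val, kWord_val, kShift, ← pow_eq_pow_mod _ j_pow_twelve, pow_add]
  simp only [mul_assoc, hcomm]

/-- The triple `t` lies on one of the given arcs, where the arc `(i, a, m, n)` consists of the
triples `(i, c, a)` with `m ≤ c < n`. -/
def OnArcs (arcs : List (ℕ × ℕ × ℕ × ℕ)) (t : ℕ × ℕ × ℕ) : Prop :=
  ∃ r ∈ arcs, t.1 = r.1 ∧ t.2.2 = r.2.1 ∧ r.2.2.1 ≤ t.2.1 ∧ t.2.1 < r.2.2.2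

instance (arcs : List (ℕ × ℕ × ℕ × ℕ)) (t : ℕ × ℕ × ℕ) : Decidable (OnArcs arcs t) := by
  unfold OnArcs; infer_instance

/-- Every element `k` of `K` has a product `sᵐ k s'ⁿ` encoded by a triple with the property `P`.
Since `j` is central, `kNormal` is only needed for the elements with `c = 0`. -/
def CoveredByPowers (s s' : Letter) (P : ℕ × ℕ × ℕ → Prop) : Prop :=
  ∀ i < 6, ∀ a < 4, ∀ c < 12, ∃ m < 4, ∃ n < 4,
    P (kShift c (kNormal (.replicate m s ++ kWord (i, 0, a) ++ .replicate n s')))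

instance (s s' : Letter) (P : ℕ × ℕ × ℕ → Prop) [DecidablePred P] :
    Decidable (CoveredByPowers s s' P) := by
  unfold CoveredByPowers; infer_instance

lemma exists_kWord_val_eq_pow_mul_mul_pow {s s' : Letter} (hs : s ≠ .b) (hs' : s' ≠ .b)
    {P : ℕ × ℕ × ℕ → Prop} (hP : CoveredByPowers s s' P) {k : CS} (hk : k ∈ K) :
    ∃ t m n, P t ∧ (kWord t).val = s.val ^ m * k * s'.val ^ n := by
  obtain ⟨i, hi, c, hc, a, ha, rfl⟩ := exists_kWord_val_eq hk
  obtain ⟨m, -, n, -, hP⟩ := hP i hi a ha c hc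
  refine ⟨_, m, n, hP, ?_⟩
  have hrep {s : Letter} (hs : s ≠ .b) (n : ℕ) : Letter.b ∉ List.replicate n s :=
    fun h => hs (List.eq_of_mem_replicate h).symm
  have hshift : kShift c (i, 0, a) = (i, c % 12, a) := by rw [kShift, zero_add]
  have hK : s'.val ^ n ∈ K := by rw [← Word.val_replicate]; exact Word.val_mem_K (hrep hs' n)
  rw [← Nat.mod_eq_of_lt hc, ← hshift, kWord_kShift_val, kWord_kShift_val,
    kWord_kNormal_val (by simp [b_notMem_kWord, hrep hs, hrep hs']), Word.val_append,
    Word.val_append, Word.val_replicate, Word.val_replicate, mul_assoc,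
    ← ((commute_j_of_mem_K hK).pow_left _).eq, Nat.mod_eq_of_lt hc]
  simp only [mul_assoc]

lemma mul_mul_mem_neighbors_of_height_lt (d d' : Word) {s s' : Letter} (hs : s ≠ .b)
    (hs' : s' ≠ .b) (hd : Commute s.val d.val) (hd' : Commute s'.val d'.val)
    (low : List (ℕ × ℕ × ℕ)) (high : List (ℕ × ℕ × ℕ × ℕ))
    (hlow : ∀ t ∈ low, d.val * (kWord t).val * d'.val ∈ Neighbors)
    (hhigh : ∀ r ∈ high, ∀ c < r.2.2.2, r.2.2.1 ≤ c →
      Word.IsHigh (d ++ kWord (r.1, c, r.2.1) ++ d'))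
    (hcover : CoveredByPowers s s' fun t => OnArcs high t ∨ t ∈ low)
    {k : CS} (hk : k ∈ K) (hlt : height (d.val * k * d'.val) < 9) :
    d.val * k * d'.val ∈ Neighbors := by
  have hK {s : Letter} (hs : s ≠ .b) (n : ℕ) : (s.val ^ n)⁻¹ ∈ K := by
    rw [← Word.val_replicate]
    exact inv_mem (Word.val_mem_K fun h => hs (List.eq_of_mem_replicate h).symm)
  obtain ⟨t, m, n, ht, heq⟩ := exists_kWord_val_eq_pow_mul_mul_pow hs hs' hcover hk
  have hprod : d.val * k * d'.val =
      (s.val ^ m)⁻¹ * (d.val * (kWord t).val * d'.val) * (s'.val ^ n)⁻¹ := by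
    calc _ = (s.val ^ m)⁻¹ * (s.val ^ m * d.val) * k * (d'.val * s'.val ^ n) * (s'.val ^ n)⁻¹ := by
          group
      _ = _ := by rw [(hd.pow_left m).eq, ← (hd'.pow_left n).eq, heq]; group
  rw [hprod] at hlt ⊢
  rcases ht with ⟨r, hr, h1, h2, h3, h4⟩ | ht
  · rw [show t = (r.1, t.2.1, r.2.1) by rw [← h1, ← h2]] at hlt
    rw [height_mul_of_mem_K_right (hK hs' n), height_mul_of_mem_K_left (hK hs m),
      ← Word.val_append, ← Word.val_append] at hlt
    exact absurd (hhigh r hr _ h4 h3).nine_le_height hlt.not_ge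
  · exact mul_mem_neighbors (hK hs m) (hlow t ht) (hK hs' n)

lemma b_mul_mul_b_mem_neighbors {k : CS} (hk : k ∈ K) (hlt : height (gb * k * gb) < 9) :
    gb * k * gb ∈ Neighbors := by
  rw [show gb = Word.val [.b] from (mul_one _).symm] at hlt ⊢
  refine mul_mul_mem_neighbors_of_height_lt [.b] [.b] (s := .v) (s' := .v) (by decide) (by decide)
    commute_v_b commute_v_b
    [(0, 0, 0), (1, 0, 0), (0, 1, 0), (0, 2, 0), (2, 0, 0), (1, 1, 0), (1, 2, 0)]
    [(0, 0, 3, 12), (1, 0, 3, 11), (5, 0, 0, 3)] ?_ (by decide +kernel)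
    (by decide +kernel) hk hlt
  simp only [List.forall_mem_cons, List.not_mem_nil, IsEmpty.forall_iff, implies_true, and_true,
    kWord_val, kRepWord, Word.val_cons, Word.val_nil, Letter.val, pow_zero, pow_one, pow_two,
    one_mul, mul_one]
  refine ⟨?_, ?_, ?_, ?_, ?_, ?_, ?_⟩
  · rw [b_mul_b]
    exact inv_mem_neighbors b_mem_neighbors
  · rw [b_mul_u_mul_b]
    exact mul_mem_neighbors u_mem_K b_mem_neighbors u_mem_K
  · rw [b_mul_j_mul_b]
    exact mem_neighbors_of_mem_K (mul_mem v_mem_K (inv_mem j_mem_K))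
  · rw [b_mul_j_sq_mul_b]
    exact mul_mem_neighbors (mul_mem v_mem_K (inv_mem j_mem_K)) b_mem_neighbors
      (mul_mem v_mem_K (inv_mem j_mem_K))
  · rw [← u_inv]
    exact c_mem_neighbors
  · rw [b_mul_uj_mul_b]
    exact mul_mem_neighbors (inv_mem u_mem_K) b_mem_neighbors
      (mul_mem (mul_mem u_mem_K v_mem_K) (inv_mem j_mem_K))
  · rw [b_mul_ujj_mul_b]
    exact mul_mem_neighbors (mul_mem (mul_mem v_mem_K (inv_mem j_mem_K)) u_mem_K) c_mem_neighbors
      (mul_mem v_mem_K (inv_mem j_mem_K))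

lemma b_mul_mul_c_mem_neighbors {k : CS} (hk : k ∈ K) (hlt : height (gb * k * gc) < 9) :
    gb * k * gc ∈ Neighbors := by
  have hc : Commute (Letter.val .u) cWord.val := cWord_val ▸ commute_u_c
  rw [show gb = Word.val [.b] from (mul_one _).symm, ← cWord_val] at hlt ⊢
  refine mul_mul_mem_neighbors_of_height_lt [.b] cWord (s := .v) (s' := .u) (by decide) (by decide)
    commute_v_b hc [(0, 0, 0), (0, 1, 0)] [(0, 0, 2, 12), (5, 0, 0, 12)] ?_
    (by decide +kernel) (by decide +kernel) hk hlt
  simp only [List.forall_mem_cons, List.not_mem_nil, IsEmpty.forall_iff, implies_true, and_true,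
    kWord_val, kRepWord, Word.val_cons, Word.val_nil, Letter.val, pow_zero, pow_one,
    one_mul, mul_one, cWord_val]
  refine ⟨?_, ?_⟩
  · rw [b_mul_c]
    exact mul_mem_neighbors u_mem_K (inv_mem_neighbors b_mem_neighbors) (inv_mem u_mem_K)
  · rw [b_mul_j_mul_c]
    simpa using mul_mem_neighbors
      (mul_mem (mul_mem v_mem_K (inv_mem j_mem_K)) (inv_mem u_mem_K)) b_mem_neighbors (one_mem K)

lemma c_mul_mul_b_mem_neighbors {k : CS} (hk : k ∈ K) (hlt : height (gc * k * gb) < 9) :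
    gc * k * gb ∈ Neighbors := by
  have hc : Commute (Letter.val .u) cWord.val := cWord_val ▸ commute_u_c
  rw [show gb = Word.val [.b] from (mul_one _).symm, ← cWord_val] at hlt ⊢
  refine mul_mul_mem_neighbors_of_height_lt cWord [.b] (s := .u) (s' := .v) (by decide) (by decide)
    hc commute_v_b [(0, 0, 0), (0, 1, 0)] [(0, 0, 2, 12), (3, 0, 0, 12)] ?_
    (by decide +kernel) (by decide +kernel) hk hlt
  simp only [List.forall_mem_cons, List.not_mem_nil, IsEmpty.forall_iff, implies_true, and_true,
    kWord_val, kRepWord, Word.val_cons, Word.val_nil, Letter.val, pow_zero, pow_one,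
    one_mul, mul_one, cWord_val]
  refine ⟨?_, ?_⟩
  · rw [c_mul_b]
    exact mul_mem_neighbors (inv_mem u_mem_K) (inv_mem_neighbors b_mem_neighbors) u_mem_K
  · rw [c_mul_j_mul_b]
    simpa using mul_mem_neighbors (one_mem K) b_mem_neighbors
      (mul_mem (mul_mem (inv_mem u_mem_K) v_mem_K) (inv_mem j_mem_K))

lemma c_mul_mul_c_mem_neighbors {k : CS} (hk : k ∈ K) (hlt : height (gc * k * gc) < 9) :
    gc * k * gc ∈ Neighbors := by
  have hc : Commute (Letter.val .u) cWord.val := cWord_val ▸ commute_u_c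
  rw [← cWord_val] at hlt ⊢
  refine mul_mul_mem_neighbors_of_height_lt cWord cWord (s := .u) (s' := .u) (by decide)
    (by decide) hc hc [(0, 0, 0), (0, 0, 1), (0, 11, 1)]
    [(0, 0, 1, 12), (3, 0, 1, 11), (4, 0, 0, 12), (4, 1, 0, 4)] ?_
    (by decide +kernel) (by decide +kernel) hk hlt
  simp only [List.forall_mem_cons, List.not_mem_nil, IsEmpty.forall_iff, implies_true, and_true,
    kWord_val, kRepWord, Word.val_nil, pow_zero, pow_one, j_pow_eleven,
    one_mul, mul_one, cWord_val]
  refine ⟨?_, ?_, ?_⟩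
  · rw [c_mul_c]
    exact mem_neighbors_of_mem_K (inv_mem u_mem_K)
  · rw [c_mul_v_mul_c]
    exact mul_mem_neighbors (mul_mem (mul_mem v_mem_K (inv_mem j_mem_K)) u_mem_K) c_mem_neighbors
      (mul_mem (inv_mem v_mem_K) (inv_mem u_mem_K))
  · rw [(commute_j_of_mem_K v_mem_K).inv_left.eq, c_mul_vj_inv_mul_c]
    exact mul_mem_neighbors (mul_mem (mul_mem (inv_mem u_mem_K) v_mem_K) u_mem_K) c_mem_neighbors
      (mul_mem v_mem_K (inv_mem u_mem_K))

lemma mul_mem_neighbors_of_height_lt {s t : CS} (hs : s ∈ Neighbors) (ht : t ∈ Neighbors)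
    (hlt : height (s * t) < 9) : s * t ∈ Neighbors := by
  rcases mem_neighbors.1 hs with hsK | ⟨d, hd, k₁, h₁, k₂, h₂, rfl⟩
  · simpa using mul_mem_neighbors hsK ht (one_mem K)
  rcases mem_neighbors.1 ht with htK | ⟨d', hd', k₃, h₃, k₄, h₄, rfl⟩
  · simpa using mul_mem_neighbors (one_mem K) hs htK
  have hprod : k₁ * d * k₂ * (k₃ * d' * k₄) = k₁ * (d * (k₂ * k₃) * d') * k₄ := by group
  rw [hprod, height_mul_of_mem_K_right h₄, height_mul_of_mem_K_left h₁] at hlt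
  rw [hprod]
  refine mul_mem_neighbors h₁ ?_ h₄
  have hk := mul_mem h₂ h₃
  rcases hd with rfl | rfl <;> rcases hd' with rfl | rfl
  exacts [b_mul_mul_b_mem_neighbors hk hlt, b_mul_mul_c_mem_neighbors hk hlt,
    c_mul_mul_b_mem_neighbors hk hlt, c_mul_mul_c_mem_neighbors hk hlt]

/-! ### Charts of the unit ball indexed by a group -/

section Atlas

variable {G X : Type*} [Group G] [NormedAddCommGroup X]

/-- `δ` is a Lebesgue number of the family `V` on the ball of radius `R`: around a point of `V g`,
some chart `V (g * t)` with a transition `t ∈ T` contains all points at distance less than `δ`. -/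
def IsLebesgueNumber (V : G → Set X) (T : Set G) (R δ : ℝ) : Prop :=
  ∀ g x, ‖x‖ ≤ R → x ∈ V g → ∃ t ∈ T, ∀ y, ‖y‖ ≤ R → ‖y - x‖ < δ → y ∈ V (g * t)

/-- A family of charts of the unit ball, indexed by a group, for which the transitions between
charts with a common point that lie in `T` behave like an equivalence relation. -/
structure IsChartFamily [NormedSpace ℝ X] (V : G → Set X) (T : Set G) : Prop where
  zero_mem : 0 ∈ V 1
  one_mem : 1 ∈ T
  inv_mem : ∀ t ∈ T, t⁻¹ ∈ T
  trans : ∀ ⦃x g h k⦄, x ∈ V g → x ∈ V h → x ∈ V k → g⁻¹ * h ∈ T → h⁻¹ * k ∈ T → g⁻¹ * k ∈ T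
  convex : ∀ g, Convex ℝ (V g)
  norm_lt_one : ∀ ⦃g x⦄, x ∈ V g → ‖x‖ < 1
  exists_isLebesgueNumber : ∀ R < 1, ∃ δ > 0, IsLebesgueNumber V T R δ

/-- The chart `V g` contains `x i` and is connected to `V 1` through charts at the successive points
`x 0, …, x i`, with transitions in `T`. -/
def Chain (V : G → Set X) (T : Set G) (x : ℕ → X) : ℕ → G → Prop
  | 0, g => x 0 ∈ V g ∧ g ∈ T
  | i + 1, g => x (i + 1) ∈ V g ∧ ∃ h, Chain V T x i h ∧ x (i + 1) ∈ V h ∧ h⁻¹ * g ∈ T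

/-- The `i`-th of the points that divide the segment from `0` to `p` into `N` equal parts. -/
noncomputable def subdivision [NormedSpace ℝ X] (N : ℕ) (p : X) (i : ℕ) : X := ((i : ℝ) / N) • p

variable {V : G → Set X} {T : Set G}

variable [NormedSpace ℝ X] {N : ℕ} {p q : X} {R δ : ℝ} {i : ℕ}

@[simp] lemma subdivision_zero : subdivision N p 0 = 0 := by simp [subdivision]

lemma subdivision_self (hN : 0 < N) : subdivision N p N = p := by
  rw [subdivision, div_self (by exact_mod_cast hN.ne'), one_smul]

lemma subdivision_succ_sub : subdivision N p (i + 1) - subdivision N p i = (1 / N : ℝ) • p := by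
  rw [subdivision, subdivision, ← sub_smul]
  congr 1
  push_cast
  ring

lemma norm_subdivision_sub_le (hi : i ≤ N) :
    ‖subdivision N p i - subdivision N q i‖ ≤ ‖p - q‖ := by
  rw [subdivision, subdivision, ← smul_sub, norm_smul, Real.norm_of_nonneg (by positivity)]
  exact mul_le_of_le_one_left (norm_nonneg _)
    (div_le_one_of_le₀ (by exact_mod_cast hi) (by positivity))

lemma norm_subdivision_le (hi : i ≤ N) : ‖subdivision N p i‖ ≤ ‖p‖ := by
  simpa [subdivision] using norm_subdivision_sub_le (p := p) (q := 0) hi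

namespace IsChartFamily

variable (hV : IsChartFamily V T)
include hV

lemma symm {g h : G} (hgh : g⁻¹ * h ∈ T) : h⁻¹ * g ∈ T := by
  simpa using hV.inv_mem _ hgh

lemma chain_unique {x : ℕ → X} (hx : x 0 = 0) {g g' : G} (h : Chain V T x i g)
    (h' : Chain V T x i g') : g⁻¹ * g' ∈ T := by
  induction i generalizing g g' with
  | zero =>
    exact hV.trans h.1 (by rw [hx]; exact hV.zero_mem) h'.1 (hV.symm (by simpa using h.2))
      (by simpa using h'.2)
  | succ i ih =>
    obtain ⟨hg, k, hk, hkx, hkg⟩ := h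
    obtain ⟨hg', l, hl, hlx, hlg'⟩ := h'
    exact hV.trans hg hkx hg' (hV.symm hkg) (hV.trans hkx hlx hg' (ih hk hl) hlg')

lemma chain_trans {x : ℕ → X} (hx : x 0 = 0) {g g' : G} (h : Chain V T x i g) (hg' : x i ∈ V g')
    (ht : g⁻¹ * g' ∈ T) : Chain V T x i g' := by
  cases i with
  | zero =>
    have h0 : x 0 ∈ V 1 := by rw [hx]; exact hV.zero_mem
    exact ⟨hg', by simpa using hV.trans h0 h.1 hg' (by simpa using h.2) ht⟩
  | succ i =>
    obtain ⟨hg, k, hk, hkx, hkg⟩ := h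
    exact ⟨hg', k, hk, hkx, hV.trans hkx hg hg' hkg ht⟩

lemma exists_chain_chain {x y : ℕ → X} (hx0 : x 0 = 0) (hy0 : y 0 = 0)
    (hL : IsLebesgueNumber V T R δ) (hx : ∀ i ≤ N, ‖x i‖ ≤ R) (hy : ∀ i ≤ N, ‖y i‖ ≤ R)
    (hstep : ∀ i < N, ‖x (i + 1) - x i‖ < δ / 2) (hxy : ∀ i ≤ N, ‖y i - x i‖ < δ / 2) (hi : i ≤ N) :
    ∃ g, Chain V T x i g ∧ Chain V T y i g ∧ ∀ z, ‖z‖ ≤ R → ‖z - x i‖ < δ → z ∈ V g := by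
  have hδ : 0 < δ := by linarith [norm_nonneg (y i - x i), hxy i hi]
  induction i with
  | zero =>
    obtain ⟨t, ht, hball⟩ := hL 1 (x 0) (hx 0 hi) (by rw [hx0]; exact hV.zero_mem)
    rw [one_mul] at hball
    have hmem : x 0 ∈ V t := hball _ (hx 0 hi) (by simpa)
    exact ⟨t, ⟨hmem, ht⟩, ⟨by rwa [hy0, ← hx0], ht⟩, hball⟩
  | succ i ih =>
    obtain ⟨g, hgx, hgy, hball⟩ := ih (by lia)
    have hxg : x (i + 1) ∈ V g := hball _ (hx _ hi) (by linarith [hstep i hi])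
    have hyg : y (i + 1) ∈ V g := hball _ (hy _ hi) <| by
      linarith [norm_sub_le_norm_sub_add_norm_sub (y (i + 1)) (x (i + 1)) (x i), hstep i hi,
        hxy _ hi]
    obtain ⟨t, ht, hball'⟩ := hL g _ (hx _ hi) hxg
    have ht' : g⁻¹ * (g * t) ∈ T := by rwa [inv_mul_cancel_left]
    exact ⟨g * t, ⟨hball' _ (hx _ hi) (by simpa), g, hgx, hxg, ht'⟩,
      ⟨hball' _ (hy _ hi) (by linarith [hxy _ hi]), g, hgy, hyg, ht'⟩, hball'⟩

lemma chain_of_norm_sub_lt (hR : R < 1) (hL : IsLebesgueNumber V T R δ) (hN : 0 < N)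
    (hNδ : (1 : ℝ) / N < δ / 2) (hp : ‖p‖ ≤ R) (hq : ‖q‖ ≤ R) (hpq : ‖q - p‖ < δ / 2) {g : G}
    (hqg : q ∈ V g) (h : Chain V T (subdivision N p) N g) : Chain V T (subdivision N q) N g := by
  have hstep (i : ℕ) : ‖subdivision N p (i + 1) - subdivision N p i‖ < δ / 2 := by
    rw [subdivision_succ_sub, norm_smul, Real.norm_of_nonneg (by positivity)]
    exact (mul_le_of_le_one_right (by positivity) (hp.trans hR.le)).trans_lt hNδ
  obtain ⟨k, hkp, hkq, -⟩ := hV.exists_chain_chain subdivision_zero subdivision_zero hL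
    (fun i hi => (norm_subdivision_le hi).trans hp) (fun i hi => (norm_subdivision_le hi).trans hq)
    (fun i _ => hstep i) (fun i hi => (norm_subdivision_sub_le hi).trans_lt hpq) le_rfl
  exact hV.chain_trans subdivision_zero hkq (by rwa [subdivision_self hN])
    (hV.chain_unique subdivision_zero hkp h)

lemma chain_of_mem_of_mem (hR : R < 1) (hδ : 0 < δ) (hL : IsLebesgueNumber V T R δ) (hN : 0 < N)
    (hNδ : (1 : ℝ) / N < δ / 2) (hp : ‖p‖ ≤ R) (hq : ‖q‖ ≤ R) {g : G} (hpg : p ∈ V g)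
    (hqg : q ∈ V g) (h : Chain V T (subdivision N p) N g) : Chain V T (subdivision N q) N g := by
  obtain ⟨m, hm⟩ := exists_nat_gt (‖q - p‖ / (δ / 2))
  have hm0 : 0 < m := by exact_mod_cast (by positivity : 0 ≤ ‖q - p‖ / (δ / 2)).trans_lt hm
  have hconv : Convex ℝ (V g ∩ Metric.closedBall 0 R) := (hV.convex g).inter (convex_closedBall 0 R)
  have hmem (k : ℕ) (hk : k ≤ m) : p + subdivision m (q - p) k ∈ V g ∩ Metric.closedBall 0 R :=
    hconv.add_smul_sub_mem ⟨hpg, by simpa using hp⟩ ⟨hqg, by simpa using hq⟩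
      ⟨by positivity, div_le_one_of_le₀ (by exact_mod_cast hk) (by positivity)⟩
  have hchain (k : ℕ) (hk : k ≤ m) :
      Chain V T (subdivision N (p + subdivision m (q - p) k)) N g := by
    induction k with
    | zero => simpa using h
    | succ k ih =>
      refine hV.chain_of_norm_sub_lt hR hL hN hNδ (by simpa using (hmem k (by lia)).2)
        (by simpa using (hmem _ hk).2) ?_ (hmem _ hk).1 (ih (by lia))
      rw [add_sub_add_left_eq_sub, subdivision_succ_sub, norm_smul,
        Real.norm_of_nonneg (by positivity), one_div_mul_eq_div, div_lt_comm₀ (by positivity)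
        (by positivity)]
      exact hm
  simpa [subdivision_self hm0] using hchain m le_rfl

lemma chain_one (hp : p ∈ V 1) (hi : i ≤ N) : Chain V T (subdivision N p) i 1 := by
  induction i with
  | zero => exact ⟨by simpa using hV.zero_mem, hV.one_mem⟩
  | succ i ih =>
    have hmem : subdivision N p (i + 1) ∈ V 1 :=
      (hV.convex 1).smul_mem_of_zero_mem hV.zero_mem hp
        ⟨by positivity, div_le_one_of_le₀ (by exact_mod_cast hi) (by positivity)⟩
    exact ⟨hmem, 1, ih (by lia), hmem, by simpa using hV.one_mem⟩

/-- Near the boundary of the ball the Lebesgue number degenerates, so the statement is about all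
radii close to `1`. -/
lemma exists_forall_chain
    (hgen : ∀ P : G → Prop, P 1 →
      (∀ g, ∀ t ∈ T, P g → (V g ∩ V (g * t)).Nonempty → P (g * t)) → ∀ g, P g) (g : G) :
    ∃ R₀ < 1, ∀ R < 1, R₀ ≤ R → ∀ δ > 0, IsLebesgueNumber V T R δ → ∀ N : ℕ, 0 < N →
      (1 : ℝ) / N < δ / 2 → ∀ p ∈ V g, ‖p‖ ≤ R → Chain V T (subdivision N p) N g := by
  revert g
  apply hgen
  · exact ⟨0, one_pos, fun R _ _ δ _ _ N _ _ p hp _ => hV.chain_one hp le_rfl⟩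
  rintro g t ht ⟨R₀, hR₀, hchain⟩ ⟨z, hzg, hzgt⟩
  refine ⟨max R₀ ‖z‖, max_lt hR₀ (hV.norm_lt_one hzg), ?_⟩
  intro R hR hRR δ hδ hL N hN hNδ p hp hpR
  have hzR : ‖z‖ ≤ R := (le_max_right _ _).trans hRR
  have hz : Chain V T (subdivision N z) N (g * t) :=
    hV.chain_trans subdivision_zero
      (hchain R hR ((le_max_left _ _).trans hRR) δ hδ hL N hN hNδ z hzg hzR)
      (by rwa [subdivision_self hN]) (by rwa [inv_mul_cancel_left])
  exact hV.chain_of_mem_of_mem hR hδ hL hN hNδ hzR hpR hzgt hp hz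

/-- The unit ball is simply connected, which shows up as follows: a transition between two charts
with a common point can be followed along a path to `0`. -/
theorem mem_of_inter_nonempty
    (hgen : ∀ P : G → Prop, P 1 →
      (∀ g, ∀ t ∈ T, P g → (V g ∩ V (g * t)).Nonempty → P (g * t)) → ∀ g, P g)
    {g : G} (hg : (V g ∩ V 1).Nonempty) : g ∈ T := by
  obtain ⟨p, hpg, hp1⟩ := hg
  obtain ⟨R₀, hR₀, hchain⟩ := hV.exists_forall_chain hgen g
  have hR : max R₀ ‖p‖ < 1 := max_lt hR₀ (hV.norm_lt_one hpg)
  obtain ⟨δ, hδ, hL⟩ := hV.exists_isLebesgueNumber _ hR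
  obtain ⟨N, hNδ⟩ := exists_nat_one_div_lt (half_pos hδ)
  have h1 : Chain V T (subdivision (N + 1) p) (N + 1) 1 := hV.chain_one hp1 le_rfl
  have hg : Chain V T (subdivision (N + 1) p) (N + 1) g :=
    hchain _ hR (le_max_left _ _) δ hδ hL _ N.succ_pos (by exact_mod_cast hNδ) p hpg
      (le_max_right _ _)
  simpa using hV.chain_unique subdivision_zero h1 hg

end IsChartFamily

end Atlas

/-! ### The Hermitian form -/

/-- The invariant Hermitian form. -/
noncomputable def herm (x y : Fin 3 → ℂ) : ℂ := star x ⬝ᵥ formMat.toMatrix.mulVec y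

lemma herm_smul_left (c : ℂ) (x y : Fin 3 → ℂ) : herm (c • x) y = (starRingEnd ℂ) c * herm x y := by
  simp [herm, smul_dotProduct]

lemma herm_smul_right (c : ℂ) (x y : Fin 3 → ℂ) : herm x (c • y) = c * herm x y := by
  simp [herm, Matrix.mulVec_smul, dotProduct_smul]

lemma herm_add_left (x y z : Fin 3 → ℂ) : herm (x + y) z = herm x z + herm y z := by
  simp [herm, add_dotProduct]

lemma herm_add_right (x y z : Fin 3 → ℂ) : herm x (y + z) = herm x y + herm x z := by
  simp [herm, Matrix.mulVec_add, dotProduct_add]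

lemma herm_rep_mulVec (g : CS) (x y : Fin 3 → ℂ) :
    herm ((rep g).mulVec x) ((rep g).mulVec y) = herm x y := by
  rw [herm, herm, Matrix.star_mulVec, Matrix.mulVec_mulVec, ← Matrix.dotProduct_mulVec,
    Matrix.mulVec_mulVec, ← mul_assoc, rep, Word.conjTranspose_mul_form_mul]

/-- The first coordinate with respect to an orthogonal frame of `e₃ᗮ`, in which the directions of
the points `κ b e₃`, `κ ∈ K`, form an octahedron in the projective line. -/
noncomputable def coord₀ (x : Fin 3 → ℂ) : ℂ :=
  toComplex ⟨1, 0, -1, -1⟩ * x 0 + toComplex ⟨0, -1, 1, 1⟩ * x 1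

/-- The second coordinate with respect to the same frame. -/
noncomputable def coord₁ (x : Fin 3 → ℂ) : ℂ := toComplex ⟨-1, 0, 1, 1⟩ * x 0

/-- The standard positive definite Hermitian form in the coordinates `coord₀` and `coord₁`. -/
noncomputable def perp (x y : Fin 3 → ℂ) : ℂ :=
  (starRingEnd ℂ) (coord₀ x) * coord₀ y + (starRingEnd ℂ) (coord₁ x) * coord₁ y

/-- The quadratic form of `perp`. -/
noncomputable def perpSq (x : Fin 3 → ℂ) : ℝ :=
  Complex.normSq (coord₀ x) + Complex.normSq (coord₁ x)

lemma normSq_perp_le (x y : Fin 3 → ℂ) : Complex.normSq (perp x y) ≤ perpSq x * perpSq y := by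
  have lagrange (a b c d : ℂ) :
      Complex.normSq ((starRingEnd ℂ) a * c + (starRingEnd ℂ) b * d) +
          Complex.normSq (a * d - b * c) =
        (Complex.normSq a + Complex.normSq b) * (Complex.normSq c + Complex.normSq d) := by
    simp only [Complex.normSq_apply, Complex.add_re, Complex.add_im, Complex.sub_re, Complex.sub_im,
      Complex.mul_re, Complex.mul_im, Complex.conj_re, Complex.conj_im]
    ring
  rw [perpSq, perpSq, ← lagrange]
  exact le_add_of_nonneg_right (Complex.normSq_nonneg _)

lemma one_add_sqrt_three_ne_zero : ((1 + √3 : ℝ) : ℂ) ≠ 0 := by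
  exact_mod_cast (show (0 : ℝ) < 1 + √3 by positivity).ne'

lemma toComplex_one_add_sqrt_three : toComplex ⟨1, 2, 0, -1⟩ = ((1 + √3 : ℝ) : ℂ) := by
  apply Complex.ext <;> simp [toComplex]

lemma herm_eq (x y : Fin 3 → ℂ) :
    herm x y = (starRingEnd ℂ) (x 2) * y 2 - perp x y / ((1 + √3 : ℝ) : ℂ) := by
  have h₀₀ : conj ⟨1, 0, -1, -1⟩ * ⟨1, 0, -1, -1⟩ + conj ⟨-1, 0, 1, 1⟩ * ⟨-1, 0, 1, 1⟩ +
      ⟨1, 2, 0, -1⟩ * formMat.c₁.x = 0 := by decide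
  have h₀₁ : conj ⟨1, 0, -1, -1⟩ * ⟨0, -1, 1, 1⟩ + ⟨1, 2, 0, -1⟩ * formMat.c₂.x = 0 := by decide
  have h₁₀ : conj ⟨0, -1, 1, 1⟩ * ⟨1, 0, -1, -1⟩ + ⟨1, 2, 0, -1⟩ * formMat.c₁.y = 0 := by decide
  have h₁₁ : conj ⟨0, -1, 1, 1⟩ * ⟨0, -1, 1, 1⟩ + ⟨1, 2, 0, -1⟩ * formMat.c₂.y = 0 := by decide
  replace h₀₀ := congrArg toComplex h₀₀
  replace h₀₁ := congrArg toComplex h₀₁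
  replace h₁₀ := congrArg toComplex h₁₀
  replace h₁₁ := congrArg toComplex h₁₁
  simp only [toComplex_add, toComplex_mul, toComplex_conj, toComplex_one_add_sqrt_three,
    toComplex_zero] at h₀₀ h₀₁ h₁₀ h₁₁
  have hexpand : herm x y = (starRingEnd ℂ) (x 2) * y 2 +
      (starRingEnd ℂ) (x 0) * (formMat.c₁.x.toComplex * y 0 + formMat.c₂.x.toComplex * y 1) +
      (starRingEnd ℂ) (x 1) * (formMat.c₁.y.toComplex * y 0 + formMat.c₂.y.toComplex * y 1) := by
    simp [herm, dotProduct, Matrix.mulVec, Fin.sum_univ_three, CycMat.toMatrix, CycVec.toVec,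
      formMat]
    ring
  rw [hexpand, eq_sub_iff_add_eq, ← eq_sub_iff_add_eq', div_eq_iff one_add_sqrt_three_ne_zero]
  simp only [perp, coord₀, coord₁, map_add, map_mul]
  linear_combination (starRingEnd ℂ) (x 0) * (y 0 * h₀₀ + y 1 * h₀₁) +
    (starRingEnd ℂ) (x 1) * (y 0 * h₁₀ + y 1 * h₁₁)

/-- The real quadratic form `herm x x`. -/
noncomputable def quad (x : Fin 3 → ℂ) : ℝ := Complex.normSq (x 2) - perpSq x / (1 + √3)

lemma herm_self (x : Fin 3 → ℂ) : herm x x = quad x := by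
  rw [herm_eq, quad, perp, perpSq]
  simp only [Complex.normSq_eq_conj_mul_self, Complex.ofReal_sub, Complex.ofReal_add,
    Complex.ofReal_div]

lemma perpSq_eq (x : Fin 3 → ℂ) : perpSq x = (1 + √3) * (Complex.normSq (x 2) - quad x) := by
  rw [quad]; field_simp; ring

lemma quad_rep_mulVec (g : CS) (x : Fin 3 → ℂ) : quad ((rep g).mulVec x) = quad x := by
  have h := herm_rep_mulVec g x x
  rw [herm_self, herm_self] at h
  exact_mod_cast h

lemma quad_smul (c : ℂ) (x : Fin 3 → ℂ) : quad (c • x) = Complex.normSq c * quad x := by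
  simp only [quad, perpSq, coord₀, coord₁, Pi.smul_apply, smul_eq_mul, ← mul_left_comm c, ← mul_add,
    map_mul]
  ring

/-! ### The orbit of the base point -/

/-- The vector `g e₃`, defined up to a power of `ζ`. -/
noncomputable def orbitVec (g : CS) : Fin 3 → ℂ := (rep g).col 2

lemma orbitVec_eq_mulVec (g : CS) : orbitVec g = (rep g).mulVec (Pi.single 2 1) :=
  ((rep g).mulVec_single_one 2).symm

lemma exists_orbitVec_val_eq (w : Word) : ∃ n : ℕ, orbitVec w.val = ζ ^ n • w.cycMat.c₃.toVec := by
  obtain ⟨n, hn⟩ := exists_rep_val_eq w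
  exact ⟨n, by rw [orbitVec, hn]; rfl⟩

lemma exists_orbitVec_mul_eq (g h : CS) :
    ∃ n : ℕ, orbitVec (g * h) = ζ ^ n • (rep g).mulVec (orbitVec h) := by
  obtain ⟨n, hn⟩ := exists_rep_mul_eq g h
  exact ⟨n, by rw [orbitVec, hn]; rfl⟩

lemma quad_orbitVec (g : CS) : quad (orbitVec g) = 1 := by
  rw [orbitVec_eq_mulVec, quad_rep_mulVec]
  simp [quad, perpSq, coord₀, coord₁]

/-- `|⟨g e₃, y⟩|²`. On vectors `y` with `quad y = 1` it is `cosh²` of the suitably normalized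
hyperbolic distance from `y` to `g e₃`. -/
noncomputable def overlap (g : CS) (y : Fin 3 → ℂ) : ℝ := Complex.normSq (herm (orbitVec g) y)

lemma overlap_mul (g h : CS) (y : Fin 3 → ℂ) :
    overlap (g * h) ((rep g).mulVec y) = overlap h y := by
  obtain ⟨n, hn⟩ := exists_orbitVec_mul_eq g h
  rw [overlap, hn, herm_smul_left, herm_rep_mulVec, map_mul, Complex.normSq_conj, normSq_zeta_pow,
    one_mul, overlap]

lemma overlap_val (w : Word) (y : Fin 3 → ℂ) :
    overlap w.val y = Complex.normSq (herm w.cycMat.c₃.toVec y) := by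
  obtain ⟨n, hn⟩ := exists_orbitVec_val_eq w
  rw [overlap, hn, herm_smul_left, map_mul, Complex.normSq_conj, normSq_zeta_pow, one_mul]

lemma overlap_one (y : Fin 3 → ℂ) : overlap 1 y = Complex.normSq (y 2) := by
  rw [← Word.val_nil, overlap_val, herm_eq]
  simp [perp, coord₀, coord₁, CycVec.toVec, Word.cycMat, show (1 : CycMat) = .diag 1 1 from rfl,
    CycMat.diag]

lemma overlap_smul (g : CS) (c : ℂ) (y : Fin 3 → ℂ) :
    overlap g (c • y) = Complex.normSq c * overlap g y := by
  rw [overlap, herm_smul_right, map_mul, overlap]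

/-! ### The reduction step -/

lemma sqrt_three_bounds : (1.73205 : ℝ) < √3 ∧ √3 < 1.73206 :=
  ⟨by rw [Real.lt_sqrt (by norm_num)]; norm_num, by rw [Real.sqrt_lt' (by norm_num)]; norm_num⟩

lemma conj_zeta_mul_zeta : (starRingEnd ℂ) ζ * ζ = 1 := by
  rw [← Complex.normSq_eq_conj_mul_self, normSq_zeta, Complex.ofReal_one]

lemma exists_forall_re_zeta_pow_mul_le (z : ℂ) :
    ∃ m : ℕ, ∀ k : ℕ, (ζ ^ k * z).re ≤ (ζ ^ m * z).re := by
  obtain ⟨m, -, hm⟩ := Finset.exists_max_image (Finset.range 12) (fun m => (ζ ^ m * z).re)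
    ⟨0, by simp⟩
  refine ⟨m, fun k => ?_⟩
  rw [pow_eq_pow_mod k zeta_pow_twelve]
  exact hm _ (by simp [Nat.mod_lt])

lemma mul_norm_le_re {t : ℂ} (h : (ζ * t).re ≤ t.re) (h' : ((starRingEnd ℂ) ζ * t).re ≤ t.re) :
    √(2 + √3) / 2 * ‖t‖ ≤ t.re := by
  have hsq : √3 ^ 2 = 3 := Real.sq_sqrt (by norm_num)
  have hlt : √3 < 2 := by linarith [sqrt_three_bounds.2]
  simp only [ζ, zeta, toComplex, Complex.mul_re, Complex.conj_re, Complex.conj_im] at h h'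
  norm_num at h h'
  have him : t.im ^ 2 ≤ ((2 - √3) * t.re) ^ 2 := sq_le_sq' (by linarith) (by linarith)
  have hre : 0 ≤ t.re := by nlinarith
  apply le_of_sq_le_sq _ hre
  rw [mul_pow, div_pow, Real.sq_sqrt (by positivity), Complex.sq_norm, Complex.normSq_apply]
  calc (2 + √3) / 2 ^ 2 * (t.re * t.re + t.im * t.im)
      ≤ (2 + √3) / 2 ^ 2 * (t.re ^ 2 + ((2 - √3) * t.re) ^ 2) := by rw [← sq, ← sq]; gcongr
    _ = t.re ^ 2 := by linear_combination t.re ^ 2 / 4 * (√3 - 2) * hsq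

/-- Here `√(2 + √3) / 2 = cos (π / 12)`. -/
lemma exists_mul_norm_le_re (z : ℂ) : ∃ m : ℕ, √(2 + √3) / 2 * ‖z‖ ≤ (ζ ^ m * z).re := by
  obtain ⟨m, hm⟩ := exists_forall_re_zeta_pow_mul_le z
  have hz : ‖ζ ^ m * z‖ = ‖z‖ := by rw [norm_mul, norm_pow, norm_zeta, one_pow, one_mul]
  refine ⟨m, hz ▸ mul_norm_le_re ?_ ?_⟩
  · rw [← mul_assoc, ← pow_succ']
    exact hm (m + 1)
  · have hinv : (starRingEnd ℂ) ζ * ζ ^ m = ζ ^ (m + 11) := by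
      linear_combination (ζ ^ (m + 11)) * conj_zeta_mul_zeta -
        (starRingEnd ℂ) ζ * ζ ^ m * zeta_pow_twelve
    rw [← mul_assoc, hinv]
    exact hm (m + 11)

lemma mulVec_j_pow (m : ℕ) (x : Fin 3 → ℂ) :
    coord₀ ((Letter.j.cycMat.toMatrix ^ m).mulVec x) = ζ ^ m * coord₀ x ∧
    coord₁ ((Letter.j.cycMat.toMatrix ^ m).mulVec x) = ζ ^ m * coord₁ x ∧
    (Letter.j.cycMat.toMatrix ^ m).mulVec x 2 = x 2 := by
  induction m with
  | zero => simp
  | succ m ih =>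
    obtain ⟨h₀, h₁, h₂⟩ := ih
    rw [pow_succ', ← Matrix.mulVec_mulVec, pow_succ', mul_assoc, mul_assoc, ← h₀, ← h₁, ← h₂]
    generalize (Letter.j.cycMat.toMatrix ^ m).mulVec x = x'
    refine ⟨?_, ?_, ?_⟩ <;>
      simp [coord₀, coord₁, Matrix.mulVec, dotProduct, Fin.sum_univ_three, Letter.cycMat,
        CycMat.diag, CycMat.toMatrix, CycVec.toVec, ζ] <;> ring

lemma overlap_j_pow_mul (m : ℕ) (w : Word) (y : Fin 3 → ℂ) :
    overlap (gj ^ m * w.val) y = Complex.normSq ((starRingEnd ℂ) w.corner.toComplex * y 2 -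
      (starRingEnd ℂ) (ζ ^ m) * (perp w.cycMat.c₃.toVec y / ((1 + √3 : ℝ) : ℂ))) := by
  have hval : gj ^ m * w.val = Word.val (List.replicate m .j ++ w) := by
    rw [Word.val_append, Word.val_replicate]; rfl
  have hcol : (Word.cycMat (List.replicate m .j ++ w)).c₃.toVec =
      (Letter.j.cycMat.toMatrix ^ m).mulVec w.cycMat.c₃.toVec := by
    have hmat : Word.matrix (List.replicate m .j) = Letter.j.cycMat.toMatrix ^ m := by
      clear hval
      induction m with
      | zero => simp
      | succ m ih => rw [List.replicate_succ, Word.matrix_cons, ih, pow_succ']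
    rw [← hmat]
    exact congrFun (congrArg Matrix.transpose (Word.matrix_append (List.replicate m .j) w)) 2
  obtain ⟨h₀, h₁, h₂⟩ := mulVec_j_pow m w.cycMat.c₃.toVec
  rw [hval, overlap_val, hcol, herm_eq, perp, perp, h₀, h₁, h₂]
  congr 2
  rw [map_mul, map_mul]
  ring

/-- The law of cosines: the angle between the vectors is at most `π / 12`, and the lengths `c Y` and
`q` are comparable. -/
lemma normSq_estimate {c Y q Z : ℝ} (hc : c = 2 + √3) (hY : 0 ≤ Y) (hlow : 1.01 * Y ≤ q)
    (hhigh : q ≤ 1.66 * Y) (hZ : c / 2 * (Y * q) ≤ Z) :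
    c * Y ^ 2 + q ^ 2 - 2 * Z ≤ 0.99 * Y ^ 2 := by
  have hlo := sqrt_three_bounds.1
  have h₁ : 0 ≤ (q - 1.01 * Y) * (1.66 * Y - q) := mul_nonneg (by linarith) (by linarith)
  have h₂ : 0 ≤ Y * (q - 1.01 * Y) := mul_nonneg hY (by linarith)
  have h₃ : 0 ≤ (√3 - 1.73205) * (Y * (q - 1.01 * Y)) := mul_nonneg (by linarith) h₂
  have h₄ : 0 ≤ (√3 - 1.73205) * Y ^ 2 := mul_nonneg (by linarith) (by positivity)
  subst hc
  nlinarith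

lemma quad_toVec_c₃ (w : Word) : quad w.cycMat.c₃.toVec = 1 := by
  obtain ⟨n, hn⟩ := exists_orbitVec_val_eq w
  rw [← quad_orbitVec w.val, hn, quad_smul, normSq_zeta_pow, one_mul]

lemma normSq_perp_c₃_le {w : Word} (hw : Complex.normSq w.corner.toComplex = 2 + √3)
    (y : Fin 3 → ℂ) :
    Complex.normSq (perp w.cycMat.c₃.toVec y) ≤ (1 + √3) ^ 2 * perpSq y := by
  have hcol : perpSq w.cycMat.c₃.toVec = (1 + √3) ^ 2 := by
    rw [perpSq_eq, quad_toVec_c₃]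
    exact (congrArg (fun t => (1 + √3) * (t - 1)) hw).trans (by ring)
  exact hcol ▸ normSq_perp_le w.cycMat.c₃.toVec y

lemma exists_overlap_j_pow_mul_le {w : Word} {y : Fin 3 → ℂ}
    (hw : Complex.normSq w.corner.toComplex = 2 + √3)
    (hq : 0 < quad y) (hy : 1.9 * quad y ≤ Complex.normSq (y 2))
    (hperp : 0.78865 * (1 + √3) ^ 2 * perpSq y ≤ Complex.normSq (perp w.cycMat.c₃.toVec y)) :
    ∃ m : ℕ, overlap (gj ^ m * w.val) y ≤ 0.99 * Complex.normSq (y 2) := by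
  obtain ⟨hlo, hhi⟩ := sqrt_three_bounds
  set p : ℂ := perp w.cycMat.c₃.toVec y / ((1 + √3 : ℝ) : ℂ) with hp
  have hnorm : Complex.normSq p * (1 + √3) ^ 2 = Complex.normSq (perp w.cycMat.c₃.toVec y) := by
    rw [hp, map_div₀, Complex.normSq_ofReal, sq]
    field_simp
  have hperp_le : Complex.normSq p ≤ perpSq y := by
    refine le_of_mul_le_mul_left ?_ (show 0 < (1 + √3) ^ 2 by positivity)
    linarith [normSq_perp_c₃_le hw y]
  have hle_perp : 0.78865 * perpSq y ≤ Complex.normSq p := by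
    refine le_of_mul_le_mul_left ?_ (show 0 < (1 + √3) ^ 2 by positivity)
    linarith
  rw [perpSq_eq] at hperp_le hle_perp
  obtain ⟨m, hm⟩ := exists_mul_norm_le_re
    ((starRingEnd ℂ) (w.corner.toComplex * (starRingEnd ℂ) (y 2) * p))
  refine ⟨m, ?_⟩
  have hre : ((starRingEnd ℂ) w.corner.toComplex * y 2 *
      (starRingEnd ℂ) ((starRingEnd ℂ) (ζ ^ m) * p)).re =
      (ζ ^ m * (starRingEnd ℂ) (w.corner.toComplex * (starRingEnd ℂ) (y 2) * p)).re := by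
    congr 1
    simp only [map_mul, Complex.conj_conj]; ring
  rw [overlap_j_pow_mul, ← hp, Complex.normSq_sub, hre, map_mul, map_mul, Complex.normSq_conj,
    Complex.normSq_conj, normSq_zeta_pow, one_mul, hw]
  rw [RCLike.norm_conj, norm_mul, norm_mul, RCLike.norm_conj,
    show ‖w.corner.toComplex‖ = √(2 + √3) from congrArg Real.sqrt hw] at hm
  simp only [Complex.normSq_eq_norm_sq] at hperp_le hle_perp hy ⊢
  have hY := norm_nonneg (y 2)
  refine normSq_estimate rfl hY ?_ ?_ (le_of_eq_of_le ?_ hm)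
  · exact le_of_sq_le_sq (by nlinarith) (norm_nonneg _)
  · exact le_of_sq_le_sq (by nlinarith) (by positivity)
  · linear_combination (-(‖y 2‖ * ‖p‖) / 2) * Real.sq_sqrt (show 0 ≤ 2 + √3 by positivity)

/-- The six forms correspond to the vertices of an octahedron in the complex projective line, and
`1.5773 < 1 + 1 / √3`. -/
lemma exists_octahedral_le (a c : ℂ) {M : ℝ} (hM : M = Complex.normSq a + Complex.normSq c) :
    1.5773 * M ≤ 2 * Complex.normSq a ∨ 1.5773 * M ≤ 2 * Complex.normSq c ∨
    1.5773 * M ≤ Complex.normSq (a + c) ∨ 1.5773 * M ≤ Complex.normSq (a - c) ∨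
    1.5773 * M ≤ Complex.normSq (a + Complex.I * c) ∨
    1.5773 * M ≤ Complex.normSq (a - Complex.I * c) := by
  have hsq : (Complex.normSq a - Complex.normSq c) ^ 2 +
      (Complex.normSq (a + c) - M) ^ 2 + (Complex.normSq (a + Complex.I * c) - M) ^ 2 = M ^ 2 := by
    simp only [hM, Complex.normSq_apply, Complex.add_re, Complex.add_im, Complex.mul_re,
      Complex.mul_im, Complex.I_re, Complex.I_im]
    ring
  have hadd : Complex.normSq (a + c) + Complex.normSq (a - c) = 2 * M := by
    simp only [hM, Complex.normSq_add, Complex.normSq_sub]; ring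
  have hadd' : Complex.normSq (a + Complex.I * c) + Complex.normSq (a - Complex.I * c) = 2 * M := by
    simp only [hM, Complex.normSq_add, Complex.normSq_sub, map_mul, Complex.normSq_I]; ring
  by_contra! h
  obtain ⟨h₁, h₂, h₃, h₄, h₅, h₆⟩ := h
  have := sq_lt_sq' (a := Complex.normSq a - Complex.normSq c) (b := 0.5773 * M)
    (by linarith) (by linarith)
  have := sq_lt_sq' (a := Complex.normSq (a + c) - M) (b := 0.5773 * M)
    (by linarith) (by linarith)
  have := sq_lt_sq' (a := Complex.normSq (a + Complex.I * c) - M) (b := 0.5773 * M)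
    (by linarith) (by linarith)
  nlinarith

/-- The exact coordinates `coord₀` and `coord₁`. -/
def CycVec.coords (p : CycVec) : CycInt × CycInt :=
  (⟨1, 0, -1, -1⟩ * p.x + ⟨0, -1, 1, 1⟩ * p.y, ⟨-1, 0, 1, 1⟩ * p.x)

lemma perp_toVec {p : CycVec} {α β : CycInt} (h : p.coords = (α, β)) (y : Fin 3 → ℂ) :
    perp p.toVec y = α.conj.toComplex * coord₀ y + β.conj.toComplex * coord₁ y := by
  obtain ⟨rfl, rfl⟩ := Prod.mk.inj h
  simp [perp, coord₀, coord₁, CycVec.toVec, toComplex_conj, toComplex_add, toComplex_mul]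

lemma normSq_perp_toVec {p : CycVec} {α ε : CycInt} (h : p.coords = (α, α * ε.conj))
    (hα : α.normRat = 2 ∧ α.normSqrt = 1) (y : Fin 3 → ℂ) : Complex.normSq (perp p.toVec y) =
      (1 + √3) ^ 2 / 2 * Complex.normSq (coord₀ y + ε.toComplex * coord₁ y) := by
  have hsq : √3 ^ 2 = 3 := Real.sq_sqrt (by norm_num)
  rw [perp_toVec h, toComplex_conj, toComplex_conj, toComplex_mul, toComplex_conj, map_mul,
    Complex.conj_conj, mul_assoc, ← mul_add, map_mul, Complex.normSq_conj, normSq_toComplex, hα.1,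
    hα.2]
  push_cast
  linear_combination (-Complex.normSq (coord₀ y + ε.toComplex * coord₁ y) / 2) * hsq

lemma toComplex_neg_one : toComplex ⟨-1, 0, 0, 0⟩ = -1 := by
  apply Complex.ext <;> simp [toComplex]

lemma toComplex_I : toComplex ⟨0, 0, 0, 1⟩ = Complex.I := by
  apply Complex.ext <;> simp [toComplex]

lemma toComplex_neg_I : toComplex ⟨0, 0, 0, -1⟩ = -Complex.I := by
  apply Complex.ext <;> simp [toComplex]

lemma exists_le_normSq_perp_toVec_c₃ (y : Fin 3 → ℂ) : ∃ w : Word, Letter.b ∉ w ∧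
    ((w ++ [Letter.b]).corner.normRat = 2 ∧ (w ++ [Letter.b]).corner.normSqrt = 1) ∧
    0.78865 * (1 + √3) ^ 2 * perpSq y ≤
      Complex.normSq (perp (w ++ [Letter.b]).cycMat.c₃.toVec y) := by
  have hconj : conj ⟨1, 2, 0, -1⟩ = ⟨1, 2, 0, -1⟩ ∧ conj 0 = 0 := by decide
  have hpos : 0 ≤ (1 + √3) ^ 2 / 2 := by positivity
  rcases exists_octahedral_le (coord₀ y) (coord₁ y) (M := perpSq y) rfl with h | h | h | h | h | h
  · refine ⟨[], by decide, by decide, ?_⟩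
    rw [perp_toVec (α := ⟨1, 2, 0, -1⟩) (β := 0) (by decide), hconj.1, hconj.2, toComplex_zero,
      zero_mul, add_zero, map_mul, toComplex_one_add_sqrt_three, Complex.normSq_ofReal]
    linarith [mul_le_mul_of_nonneg_left h hpos]
  · refine ⟨[.j, .u, .u, .v, .u, .u], by decide, by decide, ?_⟩
    rw [perp_toVec (α := 0) (β := ⟨1, 2, 0, -1⟩) (by decide), hconj.1, hconj.2, toComplex_zero,
      zero_mul, zero_add, map_mul, toComplex_one_add_sqrt_three, Complex.normSq_ofReal]
    linarith [mul_le_mul_of_nonneg_left h hpos]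
  · refine ⟨[.u, .u], by decide, by decide, ?_⟩
    rw [normSq_perp_toVec (α := ⟨1, 1, 0, -1⟩) (ε := 1) (by decide) (by decide), toComplex_one,
      one_mul]
    linarith [mul_le_mul_of_nonneg_left h hpos]
  · refine ⟨[.u, .v, .u, .u], by decide, by decide, ?_⟩
    rw [normSq_perp_toVec (α := ⟨0, 1, 1, 0⟩) (ε := ⟨-1, 0, 0, 0⟩) (by decide) (by decide),
      toComplex_neg_one, neg_one_mul, ← sub_eq_add_neg]
    linarith [mul_le_mul_of_nonneg_left h hpos]
  · refine ⟨[.u], by decide, by decide, ?_⟩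
    rw [normSq_perp_toVec (α := ⟨1, 1, 0, 0⟩) (ε := ⟨0, 0, 0, 1⟩) (by decide) (by decide),
      toComplex_I]
    linarith [mul_le_mul_of_nonneg_left h hpos]
  · refine ⟨[.v, .u, .u], by decide, by decide, ?_⟩
    rw [normSq_perp_toVec (α := ⟨1, 1, 0, -1⟩) (ε := ⟨0, 0, 0, -1⟩) (by decide) (by decide),
      toComplex_neg_I, neg_mul, ← sub_eq_add_neg]
    linarith [mul_le_mul_of_nonneg_left h hpos]

lemma exists_mem_neighbors_overlap_le {y : Fin 3 → ℂ} (hq : 0 < quad y)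
    (hy : 1.9 * quad y ≤ Complex.normSq (y 2)) :
    ∃ h ∈ Neighbors, overlap h y ≤ 0.99 * Complex.normSq (y 2) := by
  obtain ⟨w, hw, ⟨hrat, hsqrt⟩, hperp⟩ := exists_le_normSq_perp_toVec_c₃ y
  obtain ⟨m, hm⟩ := exists_overlap_j_pow_mul_le
    (by rw [normSq_toComplex, hrat, hsqrt]; norm_num) hq hy hperp
  refine ⟨gj ^ m * (w ++ [Letter.b]).val, ?_, hm⟩
  have hb : gj ^ m * (w ++ [Letter.b]).val = gj ^ m * w.val * gb * 1 := by
    rw [Word.val_append, mul_one, mul_assoc]; simp [Word.val, Letter.val]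
  rw [hb]
  exact mul_mem_neighbors (mul_mem (pow_mem j_mem_K m) (Word.val_mem_K hw)) b_mem_neighbors
    (one_mem K)

lemma exists_mem_neighbors_overlap_mul_le {g : CS} {y : Fin 3 → ℂ} (hq : 0 < quad y)
    (hg : 1.9 * quad y ≤ overlap g y) :
    ∃ t ∈ Neighbors, overlap (g * t) y ≤ 0.99 * overlap g y := by
  have hmove (h : CS) : overlap h y = overlap (g⁻¹ * h) ((rep g⁻¹).mulVec y) :=
    (overlap_mul _ _ _).symm
  rw [hmove g, inv_mul_cancel, overlap_one, ← quad_rep_mulVec g⁻¹] at hg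
  obtain ⟨t, ht, hle⟩ := exists_mem_neighbors_overlap_le (by rwa [quad_rep_mulVec]) hg
  refine ⟨t, ht, ?_⟩
  rwa [hmove, hmove g, inv_mul_cancel, overlap_one, inv_mul_cancel_left]

lemma exists_overlap_lt {y : Fin 3 → ℂ} (hq : 0 < quad y) : ∃ g, overlap g y < 1.9 * quad y := by
  by_contra! hfar
  have hdescent (n : ℕ) : ∃ g, overlap g y ≤ 0.99 ^ n * overlap 1 y := by
    induction n with
    | zero => exact ⟨1, by rw [pow_zero, one_mul]⟩
    | succ n ih =>
      obtain ⟨g, hg⟩ := ih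
      obtain ⟨t, -, ht⟩ := exists_mem_neighbors_overlap_mul_le hq (hfar g)
      exact ⟨g * t, by rw [pow_succ]; linarith⟩
  have hpos : 0 < overlap 1 y := by linarith [hfar 1]
  have hratio : 0 < 1.9 * quad y / overlap 1 y := by positivity
  obtain ⟨n, hn⟩ := exists_pow_lt_of_lt_one hratio (show (0.99 : ℝ) < 1 by norm_num)
  obtain ⟨g, hg⟩ := hdescent n
  exact ((hfar g).trans hg).not_gt ((lt_div_iff₀ hpos).1 hn)

/-! ### The ball model -/

/-- The coordinates `coord₀` and `coord₁`, normalized so that `quad x = ‖x 2‖² - ‖coordVec x‖²`. -/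
noncomputable def coordVec (x : Fin 3 → ℂ) : EuclideanSpace ℂ (Fin 2) :=
  ((√(1 + √3) : ℝ) : ℂ)⁻¹ • !₂[coord₀ x, coord₁ x]

lemma sqrt_one_add_sqrt_three_ne_zero : ((√(1 + √3) : ℝ) : ℂ) ≠ 0 := by
  exact_mod_cast (show (0 : ℝ) < √(1 + √3) by positivity).ne'

lemma coeff₀_ne_zero : toComplex ⟨0, -1, 1, 1⟩ ≠ 0 := fun h =>
  absurd (toComplex_injective (h.trans toComplex_zero.symm)) (by decide)

lemma coeff₁_ne_zero : toComplex ⟨-1, 0, 1, 1⟩ ≠ 0 := fun h =>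
  absurd (toComplex_injective (h.trans toComplex_zero.symm)) (by decide)

lemma coordVec_smul (c : ℂ) (x : Fin 3 → ℂ) : coordVec (c • x) = c • coordVec x := by
  ext i
  fin_cases i <;> simp [coordVec, coord₀, coord₁] <;> ring

lemma eq_of_coordVec_eq {x y : Fin 3 → ℂ} (hxy : coordVec x = coordVec y) (h₂ : x 2 = y 2) :
    x = y := by
  have hcoord (i : Fin 2) : !₂[coord₀ x, coord₁ x] i = !₂[coord₀ y, coord₁ y] i :=
    mul_left_cancel₀ (inv_ne_zero sqrt_one_add_sqrt_three_ne_zero)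
      (congrArg (fun v : EuclideanSpace ℂ (Fin 2) => v i) hxy)
  have h₀ : x 0 = y 0 := mul_left_cancel₀ coeff₁_ne_zero (hcoord 1)
  have h₁ : x 1 = y 1 := by
    refine mul_left_cancel₀ coeff₀_ne_zero
      (add_left_cancel (a := toComplex ⟨1, 0, -1, -1⟩ * x 0) ?_)
    exact (hcoord 0).trans (by simp [coord₀, h₀])
  ext i
  fin_cases i
  exacts [h₀, h₁, h₂]

lemma herm_eq_sub_inner (x y : Fin 3 → ℂ) :
    herm x y = (starRingEnd ℂ) (x 2) * y 2 - inner ℂ (coordVec x) (coordVec y) := by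
  have hsq : ((√(1 + √3) : ℝ) : ℂ) * ((√(1 + √3) : ℝ) : ℂ) = ((1 + √3 : ℝ) : ℂ) := by
    rw [← Complex.ofReal_mul, Real.mul_self_sqrt (by positivity)]
  rw [herm_eq, coordVec, coordVec, inner_smul_left, inner_smul_right, map_inv₀, Complex.conj_ofReal,
    ← mul_assoc, ← mul_inv, hsq, div_eq_inv_mul]
  simp [PiLp.inner_apply, Fin.sum_univ_two, perp, mul_comm]

lemma quad_eq_sub_norm_sq (x : Fin 3 → ℂ) : quad x = ‖x 2‖ ^ 2 - ‖coordVec x‖ ^ 2 := by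
  have h := herm_self x
  rw [herm_eq_sub_inner, inner_self_eq_norm_sq_to_K, ← Complex.normSq_eq_conj_mul_self,
    Complex.normSq_eq_norm_sq] at h
  have hcast : ((quad x : ℝ) : ℂ) = ((‖x 2‖ ^ 2 - ‖coordVec x‖ ^ 2 : ℝ) : ℂ) := by
    rw [← h]; push_cast; rfl
  exact_mod_cast hcast

lemma norm_mul_norm_sub_le_norm_herm (x y : Fin 3 → ℂ) :
    ‖x 2‖ * ‖y 2‖ - ‖coordVec x‖ * ‖coordVec y‖ ≤ ‖herm x y‖ := by
  have htri := norm_sub_norm_le ((starRingEnd ℂ) (x 2) * y 2) (inner ℂ (coordVec x) (coordVec y))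
  rw [norm_mul, RCLike.norm_conj, ← herm_eq_sub_inner] at htri
  linarith [norm_inner_le_norm (𝕜 := ℂ) (coordVec x) (coordVec y)]

-- If `B = cosh d` and `cosh r = √2`, this is the triangle inequality `d < 2r`, as `cosh 2r = 3`.
lemma lt_three_of_mul_sub_mul_le {B S Y σ H : ℝ} (hY : 0 ≤ Y) (hσ : 0 ≤ σ)
    (hBS : B ^ 2 - S ^ 2 = 1) (h : B * Y - S * σ ≤ H) (hYσ : Y ^ 2 < 2 * (Y ^ 2 - σ ^ 2))
    (hH : H ^ 2 < 2 * (Y ^ 2 - σ ^ 2)) : B < 3 := by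
  by_contra! hB
  have hsq : √2 ^ 2 = 2 := Real.sq_sqrt (by norm_num)
  have hS_le : S ≤ √2 * (B - 1) :=
    le_of_sq_le_sq (by nlinarith) (mul_nonneg (Real.sqrt_nonneg 2) (by linarith))
  have hσ_le : √2 * σ ≤ Y := le_of_sq_le_sq (by nlinarith) hY
  have hle : 2 * Y - √2 * σ ≤ H := by
    nlinarith [mul_le_mul_of_nonneg_right hS_le hσ,
      mul_nonneg (sub_nonneg.2 hB) (sub_nonneg.2 hσ_le)]
  nlinarith [pow_le_pow_left₀ (by linarith) hle 2, sq_nonneg (Y - √2 * σ)]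

lemma overlap_eq_norm_sq (g : CS) (y : Fin 3 → ℂ) : overlap g y = ‖herm (orbitVec g) y‖ ^ 2 :=
  Complex.normSq_eq_norm_sq _

lemma overlap_nonneg (g : CS) (y : Fin 3 → ℂ) : 0 ≤ overlap g y := Complex.normSq_nonneg _

lemma height_lt_nine {g : CS} {y : Fin 3 → ℂ} (h₁ : overlap 1 y < 2 * quad y)
    (hg : overlap g y < 2 * quad y) : height g < 9 := by
  have hquad := quad_orbitVec g
  rw [overlap_one, Complex.normSq_eq_norm_sq, quad_eq_sub_norm_sq] at h₁
  rw [overlap_eq_norm_sq, quad_eq_sub_norm_sq] at hg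
  rw [quad_eq_sub_norm_sq] at hquad
  have hlt := lt_three_of_mul_sub_mul_le (norm_nonneg _) (norm_nonneg _) hquad
    (norm_mul_norm_sub_le_norm_herm (orbitVec g) y) h₁ hg
  rw [height, Complex.normSq_eq_norm_sq, show (9 : ℝ) = 3 ^ 2 by norm_num]
  exact pow_lt_pow_left₀ hlt (norm_nonneg _) two_ne_zero

/-- The vector with last coordinate `1` over the point `w`. -/
noncomputable def ballVec (w : EuclideanSpace ℂ (Fin 2)) : Fin 3 → ℂ :=
  let x₀ := (√(1 + √3) : ℝ) * w 1 / toComplex ⟨-1, 0, 1, 1⟩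
  ![x₀, ((√(1 + √3) : ℝ) * w 0 - toComplex ⟨1, 0, -1, -1⟩ * x₀) / toComplex ⟨0, -1, 1, 1⟩, 1]

lemma ballVec_two (w : EuclideanSpace ℂ (Fin 2)) : ballVec w 2 = 1 := by simp [ballVec]

lemma coordVec_ballVec (w : EuclideanSpace ℂ (Fin 2)) : coordVec (ballVec w) = w := by
  have h₀ : coord₀ (ballVec w) = (√(1 + √3) : ℝ) * w 0 := by
    simp only [coord₀, ballVec, Matrix.cons_val_zero, Matrix.cons_val_one]
    rw [mul_div_cancel₀ _ coeff₀_ne_zero, add_sub_cancel]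
  have h₁ : coord₁ (ballVec w) = (√(1 + √3) : ℝ) * w 1 := by
    simp only [coord₁, ballVec, Matrix.cons_val_zero]
    rw [mul_div_cancel₀ _ coeff₁_ne_zero]
  ext i
  fin_cases i <;> simp [coordVec, h₀, h₁, inv_mul_cancel_left₀ sqrt_one_add_sqrt_three_ne_zero]

lemma quad_ballVec (w : EuclideanSpace ℂ (Fin 2)) : quad (ballVec w) = 1 - ‖w‖ ^ 2 := by
  rw [quad_eq_sub_norm_sq, ballVec_two, coordVec_ballVec, norm_one, one_pow]

lemma herm_ballVec (x : Fin 3 → ℂ) (w : EuclideanSpace ℂ (Fin 2)) :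
    herm x (ballVec w) = (starRingEnd ℂ) (x 2) - inner ℂ (coordVec x) w := by
  rw [herm_eq_sub_inner, ballVec_two, coordVec_ballVec, mul_one]

lemma exists_eq_smul_ballVec {y : Fin 3 → ℂ} (hy : 0 < quad y) :
    ∃ w, y = y 2 • ballVec w ∧ y 2 ≠ 0 := by
  have h₂ : y 2 ≠ 0 := by
    intro h
    rw [quad_eq_sub_norm_sq, h, norm_zero] at hy
    linarith [sq_nonneg ‖coordVec y‖]
  refine ⟨(y 2)⁻¹ • coordVec y, eq_of_coordVec_eq ?_ ?_, h₂⟩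
  · rw [coordVec_smul, coordVec_ballVec, smul_inv_smul₀ h₂]
  · rw [Pi.smul_apply, ballVec_two, smul_eq_mul, mul_one]

/-! ### The charts -/

/-- The hyperbolic ball of radius `arcosh √2` around the point `g e₃`. -/
def chart (g : CS) : Set (EuclideanSpace ℂ (Fin 2)) :=
  {w | overlap g (ballVec w) < 2 * quad (ballVec w)}

lemma mem_chart {g : CS} {w : EuclideanSpace ℂ (Fin 2)} :
    w ∈ chart g ↔ overlap g (ballVec w) < 2 * quad (ballVec w) := Iff.rfl

lemma chart_inter_nonempty {g h : CS} {y : Fin 3 → ℂ} (hg : overlap g y < 2 * quad y)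
    (hh : overlap h y < 2 * quad y) : (chart g ∩ chart h).Nonempty := by
  obtain ⟨w, hw, h₂⟩ := exists_eq_smul_ballVec (y := y) (by linarith [overlap_nonneg g y])
  have hpos : 0 < Complex.normSq (y 2) := Complex.normSq_pos.2 h₂
  rw [hw, overlap_smul, quad_smul, mul_left_comm] at hg hh
  exact ⟨w, lt_of_mul_lt_mul_left hg hpos.le, lt_of_mul_lt_mul_left hh hpos.le⟩

lemma convex_chart (g : CS) : Convex ℝ (chart g) := by
  have hconvex : ConvexOn ℝ Set.univ fun w => overlap g (ballVec w) + 2 * ‖w‖ ^ 2 := by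
    refine ConvexOn.add ?_
      ((convexOn_univ_norm.pow (fun _ _ => norm_nonneg _) 2).smul (by norm_num : (0 : ℝ) ≤ 2))
    have hdist := (convexOn_univ_dist ((starRingEnd ℂ) (orbitVec g 2))).comp_linearMap
      ((innerSL ℂ (coordVec (orbitVec g))).toLinearMap.restrictScalars ℝ)
    refine (hdist.pow (fun _ _ => dist_nonneg) 2).congr fun w _ => ?_
    rw [overlap_eq_norm_sq, herm_ballVec, ← dist_eq_norm, dist_comm]
    rfl
  have hchart : chart g = {w ∈ Set.univ | overlap g (ballVec w) + 2 * ‖w‖ ^ 2 < 2} := by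
    ext w
    simp only [mem_chart, quad_ballVec, Set.mem_univ, true_and, Set.mem_ofPred_eq, mul_sub, mul_one,
      lt_sub_iff_add_lt]
  exact hchart ▸ hconvex.convex_lt 2

lemma norm_lt_one_of_mem_chart {g : CS} {w : EuclideanSpace ℂ (Fin 2)} (hw : w ∈ chart g) :
    ‖w‖ < 1 := by
  rw [mem_chart, quad_ballVec] at hw
  nlinarith [overlap_nonneg g (ballVec w), norm_nonneg w]

lemma exists_mem_neighbors_overlap_mul_le_of_mem_chart {g : CS} {w : EuclideanSpace ℂ (Fin 2)}
    (hw : w ∈ chart g) :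
    ∃ t ∈ Neighbors, overlap (g * t) (ballVec w) ≤ 1.98 * quad (ballVec w) := by
  rw [mem_chart] at hw
  have hq : 0 < quad (ballVec w) := by linarith [overlap_nonneg g (ballVec w)]
  by_cases hnear : overlap g (ballVec w) ≤ 1.9 * quad (ballVec w)
  · exact ⟨1, mem_neighbors_of_mem_K (one_mem K), by rw [mul_one]; linarith⟩
  · obtain ⟨t, ht, hle⟩ := exists_mem_neighbors_overlap_mul_le hq (le_of_not_ge hnear)
    exact ⟨t, ht, by linarith⟩

lemma sq_lt_of_perturbation {R A B C S d X Y : ℝ} (hBS : B ^ 2 - S ^ 2 = 1)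
    (hA : A ^ 2 ≤ 1.98 * (1 - X ^ 2)) (hCA : C ≤ A + S * d) (hBA : B - S * X ≤ A) (hYX : Y ≤ X + d)
    (hB : 0 ≤ B) (hS : 0 ≤ S) (hX : 0 ≤ X) (hd : 0 ≤ d) (hY : 0 ≤ Y) (hC : 0 ≤ C) (hR : R < 1)
    (hXR : X ≤ R) (hdR : d < (1 - R) ^ 2 / 1000) : C ^ 2 < 2 * (1 - Y ^ 2) := by
  obtain ⟨η, rfl⟩ : ∃ η, R = 1 - η := ⟨1 - R, by ring⟩
  rw [sub_sub_cancel] at hdR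
  have hη : 0 < η := by linarith
  have hη_le : η ≤ 1 := by linarith
  have hSB : S ≤ B := le_of_sq_le_sq (by linarith) hB
  have hA_le : A ≤ 1.5 := le_of_sq_le_sq (by nlinarith only [hA, hX]) (by norm_num)
  have hSη : S * η ≤ 1.5 := by nlinarith only [hSB, hA_le, hBA, hXR, hS]
  have hd_le : d ≤ η / 1000 := by nlinarith only [hdR, hη, hη_le]
  have hSd : S * d ≤ 0.0015 * η := by
    nlinarith only [mul_le_mul_of_nonneg_left hdR.le hS, hSη, hη]
  have hSd_nonneg : 0 ≤ S * d := mul_nonneg hS hd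
  have hC_sq : C ^ 2 ≤ (A + S * d) ^ 2 := pow_le_pow_left₀ hC hCA 2
  have hX_sq : η ≤ 1 - X ^ 2 := by nlinarith only [hXR, hX, hη, hη_le]
  have hXd : X * d ≤ d := mul_le_of_le_one_left hd (by linarith)
  have hY_sq : Y ^ 2 ≤ X ^ 2 + 2 * d + d ^ 2 := by nlinarith only [pow_le_pow_left₀ hY hYX 2, hXd]
  have hd_sq : d ^ 2 ≤ d := by nlinarith only [hd_le, hη_le, hd]
  have hASd : A * (S * d) ≤ 1.5 * (0.0015 * η) := mul_le_mul hA_le hSd hSd_nonneg (by norm_num)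
  have hSd_sq : (S * d) ^ 2 ≤ 0.0015 * η := by nlinarith only [hSd, hSd_nonneg, hη_le]
  nlinarith only [hC_sq, hASd, hSd_sq, hA, hY_sq, hd_sq, hd_le, hX_sq, hη]

lemma isLebesgueNumber_chart {R : ℝ} (hR : R < 1) :
    IsLebesgueNumber chart Neighbors R ((1 - R) ^ 2 / 1000) := by
  intro g x hx hxg
  obtain ⟨t, ht, hle⟩ := exists_mem_neighbors_overlap_mul_le_of_mem_chart hxg
  refine ⟨t, ht, fun y _ hyx => ?_⟩
  set z := orbitVec (g * t) with hz
  have hquad : ‖z 2‖ ^ 2 - ‖coordVec z‖ ^ 2 = 1 := by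
    rw [← quad_eq_sub_norm_sq, quad_orbitVec]
  have hlow : ‖z 2‖ - ‖coordVec z‖ * ‖x‖ ≤ ‖herm z (ballVec x)‖ := by
    simpa only [ballVec_two, coordVec_ballVec, norm_one, mul_one] using
      norm_mul_norm_sub_le_norm_herm z (ballVec x)
  have hstep : ‖herm z (ballVec y)‖ ≤ ‖herm z (ballVec x)‖ + ‖coordVec z‖ * ‖y - x‖ := by
    have heq : herm z (ballVec y) = herm z (ballVec x) - inner ℂ (coordVec z) (y - x) := by
      rw [herm_ballVec, herm_ballVec, inner_sub_right]; ring
    rw [heq]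
    exact (norm_sub_le _ _).trans (by gcongr; exact norm_inner_le_norm _ _)
  have hyx_norm : ‖y‖ ≤ ‖x‖ + ‖y - x‖ := by simpa using norm_add_le x (y - x)
  rw [overlap_eq_norm_sq, quad_ballVec] at hle
  rw [mem_chart, overlap_eq_norm_sq, quad_ballVec]
  exact sq_lt_of_perturbation hquad hle hstep hlow hyx_norm (norm_nonneg _) (norm_nonneg _)
    (norm_nonneg _) (norm_nonneg _) (norm_nonneg _) (norm_nonneg _) hR hx hyx

/-! ### Intersecting charts -/

lemma height_of_mem_K {k : CS} (hk : k ∈ K) : height k = 1 := by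
  obtain ⟨n, -, -, -, -, h⟩ := rep_apply_of_mem_K hk
  rw [height, h, normSq_zeta_pow]

lemma overlap_single (g : CS) : overlap g (Pi.single 2 1) = height g := by
  rw [overlap, herm_eq]
  simp [perp, coord₀, coord₁, orbitVec, height]

lemma quad_single : quad (Pi.single 2 1) = 1 := by simp [quad, perpSq, coord₀, coord₁]

lemma height_b : height gb = 2 + √3 := by
  have hcorner : (Word.corner [.b]).normRat = 2 ∧ (Word.corner [.b]).normSqrt = 1 := by decide
  have hb : gb = Word.val [.b] := by simp [Word.val, Letter.val]
  rw [hb, height_val, hcorner.1, hcorner.2]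
  norm_num

lemma exists_overlap_b_lt : ∃ y, overlap 1 y < 2 * quad y ∧ overlap gb y < 2 * quad y := by
  set z := orbitVec gb with hz
  have hz_norm : (starRingEnd ℂ) (z 2) * z 2 = ((2 + √3 : ℝ) : ℂ) := by
    rw [← Complex.normSq_eq_conj_mul_self, ← height_b]; rfl
  have hzz : herm z z = 1 := by rw [herm_self, quad_orbitVec, Complex.ofReal_one]
  have hze : herm z (Pi.single 2 1) = (starRingEnd ℂ) (z 2) := by
    rw [herm_eq]; simp [perp, coord₀, coord₁]
  have hez : herm (Pi.single 2 1) z = z 2 := by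
    rw [herm_eq]; simp [perp, coord₀, coord₁]
  have hee : herm (Pi.single 2 1) (Pi.single 2 1) = 1 := by
    rw [herm_self, quad_single, Complex.ofReal_one]
  set y : Fin 3 → ℂ := (2 : ℂ) • Pi.single 2 1 + (starRingEnd ℂ) (z 2) • z with hy
  have hquad : quad y = 4 + 5 * (2 + √3) := by
    have h := herm_self y
    simp only [hy, herm_add_left, herm_add_right, herm_smul_left, herm_smul_right, hzz, hze, hez,
      hee, map_ofNat, Complex.conj_conj] at h
    have hcast : ((quad y : ℝ) : ℂ) = ((4 + 5 * (2 + √3) : ℝ) : ℂ) := by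
      rw [← h]; push_cast at hz_norm ⊢; linear_combination 5 * hz_norm
    exact_mod_cast hcast
  have hy₂ : y 2 = ((4 + √3 : ℝ) : ℂ) := by
    simp only [hy, Pi.add_apply, Pi.smul_apply, smul_eq_mul, hz_norm, Pi.single_eq_same]
    push_cast; ring
  have hzy : herm z y = ((3 : ℝ) : ℂ) * (starRingEnd ℂ) (z 2) := by
    rw [hy, herm_add_right, herm_smul_right, herm_smul_right, hzz, hze]; push_cast; ring
  have hsq : √3 ^ 2 = 3 := Real.sq_sqrt (by norm_num)
  obtain ⟨hlo, hhi⟩ := sqrt_three_bounds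
  refine ⟨y, ?_, ?_⟩
  · rw [overlap_one, hy₂, hquad, Complex.normSq_ofReal]
    nlinarith
  · have hheight : Complex.normSq (z 2) = 2 + √3 := height_b
    rw [overlap, ← hz, hzy, hquad, map_mul, Complex.normSq_conj, hheight, Complex.normSq_ofReal]
    nlinarith

lemma Letter.val_mem_neighbors (s : Letter) : s.val ∈ Neighbors := by
  cases s
  exacts [mem_neighbors_of_mem_K u_mem_K, mem_neighbors_of_mem_K v_mem_K, b_mem_neighbors,
    mem_neighbors_of_mem_K j_mem_K]

lemma Letter.exists_overlap_val_lt (s : Letter) :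
    ∃ y, overlap 1 y < 2 * quad y ∧ overlap s.val y < 2 * quad y := by
  have hK {k : CS} (hk : k ∈ K) : overlap k (Pi.single 2 1) < 2 * quad (Pi.single 2 1) := by
    rw [overlap_single, quad_single, height_of_mem_K hk]; norm_num
  cases s
  exacts [⟨_, hK (one_mem K), hK u_mem_K⟩, ⟨_, hK (one_mem K), hK v_mem_K⟩, exists_overlap_b_lt,
    ⟨_, hK (one_mem K), hK j_mem_K⟩]

lemma isChartFamily_chart : IsChartFamily chart Neighbors where
  zero_mem := by simp [mem_chart, overlap_one, ballVec_two, quad_ballVec]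
  one_mem := mem_neighbors_of_mem_K (one_mem K)
  inv_mem _ := inv_mem_neighbors
  trans x g h k hg _ hk hgh hhk := by
    have hmul : g⁻¹ * k = g⁻¹ * h * (h⁻¹ * k) := by group
    rw [hmul]
    refine mul_mem_neighbors_of_height_lt hgh hhk (hmul ▸ ?_)
    refine height_lt_nine (y := (rep g⁻¹).mulVec (ballVec x)) ?_ ?_
    · rw [← inv_mul_cancel g, overlap_mul, quad_rep_mulVec]; exact hg
    · rw [overlap_mul, quad_rep_mulVec]; exact hk
  convex := convex_chart
  norm_lt_one _ _ := norm_lt_one_of_mem_chart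
  exists_isLebesgueNumber R hR :=
    ⟨_, div_pos (pow_pos (sub_pos.2 hR) 2) (by norm_num), isLebesgueNumber_chart hR⟩

lemma chart_induction {P : CS → Prop} (one : P 1)
    (mul : ∀ g, ∀ t ∈ Neighbors, P g → (chart g ∩ chart (g * t)).Nonempty → P (g * t)) (g : CS) :
    P g := by
  obtain ⟨w, rfl⟩ := exists_word_val_eq g
  induction w using List.reverseRecOn with
  | nil => exact one
  | append_singleton w s ih =>
    have hws : Word.val (w ++ [s]) = Word.val w * s.val := by
      rw [Word.val_append]; simp [Word.val]
    obtain ⟨y, h₁, hs⟩ := s.exists_overlap_val_lt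
    rw [hws]
    refine mul _ _ s.val_mem_neighbors ih
      (chart_inter_nonempty (y := (rep (Word.val w)).mulVec y) ?_ ?_)
    · rw [← mul_one (Word.val w), mul_one (Word.val w), quad_rep_mulVec]
      simpa only [mul_one] using (overlap_mul (Word.val w) 1 y).trans_lt h₁
    · rw [overlap_mul, quad_rep_mulVec]; exact hs

theorem mem_neighbors_of_overlap_lt {g : CS} {y : Fin 3 → ℂ} (h₁ : overlap 1 y < 2 * quad y)
    (hg : overlap g y < 2 * quad y) : g ∈ Neighbors :=
  isChartFamily_chart.mem_of_inter_nonempty (fun _ => chart_induction)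
    (chart_inter_nonempty hg h₁)

/-! ### Faithfulness of the projective representation -/

lemma height_c : height gc = 4 + 2 * √3 := by
  have hcorner : (Word.corner [.b, .u, .u, .b]).normRat = 4 ∧
      (Word.corner [.b, .u, .u, .b]).normSqrt = 2 := by decide
  have hc : gc = Word.val [.b, .u, .u, .b] := by
    simp [gc, u_inv, Word.val, Letter.val, mul_assoc]
  rw [hc, height_val, hcorner.1, hcorner.2]
  norm_num

lemma mem_K_of_height_eq_one {g : CS} (hg : g ∈ Neighbors) (h : height g = 1) : g ∈ K := by
  obtain hg | ⟨d, rfl | rfl, k, hk, k', hk', rfl⟩ := mem_neighbors.1 hg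
  · exact hg
  all_goals
    rw [height_mul_of_mem_K_right hk', height_mul_of_mem_K_left hk] at h
    simp only [height_b, height_c] at h
    linarith [Real.sqrt_nonneg 3]

lemma eq_zero_of_kWord_cycMat_eq_one {i c a : ℕ} (hi : i < 6) (hc : c < 12) (ha : a < 4)
    (h : (kWord (i, c, a)).cycMat = 1) : (i, c, a) = (0, 0, 0) := by
  have hall : ∀ t : Fin 6 × Fin 12 × Fin 4,
      (kWord (t.1, t.2.1, t.2.2)).cycMat = 1 → t = (0, 0, 0) := by
    decide +kernel
  have h₀ := hall (⟨i, hi⟩, ⟨c, hc⟩, ⟨a, ha⟩) h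
  simpa [Prod.ext_iff, Fin.ext_iff] using h₀

theorem projRep_injective : Function.Injective projRep := by
  rw [injective_iff_map_eq_one]
  intro g hg
  have hrep {w : Word} (hw : w.val = g) : ∃ n : ℕ, w.matrix = ζ ^ n • 1 := by
    rw [← Word.matrix_nil]
    refine Word.exists_matrix_eq_of_proj_eq ?_
    rw [← projRep_val, ← projRep_val, hw, hg, Word.val_nil, map_one]
  have hheight : height g = 1 := by
    obtain ⟨w, rfl⟩ := exists_word_val_eq g
    obtain ⟨m, hm⟩ := exists_rep_val_eq w
    obtain ⟨n, hn⟩ := hrep rfl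
    simp [height, hm, hn, normSq_zeta]
  have hK : g ∈ K := by
    refine mem_K_of_height_eq_one (mem_neighbors_of_overlap_lt (y := Pi.single 2 1) ?_ ?_) hheight
    · rw [overlap_single, quad_single, height_of_mem_K (one_mem K)]; norm_num
    · rw [overlap_single, quad_single, hheight]; norm_num
  obtain ⟨i, hi, c, hc, a, ha, rfl⟩ := exists_kWord_val_eq hK
  obtain ⟨n, hn⟩ := hrep rfl
  have hzeta : ζ ^ n = 1 := by
    have h₂₂ := (matrix_apply_of_b_notMem (b_notMem_kWord (i, c, a))).2.2.2.2
    simpa [hn] using h₂₂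
  rw [hzeta, one_smul, Word.matrix, ← CycMat.toMatrix_one] at hn
  rw [eq_zero_of_kWord_cycMat_eq_one hi hc ha (CycMat.toMatrix_injective hn)]
  simp [kWord, kRepWord]

lemma Word.val_eq_of_cycMat {w w' : Word} (n : ℕ) (h : w.cycMat = .scalar n * w'.cycMat) :
    w.val = w'.val :=
  projRep_injective (by rw [projRep_val, projRep_val, Word.proj_eq_of_cycMat n h])

/-! ### Isometries of finite order -/

section FiniteOrder

variable {V : Type*} [AddCommGroup V] [Module ℂ V] {A : Module.End ℂ V} {n : ℕ}

/-- The sum of the powers of `A`; if `A ^ n = 1`, this is `n` times the projection to the fixed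
space of `A`. -/
def powSum (A : Module.End ℂ V) (n : ℕ) : Module.End ℂ V := ∑ i ∈ Finset.range n, A ^ i

lemma mul_powSum (hA : A ^ n = 1) : A * powSum A n = powSum A n := by
  have h := mul_geom_sum A n
  rwa [hA, sub_self, sub_mul, one_mul, sub_eq_zero] at h

lemma sum_powSum {ω : ℂ} (hω : IsPrimitiveRoot ω n) (hn : 0 < n) :
    ∑ k ∈ Finset.range n, powSum (ω ^ k • A) n = (n : ℂ) • 1 := by
  simp only [powSum, smul_pow, ← pow_mul]
  rw [Finset.sum_comm, Finset.sum_eq_single_of_mem 0 (Finset.mem_range.2 hn)]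
  · simp [← Nat.cast_smul_eq_nsmul ℂ]
  · intro i hi hi₀
    have hgeom : ∑ k ∈ Finset.range n, ω ^ (k * i) = 0 := by
      have h := mul_geom_sum (ω ^ i) n
      rw [← pow_mul, mul_comm i n, pow_mul, hω.pow_eq_one, one_pow, sub_self] at h
      simp only [mul_comm _ i, pow_mul]
      exact (mul_eq_zero.1 h).resolve_left
        (sub_ne_zero.2 (hω.pow_ne_one_of_pos_of_lt hi₀ (Finset.mem_range.1 hi)))
    rw [← Finset.sum_smul, hgeom, zero_smul]

variable {B : V →ₗ⋆[ℂ] V →ₗ[ℂ] ℂ}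

lemma form_powSum (hA : A ^ n = 1) (hB : ∀ x y, B (A x) (A y) = B x y) (x : V) :
    B (powSum A n x) (powSum A n x) = n * B x (powSum A n x) := by
  have hfix : A (powSum A n x) = powSum A n x := LinearMap.congr_fun (mul_powSum hA) x
  have hpow (i : ℕ) : B ((A ^ i) x) (powSum A n x) = B x (powSum A n x) := by
    induction i with
    | zero => rfl
    | succ i ih =>
      conv_lhs => rw [← hfix]
      rw [pow_succ', Module.End.mul_apply, hB, ih]
  conv_lhs => enter [1, 2]; rw [powSum]
  simp [LinearMap.sum_apply, hpow]

theorem exists_positive_eigenvector (hn : 0 < n) (hA : A ^ n = 1)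
    (hB : ∀ x y, B (A x) (A y) = B x y) {x : V} (hx : 0 < (B x x).re) :
    ∃ (c : ℂ) (y : V), A y = c • y ∧ 0 < (B y y).re := by
  have hω := Complex.isPrimitiveRoot_exp n hn.ne'
  set ω := Complex.exp (2 * Real.pi * Complex.I / n)
  have hω_norm : (starRingEnd ℂ) ω * ω = 1 := by
    rw [← Complex.normSq_eq_conj_mul_self, Complex.normSq_eq_norm_sq,
      Complex.norm_eq_one_of_pow_eq_one hω.pow_eq_one hn.ne', one_pow, Complex.ofReal_one]
  have hA_pow (k : ℕ) : (ω ^ k • A) ^ n = 1 := by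
    rw [smul_pow, hA, ← pow_mul, mul_comm k n, pow_mul, hω.pow_eq_one, one_pow, one_smul]
  have hB_pow (k : ℕ) (x y : V) : B ((ω ^ k • A) x) ((ω ^ k • A) y) = B x y := by
    simp only [LinearMap.smul_apply, map_smulₛₗ, smul_eq_mul, hB, ← mul_assoc, map_pow,
      RingHom.id_apply]
    rw [mul_comm (ω ^ k), ← mul_pow, hω_norm, one_pow, one_mul]
  have hsum : ∑ k ∈ Finset.range n,
      B (powSum (ω ^ k • A) n x) (powSum (ω ^ k • A) n x) = n * n * B x x := by
    simp only [form_powSum (hA_pow _) (hB_pow _)]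
    rw [← Finset.mul_sum, ← map_sum, ← LinearMap.sum_apply, sum_powSum hω hn]
    simp [mul_assoc]
  obtain ⟨k, -, hk⟩ : ∃ k ∈ Finset.range n,
      0 < (B (powSum (ω ^ k • A) n x) (powSum (ω ^ k • A) n x)).re := by
    apply Finset.exists_lt_of_sum_lt
    rw [Finset.sum_const_zero, ← Complex.re_sum, hsum, ← Nat.cast_mul, ← Complex.ofReal_natCast,
      Complex.re_ofReal_mul]
    positivity
  refine ⟨(ω ^ k)⁻¹, _, ?_, hk⟩
  rw [eq_inv_smul_iff₀ (pow_ne_zero k (hω.ne_zero hn.ne'))]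
  exact LinearMap.congr_fun (mul_powSum (hA_pow k)) x

end FiniteOrder

/-! ### Elements of finite order -/

lemma exists_rep_one_eq : ∃ n : ℕ, rep 1 = ζ ^ n • 1 := by
  simpa using exists_rep_val_eq []

lemma exists_rep_pow_eq (x : CS) (n : ℕ) : ∃ m : ℕ, rep (x ^ n) = ζ ^ m • rep x ^ n := by
  induction n with
  | zero => simpa using exists_rep_one_eq
  | succ n ih =>
    obtain ⟨a, ha⟩ := ih
    obtain ⟨b, hb⟩ := exists_rep_mul_eq (x ^ n) x
    exact ⟨b + a, by rw [pow_succ, hb, ha, smul_mul_assoc, smul_smul, ← pow_add, ← pow_succ]⟩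

lemma exists_smul_rep_pow_eq_one {x : CS} {n : ℕ} (hn : 0 < n) (hx : x ^ n = 1) :
    ∃ μ : ℂ, μ * (starRingEnd ℂ) μ = 1 ∧ (μ • rep x) ^ n = 1 := by
  obtain ⟨l, hl⟩ := exists_rep_one_eq
  obtain ⟨m, hm⟩ := exists_rep_pow_eq x n
  have hl₀ := pow_ne_zero l zeta_ne_zero
  obtain ⟨μ, hμ⟩ := IsAlgClosed.exists_pow_nat_eq (ζ ^ m / ζ ^ l) hn
  have hnorm : Complex.normSq μ = 1 := by
    refine (pow_eq_one_iff_of_nonneg (Complex.normSq_nonneg μ) hn.ne').1 ?_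
    rw [← map_pow, hμ, map_div₀, normSq_zeta_pow, normSq_zeta_pow, div_one]
  refine ⟨μ, by rw [Complex.mul_conj, hnorm, Complex.ofReal_one], ?_⟩
  rw [smul_pow, hμ, div_eq_inv_mul, ← smul_smul, ← hm, hx, hl, inv_smul_smul₀ hl₀]

/-- `herm` as a sesquilinear map. -/
noncomputable def hermForm : (Fin 3 → ℂ) →ₗ⋆[ℂ] (Fin 3 → ℂ) →ₗ[ℂ] ℂ :=
  LinearMap.mk₂'ₛₗ _ _ herm herm_add_left herm_smul_left herm_add_right herm_smul_right

lemma hermForm_apply (x y : Fin 3 → ℂ) : hermForm x y = herm x y := rfl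

lemma exists_rep_mulVec_eq_smul {x : CS} (hx : IsOfFinOrder x) :
    ∃ (c : ℂ) (y : Fin 3 → ℂ), (rep x).mulVec y = c • y ∧ 0 < quad y := by
  obtain ⟨n, hn, hxn⟩ := isOfFinOrder_iff_pow_eq_one.1 hx
  obtain ⟨μ, hμ, hpow⟩ := exists_smul_rep_pow_eq_one hn hxn
  have hμ₀ : μ ≠ 0 := by rintro rfl; simp at hμ
  obtain ⟨c, y, hcy, hy⟩ := exists_positive_eigenvector (A := (μ • rep x).toLin')
    (B := hermForm) hn (by rw [← Matrix.toLin'_pow, hpow, Matrix.toLin'_one]; rfl)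
    (fun a b => by
      simp only [Matrix.toLin'_apply, Matrix.smul_mulVec, hermForm_apply, herm_smul_left,
        herm_smul_right, herm_rep_mulVec, ← mul_assoc, hμ, one_mul])
    (x := Pi.single 2 1) (by rw [hermForm_apply, herm_self, quad_single]; norm_num)
  refine ⟨μ⁻¹ * c, y, ?_, by rwa [hermForm_apply, herm_self, Complex.ofReal_re] at hy⟩
  rw [← smul_smul, ← hcy, Matrix.toLin'_apply, Matrix.smul_mulVec, inv_smul_smul₀ hμ₀]

lemma overlap_pow_mul {x : CS} {c : ℂ} {y : Fin 3 → ℂ} (hxy : (rep x).mulVec y = c • y)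
    (hy : 0 < quad y) (k : ℕ) (h : CS) : overlap (x ^ k * h) y = overlap h y := by
  have hc : Complex.normSq c = 1 := by
    have hquad := quad_rep_mulVec x y
    rw [hxy, quad_smul] at hquad
    exact mul_right_cancel₀ hy.ne' (by rw [hquad, one_mul])
  have hmul (h : CS) : overlap (x * h) y = overlap h y := by
    rw [← overlap_mul x h y, hxy, overlap_smul, hc, one_mul]
  induction k generalizing h with
  | zero => rw [pow_zero, one_mul]
  | succ k ih => rw [pow_succ, mul_assoc, ih, hmul]

theorem exists_conj_mem_neighbors {x : CS} (hx : IsOfFinOrder x) :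
    ∃ g, g⁻¹ * x * g ∈ Neighbors ∧ ∀ k : ℕ, height ((g⁻¹ * x * g) ^ k) < 9 := by
  obtain ⟨c, y, hxy, hy⟩ := exists_rep_mulVec_eq_smul hx
  obtain ⟨g, hg⟩ := exists_overlap_lt hy
  have hk (k : ℕ) : overlap ((g⁻¹ * x * g) ^ k) ((rep g⁻¹).mulVec y) <
      2 * quad ((rep g⁻¹).mulVec y) := by
    have hconj : (g⁻¹ * x * g) ^ k = g⁻¹ * (x ^ k * g) := by
      simpa only [inv_inv, mul_assoc] using conj_pow (i := k) (a := g⁻¹) (b := x)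
    rw [hconj, overlap_mul, quad_rep_mulVec, overlap_pow_mul hxy hy]
    linarith
  have h₀ := hk 0
  rw [pow_zero] at h₀
  exact ⟨g, mem_neighbors_of_overlap_lt h₀ (by simpa only [pow_one] using hk 1),
    fun k => height_lt_nine h₀ (hk k)⟩

/-! ### The coset table of `Π` -/

/-- Codes for the cosets of `Π`: `(r, i, c, a)` stands for `Π yᵣ xᵢ jᶜ vᵃ` with
`y₀ = 1`, `y₁ = b`, `y₂ = u²b`. -/
abbrev Coset : Type := Fin 3 × Fin 6 × Fin 12 × Fin 4

/-- A word for the representative `yᵣ`. -/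
def rowWord : Fin 3 → Word
  | 0 => []
  | 1 => [.b]
  | 2 => [.u, .u, .b]

/-- The part `(i, c, a)` of a coset, encoding an element of `K`. -/
def Coset.kIndex (p : Coset) : ℕ × ℕ × ℕ := (p.2.1, p.2.2.1, p.2.2.2)

/-- The representative of a coset. -/
def Coset.word (p : Coset) : Word := rowWord p.1 ++ kWord (Coset.kIndex p)

/-- The row `(r, i)` lists for each `c` the entry `(r', i', c', a', x, y)`: the generator `b` maps
the coset `(r, i, c, 0)` to `(r', i', c', a')`, and the element of `Π` by which the representatives
differ has class `(x, y)` in `ℤ²`. -/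
def bTable : List (List (List (Fin 3 × Fin 6 × Fin 12 × Fin 4 × ℤ × ℤ))) :=
  [[[(1, 0, 0, 0, 0, 0), (2, 0, 9, 1, 4, -2), (0, 2, 6, 3, 7, -4), (2, 5, 11, 2, 3, 0),
    (1, 0, 4, 0, 3, 2), (2, 0, 1, 1, -2, 3), (0, 2, 10, 3, -2, 3), (2, 5, 3, 2, -6, 4),
    (1, 0, 8, 0, -9, 7), (2, 0, 5, 1, -5, 2), (0, 2, 2, 3, -5, 1), (2, 5, 7, 2, 0, -1)],
   [(1, 0, 2, 1, 3, -1), (2, 5, 5, 2, 3, -2), (0, 2, 8, 2, 7, -3), (2, 0, 7, 3, 4, -1),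
    (1, 0, 6, 1, 0, 4), (2, 5, 9, 2, 0, 2), (0, 2, 0, 2, -5, 4), (2, 0, 11, 3, -5, 4),
    (1, 0, 10, 1, -9, 6), (2, 5, 1, 2, -6, 3), (0, 2, 4, 2, -2, -1), (2, 0, 3, 3, -2, 0)],
   [(2, 0, 0, 0, 0, 0), (0, 1, 5, 3, 5, -4), (2, 5, 8, 2, 5, -2), (0, 0, 9, 2, 5, -1),
    (2, 0, 4, 0, 0, 1), (0, 1, 9, 3, 2, 1), (2, 5, 0, 2, -4, 4), (0, 0, 1, 2, -7, 4),
    (2, 0, 8, 0, -3, 2), (0, 1, 1, 3, -7, 3), (2, 5, 4, 2, -4, 1), (0, 0, 5, 2, 2, -3)],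
   [(1, 5, 1, 2, -1, 2), (0, 5, 7, 2, 3, -2), (2, 3, 10, 2, 1, 0), (2, 4, 11, 1, 2, 0),
    (1, 5, 5, 2, -1, 3), (0, 5, 11, 2, 0, 1), (2, 3, 2, 2, -2, 2), (2, 4, 3, 1, -4, 3),
    (1, 5, 9, 2, -4, 4), (0, 5, 3, 2, -3, 1), (2, 3, 6, 2, -2, 1), (2, 4, 7, 1, -1, 0)],
   [(1, 3, 0, 3, -3, 2), (1, 2, 4, 2, 1, 1), (1, 1, 10, 1, -2, 2), (1, 4, 3, 3, 3, 0),
    (1, 3, 4, 3, 3, 1), (1, 2, 8, 2, -2, 4), (1, 1, 2, 1, 1, 2), (1, 4, 7, 3, -3, 5),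
    (1, 3, 8, 3, -6, 6), (1, 2, 0, 2, -5, 4), (1, 1, 6, 1, -5, 5), (1, 4, 11, 3, -6, 4)],
   [(0, 3, 4, 3, 0, -1), (1, 5, 4, 2, -1, 2), (2, 2, 6, 0, 2, -1), (2, 3, 7, 3, 1, 0),
    (0, 3, 8, 3, 3, -1), (1, 5, 8, 2, -1, 3), (2, 2, 10, 0, -1, 2), (2, 3, 11, 3, -2, 2),
    (0, 3, 0, 3, -3, 2), (1, 5, 0, 2, -4, 4), (2, 2, 2, 0, -4, 2), (2, 3, 3, 3, -2, 1)]],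
   [[(2, 0, 10, 0, 4, -2), (0, 0, 11, 1, 0, 0), (2, 5, 6, 0, 0, -1), (0, 1, 11, 0, -3, 1),
    (2, 0, 2, 0, -5, 1), (0, 0, 3, 1, -3, -2), (2, 5, 10, 0, 0, -2), (0, 1, 3, 0, 0, -4),
    (2, 0, 6, 0, 4, -5), (0, 0, 7, 1, 9, -7), (2, 5, 2, 0, 3, -3), (0, 1, 7, 0, 9, -6)],
   [(1, 2, 3, 3, 3, -1), (2, 1, 11, 1, 0, 0), (1, 4, 8, 1, -4, 3), (0, 4, 5, 0, -1, -2),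
    (1, 2, 7, 3, -3, 2), (2, 1, 3, 1, -3, -1), (1, 4, 0, 1, -1, -1), (0, 4, 9, 0, 5, -5),
    (1, 2, 11, 3, 0, -1), (2, 1, 7, 1, 6, -5), (1, 4, 4, 1, 5, -2), (0, 4, 1, 0, 2, -2)],
   [(1, 1, 7, 2, 0, 1), (0, 4, 8, 3, 5, -4), (1, 3, 7, 3, -1, 2), (2, 1, 0, 1, -3, 1),
    (1, 1, 11, 2, -3, 1), (0, 4, 0, 3, -1, -1), (1, 3, 11, 3, -4, 1), (2, 1, 4, 1, 0, -3),
    (1, 1, 3, 2, 3, -2), (0, 4, 4, 3, 2, -4), (1, 3, 3, 3, 5, -3), (2, 1, 8, 1, 6, -4)],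
   [(1, 2, 5, 2, 4, -1), (0, 4, 11, 2, 3, -2), (1, 4, 10, 2, -3, 2), (2, 1, 9, 1, 1, -1),
    (1, 2, 9, 2, -5, 3), (0, 4, 3, 2, -3, -1), (1, 4, 2, 2, 0, -1), (2, 1, 1, 1, -2, -1),
    (1, 2, 1, 2, 1, -2), (0, 4, 7, 2, 6, -6), (1, 4, 6, 2, 3, -1), (2, 1, 5, 1, 4, -4)],
   [(0, 4, 10, 2, 6, -4), (1, 1, 5, 0, 1, 1), (2, 1, 2, 2, -2, 0), (1, 3, 5, 3, 0, 1),
    (0, 4, 2, 2, -3, 0), (1, 1, 9, 0, -5, 2), (2, 1, 6, 2, 1, -3), (1, 3, 9, 3, -3, 1),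
    (0, 4, 6, 2, 3, -5), (1, 1, 1, 0, 4, -3), (2, 1, 10, 2, 4, -3), (1, 3, 1, 3, 3, -2)],
   [(2, 2, 3, 1, 0, -2), (0, 5, 8, 3, 4, -4), (0, 3, 11, 3, 1, -2), (2, 4, 6, 1, 0, -2),
    (2, 2, 7, 1, 3, -3), (0, 5, 0, 3, 1, -2), (0, 3, 3, 3, 1, -3), (2, 4, 10, 1, 3, -3),
    (2, 2, 11, 1, 0, -1), (0, 5, 4, 3, 1, -3), (0, 3, 7, 3, 4, -4), (2, 4, 2, 1, 0, -1)]],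
   [[(0, 1, 6, 2, 5, -4), (0, 2, 11, 1, 0, 0), (0, 0, 4, 0, 2, -3), (1, 0, 3, 1, 5, -1),
    (0, 1, 10, 2, 2, 0), (0, 2, 3, 1, 0, -1), (0, 0, 8, 0, 5, -2), (1, 0, 7, 1, -4, 5),
    (0, 1, 2, 2, -4, 1), (0, 2, 7, 1, 3, -2), (0, 0, 0, 0, -4, 2), (1, 0, 11, 1, -4, 2)],
   [(1, 1, 0, 0, 0, 0), (1, 2, 2, 0, 3, -1), (1, 3, 6, 0, 2, 1), (1, 4, 1, 3, 2, 0),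
    (1, 1, 4, 0, 3, 1), (1, 2, 6, 0, 0, 3), (1, 3, 10, 0, -4, 4), (1, 4, 5, 3, -1, 3),
    (1, 1, 8, 0, -6, 5), (1, 2, 10, 0, -6, 4), (1, 3, 2, 0, -1, 1), (1, 4, 9, 3, -4, 3)],
   [(1, 5, 7, 0, 0, 1), (2, 4, 9, 2, 3, -2), (2, 3, 4, 2, 2, -1), (0, 5, 9, 1, 4, -2),
    (1, 5, 11, 0, 0, 2), (2, 4, 1, 2, 0, 1), (2, 3, 8, 2, -1, 1), (0, 5, 1, 1, -2, 1),
    (1, 5, 3, 0, -3, 3), (2, 4, 5, 2, -3, 1), (2, 3, 0, 2, -1, 0), (0, 5, 5, 1, 1, -2)],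
   [(0, 5, 6, 2, 2, -2), (2, 2, 9, 3, 1, 0), (2, 4, 4, 2, -2, 1), (0, 3, 5, 3, 2, -2),
    (0, 5, 10, 2, 2, -1), (2, 2, 1, 3, -2, 1), (2, 4, 8, 2, 1, -1), (0, 3, 9, 3, 2, -1),
    (0, 5, 2, 2, -1, 0), (2, 2, 5, 3, 1, -1), (2, 4, 0, 2, 1, 0), (0, 3, 1, 3, -1, 0)],
   [(0, 3, 2, 0, -2, 0), (2, 3, 9, 3, -1, 0), (2, 2, 4, 3, 0, -1), (1, 5, 10, 0, 0, 1),
    (0, 3, 6, 0, 4, -3), (2, 3, 1, 3, 2, -1), (2, 2, 8, 3, 3, -1), (1, 5, 2, 0, 0, 2),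
    (0, 3, 10, 0, 1, 0), (2, 3, 5, 3, -1, 1), (2, 2, 0, 3, -3, 2), (1, 5, 6, 0, -3, 3)],
   [(0, 0, 2, 3, -3, 0), (0, 2, 5, 3, 4, -4), (0, 1, 8, 3, 6, -3), (1, 0, 9, 1, -3, 3),
    (0, 0, 6, 3, 6, -4), (0, 2, 9, 3, 4, -1), (0, 1, 0, 3, -3, 2), (1, 0, 1, 1, 0, 1),
    (0, 0, 10, 3, 0, 1), (0, 2, 1, 3, -5, 2), (0, 1, 4, 3, 0, -2), (1, 0, 5, 1, 0, 2)]]]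

/-- The image `q` of a coset `p` under a letter `s`, and the class in `ℤ²` of the element `ω` of `Π`
such that `p.word s = ω q.word`. -/
def letterMove : Letter → Coset → Coset × ℤ × ℤ
  | .u, (r, i, c, a) =>
    let t := kNormal (kWord (i, 0, a) ++ [.u])
    ((r, Fin.ofNat 6 t.1, c + Fin.ofNat 12 t.2.1, Fin.ofNat 4 t.2.2), 0)
  | .v, (r, i, c, a) => ((r, i, c, a + 1), 0)
  | .j, (r, i, c, a) => ((r, i, c + 1, a), 0)
  | .b, (r, i, c, a) =>
    let (r', i', c', a', z) := ((bTable.getD r []).getD i []).getD c default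
    ((r', i', c', a + a'), z)

/-- Codes for the cosets of the kernel of `Π → ℤ²`. -/
abbrev KerCoset : Type := Coset × ℤ × ℤ

/-- The right action of words on cosets of the kernel of `Π → ℤ²`. -/
def Word.move (w : Word) (x : KerCoset) : KerCoset :=
  w.foldl (fun x s => ((letterMove s x.1).1, x.2 + (letterMove s x.1).2)) x

lemma Word.move_cons (s : Letter) (w : Word) (x : KerCoset) :
    Word.move (s :: w) x = Word.move w (Word.move [s] x) := rfl

lemma Word.move_append (w w' : Word) (x : KerCoset) :
    Word.move (w ++ w') x = Word.move w' (Word.move w x) :=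
  List.foldl_append

lemma Word.move_add (w : Word) (p : Coset) (y z : ℤ × ℤ) :
    w.move (p, y + z) = ((w.move (p, y)).1, (w.move (p, y)).2 + z) := by
  induction w generalizing p y with
  | nil => rfl
  | cons s w ih =>
    have hs : Word.move [s] (p, y + z) = ((Word.move [s] (p, y)).1, (Word.move [s] (p, y)).2 + z) :=
      Prod.ext rfl (add_right_comm y z _)
    rw [Word.move_cons s w, hs, Word.move_cons s w, ih]

lemma Word.move_eq_move {w w' : Word} (h : ∀ p, w.move (p, 0) = w'.move (p, 0)) (x : KerCoset) :
    w.move x = w'.move x := by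
  obtain ⟨p, y⟩ := x
  rw [← zero_add y, Word.move_add, Word.move_add, h p]

lemma move_u_cube : ∀ x, Word.move [.u, .u, .u] x = Word.move [] x :=
  Word.move_eq_move (by decide +kernel)

lemma move_v_fourth : ∀ x, Word.move [.v, .v, .v, .v] x = Word.move [] x :=
  Word.move_eq_move (by decide +kernel)

lemma move_b_cube : ∀ x, Word.move [.b, .b, .b] x = Word.move [] x :=
  Word.move_eq_move (by decide +kernel)

lemma move_uvuv : ∀ x, Word.move [.u, .v, .u, .v] x = Word.move [.v, .u, .v, .u] x :=
  Word.move_eq_move (by decide +kernel)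

lemma move_vb : ∀ x, Word.move [.v, .b] x = Word.move [.b, .v] x :=
  Word.move_eq_move (by decide +kernel)

lemma move_buv_cube :
    ∀ x, Word.move [.b, .u, .v, .b, .u, .v, .b, .u, .v] x = Word.move [] x :=
  Word.move_eq_move (by decide +kernel)

lemma move_buvu_sq_mul_v :
    ∀ x, Word.move [.b, .u, .v, .u, .b, .u, .v, .u, .v] x = Word.move [] x :=
  Word.move_eq_move (by decide +kernel)

lemma move_j : ∀ x, Word.move [.j] x = Word.move [.u, .v, .u, .v] x :=
  Word.move_eq_move (by decide +kernel)

lemma Word.leftInverse_move {w w' : Word} (h : ∀ x, Word.move (w' ++ w) x = Word.move [] x) :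
    Function.LeftInverse w.move w'.move := fun x =>
  (Word.move_append w' w x).symm.trans (h x)

/-- The permutations of `KerCoset` given by the generators. -/
def generatorPerm : CSgen → Equiv.Perm KerCoset
  | .u => ⟨Word.move [.u], Word.move [.u, .u], Word.leftInverse_move move_u_cube,
      Word.leftInverse_move move_u_cube⟩
  | .v => ⟨Word.move [.v], Word.move [.v, .v, .v], Word.leftInverse_move move_v_fourth,
      Word.leftInverse_move move_v_fourth⟩
  | .b => ⟨Word.move [.b], Word.move [.b, .b], Word.leftInverse_move move_b_cube,
      Word.leftInverse_move move_b_cube⟩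

lemma generatorPerm_relations :
    ∀ r ∈ csRels, FreeGroup.lift (fun s => MulOpposite.op (generatorPerm s)) r = 1 := by
  have hu (x : KerCoset) : generatorPerm .u x = Word.move [.u] x := rfl
  have hv (x : KerCoset) : generatorPerm .v x = Word.move [.v] x := rfl
  have hb (x : KerCoset) : generatorPerm .b x = Word.move [.b] x := rfl
  intro r hr
  simp only [csRels, Set.mem_insert_iff, Set.mem_singleton_iff] at hr
  rcases hr with rfl | rfl | rfl | rfl | rfl | rfl | rfl <;>
    simp only [map_mul, map_inv, FreeGroup.lift_apply_of, mul_inv_eq_one, pow_succ,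
      pow_zero, one_mul] <;>
    refine MulOpposite.unop_injective (Equiv.ext fun x => ?_) <;>
    simp only [MulOpposite.unop_mul, MulOpposite.unop_op, MulOpposite.unop_one,
      Equiv.Perm.mul_apply, Equiv.Perm.one_apply, hu, hv, hb, ← Word.move_append,
      List.cons_append, List.nil_append]
  exacts [move_u_cube x, move_v_fourth x, move_b_cube x, move_uvuv x, move_vb x, move_buv_cube x,
    move_buvu_sq_mul_v x]

/-- The right action of `CS` on cosets of the kernel of `Π → ℤ²`. -/
def act (x : KerCoset) (g : CS) : KerCoset :=
  (PresentedGroup.toGroup generatorPerm_relations g).unop x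

lemma act_one (x : KerCoset) : act x 1 = x := by simp [act]

lemma act_mul (x : KerCoset) (g h : CS) : act x (g * h) = act (act x g) h := by simp [act]

lemma act_of (x : KerCoset) (s : CSgen) : act x (PresentedGroup.of s) = generatorPerm s x := by
  rw [act, PresentedGroup.toGroup.of, MulOpposite.unop_op]

lemma act_letter (x : KerCoset) (s : Letter) : act x s.val = Word.move [s] x := by
  cases s with
  | u => exact act_of x .u
  | v => exact act_of x .v
  | b => exact act_of x .b
  | j =>
    rw [show Letter.j.val = gu * gv * (gu * gv) from pow_two _]
    simp only [act_mul, gu, gv, act_of]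
    exact (move_j x).symm

lemma act_val (x : KerCoset) (w : Word) : act x w.val = w.move x := by
  induction w generalizing x with
  | nil => exact act_one x
  | cons s w ih => rw [Word.val_cons, act_mul, act_letter, ih, Word.move_cons s w]

lemma act_add (p : Coset) (y z : ℤ × ℤ) (g : CS) :
    act (p, y + z) g = ((act (p, y) g).1, (act (p, y) g).2 + z) := by
  obtain ⟨w, rfl⟩ := exists_word_val_eq g
  rw [act_val, act_val, Word.move_add]

/-- The right action of `CS` on the cosets of `Π`. -/
def Coset.act (p : Coset) (g : CS) : Coset := (CartwrightSteger.act (p, 0) g).1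

lemma act_fst (x : KerCoset) (g : CS) : (act x g).1 = Coset.act x.1 g := by
  obtain ⟨p, y⟩ := x
  rw [← zero_add y, act_add]
  rfl

lemma Coset.act_one (p : Coset) : Coset.act p 1 = p := by
  rw [Coset.act, CartwrightSteger.act_one]

lemma Coset.act_mul (p : Coset) (g h : CS) : Coset.act p (g * h) = Coset.act (Coset.act p g) h := by
  rw [Coset.act, CartwrightSteger.act_mul, act_fst]; rfl

lemma act_zero_word (p : Coset) : act 0 (Coset.word p).val = (p, 0) := by
  rw [act_val]
  revert p
  decide +kernel

/-! ### The coset table computes cosets of `Π` -/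

lemma letterMove_u_eq_kNormal (p : Coset) :
    Coset.kIndex (letterMove .u p).1 = kNormal (kWord (Coset.kIndex p) ++ [.u]) := by
  revert p
  decide +kernel

lemma Coset.word_val (p : Coset) :
    (Coset.word p).val = (rowWord p.1).val * (kWord (Coset.kIndex p)).val :=
  Word.val_append _ _

lemma word_letterMove_val {s : Letter} (hs : s ≠ .b) (p : Coset) :
    (Coset.word (letterMove s p).1).val = (Coset.word p).val * s.val := by
  obtain ⟨r, i, c, a⟩ := p
  cases s with
  | b => exact absurd rfl hs
  | u =>
    have hb : Letter.b ∉ kWord (Coset.kIndex (r, i, c, a)) ++ [.u] := by simp [b_notMem_kWord]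
    rw [Coset.word_val, letterMove_u_eq_kNormal, kWord_kNormal_val hb, Word.val_append,
      ← mul_assoc, Coset.word_val]
    rfl
  | v =>
    have ha : gv ^ ((a + 1 : Fin 4) : ℕ) = gv ^ (a : ℕ) * gv := by
      rw [← pow_succ, Fin.val_add, ← pow_eq_pow_mod _ v_pow_four]
      rfl
    rw [Coset.word_val, Coset.word_val]
    simp only [kWord_val, Coset.kIndex, letterMove, ha, Letter.val, mul_assoc]
  | j =>
    have hc : gj ^ ((c + 1 : Fin 12) : ℕ) = gj ^ (c : ℕ) * gj := by
      rw [← pow_succ, Fin.val_add, ← pow_eq_pow_mod _ j_pow_twelve]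
      rfl
    rw [Coset.word_val, Coset.word_val]
    simp only [kWord_val, Coset.kIndex, letterMove, hc, Letter.val, mul_assoc,
      (commute_j_v.pow_right (a : ℕ)).eq]

lemma Coset.act_letter (p : Coset) (s : Letter) : Coset.act p s.val = (letterMove s p).1 := by
  rw [Coset.act, CartwrightSteger.act_letter]
  rfl

lemma Coset.word_act_val_of_mem_K {k : CS} (hk : k ∈ K) (p : Coset) :
    (Coset.word (Coset.act p k)).val = (Coset.word p).val * k := by
  obtain ⟨w, hw, rfl⟩ := exists_b_notMem_val_eq hk
  clear hk
  induction w generalizing p with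
  | nil => rw [Word.val_nil, Coset.act_one, mul_one]
  | cons s w ih =>
    rw [List.mem_cons, not_or] at hw
    rw [Word.val_cons, Coset.act_mul, ih _ hw.2, Coset.act_letter,
      word_letterMove_val (Ne.symm hw.1), mul_assoc]

/-- The table is right about the image of the coset `p` under `g`. -/
def IsCorrectAt (p : Coset) (g : CS) : Prop :=
  (Coset.word p).val * g * (Coset.word (Coset.act p g)).val⁻¹ ∈ PiGrp

lemma isCorrectAt_of_mem_K (p : Coset) {k : CS} (hk : k ∈ K) : IsCorrectAt p k := by
  rw [IsCorrectAt, Coset.word_act_val_of_mem_K hk, mul_inv_cancel]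
  exact one_mem PiGrp

lemma mul_inv_act_mul (p : Coset) (g h : CS) :
    (Coset.word p).val * (g * h) * (Coset.word (Coset.act p (g * h))).val⁻¹ =
      (Coset.word p).val * g * (Coset.word (Coset.act p g)).val⁻¹ *
        ((Coset.word (Coset.act p g)).val * h *
          (Coset.word (Coset.act (Coset.act p g) h)).val⁻¹) := by
  rw [Coset.act_mul]
  group

lemma IsCorrectAt.mul_iff {p : Coset} {g : CS} (hg : IsCorrectAt p g) (h : CS) :
    IsCorrectAt p (g * h) ↔ IsCorrectAt (Coset.act p g) h := by
  rw [IsCorrectAt, mul_inv_act_mul]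
  exact PiGrp.mul_mem_cancel_left hg

lemma IsCorrectAt.mul_iff_left {p : Coset} {g h : CS} (hh : IsCorrectAt (Coset.act p g) h) :
    IsCorrectAt p (g * h) ↔ IsCorrectAt p g := by
  rw [IsCorrectAt, mul_inv_act_mul]
  exact PiGrp.mul_mem_cancel_right hh

lemma isCorrectAt_mul_iff_of_mem_K (p : Coset) (g : CS) {k : CS} (hk : k ∈ K) :
    IsCorrectAt p (g * k) ↔ IsCorrectAt p g :=
  (isCorrectAt_of_mem_K _ hk).mul_iff_left

lemma isCorrectAt_act_iff_of_mem_K (p : Coset) (g : CS) {k : CS} (hk : k ∈ K) :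
    IsCorrectAt (Coset.act p k) g ↔ IsCorrectAt p (k * g) :=
  ((isCorrectAt_of_mem_K p hk).mul_iff g).symm

/-- The table is right about the image of the coset `p` under `b`. -/
abbrev BCorrect (p : Coset) : Prop := IsCorrectAt p gb

lemma bCorrect_act_v_pow_iff (p : Coset) (n : ℕ) :
    BCorrect (Coset.act p (gv ^ n)) ↔ BCorrect p := by
  have hn : gv ^ n ∈ K := pow_mem v_mem_K n
  rw [BCorrect, isCorrectAt_act_iff_of_mem_K p gb hn, (commute_v_b.pow_left n).eq,
    isCorrectAt_mul_iff_of_mem_K p gb hn]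

-- Since `bjb` lies in `K`.
lemma bCorrect_act_b_mul_j_iff (p : Coset) :
    BCorrect (Coset.act p (gb * gj)) ↔ BCorrect p := by
  have hK : IsCorrectAt p (gb * gj * gb) := by
    rw [b_mul_j_mul_b]
    exact isCorrectAt_of_mem_K p (mul_mem v_mem_K (inv_mem j_mem_K))
  constructor
  · intro h
    exact (isCorrectAt_mul_iff_of_mem_K p gb j_mem_K).1 (h.mul_iff_left.1 hK)
  · intro h
    exact (((isCorrectAt_mul_iff_of_mem_K p gb j_mem_K).2 h).mul_iff gb).1 hK

-- The braid relation `bub = ubu` links three values of `b`.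
lemma bCorrect_act_u_iff_of_bCorrect {p : Coset} (h : BCorrect p) :
    BCorrect (Coset.act p gu) ↔ BCorrect (Coset.act p (gb * gu)) := by
  rw [BCorrect, isCorrectAt_act_iff_of_mem_K p gb u_mem_K,
    ← isCorrectAt_mul_iff_of_mem_K p (gu * gb) u_mem_K, ← b_mul_u_mul_b]
  exact ((isCorrectAt_mul_iff_of_mem_K p gb u_mem_K).2 h).mul_iff gb

lemma bCorrect_of_bCorrect_act {p : Coset} (hbu : BCorrect (Coset.act p (gb * gu)))
    (hu : BCorrect (Coset.act p gu)) : BCorrect p := by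
  rw [BCorrect, isCorrectAt_act_iff_of_mem_K p gb u_mem_K,
    ← isCorrectAt_mul_iff_of_mem_K p (gu * gb) u_mem_K, ← b_mul_u_mul_b, hbu.mul_iff_left] at hu
  exact (isCorrectAt_mul_iff_of_mem_K p gb u_mem_K).1 hu

lemma Coset.act_val (p : Coset) (w : Word) : Coset.act p w.val = (w.move (p, 0)).1 := by
  rw [Coset.act, CartwrightSteger.act_val]

/-- The position of the cosets `(r, i, c, ·)` in a bit mask. -/
def Coset.index (p : Coset) : ℕ := 72 * p.1 + 12 * p.2.1 + p.2.2.1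

lemma bCorrect_iff_of_index_eq {p q : Coset} (h : Coset.index p = Coset.index q) :
    BCorrect p ↔ BCorrect q := by
  have hv (p : Coset) : BCorrect p ↔ BCorrect (p.1, p.2.1, p.2.2.1, 0) := by
    have hp : ∀ p : Coset,
        (Word.move (List.replicate p.2.2.2 .v) ((p.1, p.2.1, p.2.2.1, 0), 0)).1 = p := by
      decide +kernel
    nth_rw 1 [← hp p]
    rw [← Coset.act_val, Word.val_replicate]
    exact bCorrect_act_v_pow_iff _ _
  obtain ⟨⟨r, hr⟩, ⟨i, hi⟩, ⟨c, hc⟩, a⟩ := p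
  obtain ⟨⟨r', hr'⟩, ⟨i', hi'⟩, ⟨c', hc'⟩, a'⟩ := q
  simp only [Coset.index] at h
  obtain rfl : r = r' := by omega
  obtain rfl : i = i' := by omega
  obtain rfl : c = c' := by omega
  rw [hv, hv (_, _, _, a')]

/-- Inference rules `(premises, conclusion)` about `BCorrect`, obtained from `p`. -/
def Coset.rules (p : Coset) : List (List Coset × Coset) :=
  let x := (Word.move [.b, .j] (p, 0)).1
  let y := (Word.move [.u] (p, 0)).1
  let z := (Word.move [.b, .u] (p, 0)).1
  [([p], x), ([x], p), ([p, y], z), ([p, z], y), ([y, z], p)]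

lemma bCorrect_of_mem_rules (p : Coset) :
    ∀ r ∈ Coset.rules p, (∀ q ∈ r.1, BCorrect q) → BCorrect r.2 := by
  have hx := bCorrect_act_b_mul_j_iff p
  have hyz := bCorrect_act_u_iff_of_bCorrect (p := p)
  have hp := bCorrect_of_bCorrect_act (p := p)
  have hbj : gb * gj = Word.val [.b, .j] := by simp [Letter.val]
  have hu : gu = Word.val [.u] := by simp [Letter.val]
  have hbu : gb * gu = Word.val [.b, .u] := by simp [Letter.val]
  rw [hbu, hu, Coset.act_val, Coset.act_val] at hyz hp
  rw [hbj, Coset.act_val] at hx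
  simp only [Coset.rules, List.forall_mem_cons, List.not_mem_nil, false_imp_iff, forall_const,
    and_true]
  exact ⟨hx.2, hx.1, fun h => (hyz h.1).1 h.2, fun h => (hyz h.1).2 h.2, fun h => hp h.2 h.1⟩

/-- Applies rules successively to a set of cosets, encoded as a bit mask `m`.
Matching on `m` makes the kernel evaluate it at each step. -/
def saturate : List (List Coset × Coset) → ℕ → ℕ
  | [], m => m
  | _ :: _, 0 => 0
  | r :: l, m + 1 =>
    saturate l (if r.1.all fun q => (m + 1).testBit (Coset.index q) then
      (m + 1) ||| 1 <<< Coset.index r.2 else m + 1)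

lemma bCorrect_of_testBit_saturate {l : List (List Coset × Coset)}
    (hl : ∀ r ∈ l, (∀ q ∈ r.1, BCorrect q) → BCorrect r.2) {m : ℕ}
    (hm : ∀ p, m.testBit (Coset.index p) → BCorrect p) {p : Coset}
    (hp : (saturate l m).testBit (Coset.index p)) : BCorrect p := by
  induction l generalizing m with
  | nil => exact hm p hp
  | cons r l ih =>
    rw [List.forall_mem_cons] at hl
    cases m with
    | zero => exact hm p hp
    | succ m =>
      refine ih hl.2 (fun p hp => ?_) hp
      split_ifs at hp with hr
      · rw [Nat.testBit_or, Nat.shiftLeft_eq, one_mul, Nat.testBit_two_pow, Bool.or_eq_true,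
          decide_eq_true_iff] at hp
        rcases hp with hp | hp
        · exact hm p hp
        · exact (bCorrect_iff_of_index_eq hp).1
            (hl.1 fun q hq => hm q (List.all_eq_true.1 hr q hq))
      · exact hm p hp

/-- A word for `a₁`. -/
def a1Word : Word := [.v, .u, .v, .v, .v] ++ List.replicate 4 .j ++ [.b, .u, .v, .j, .j]

/-- A word for `a₂`. -/
def a2Word : Word := [.v, .v, .u, .b, .u, .v, .v, .v, .u, .v, .v, .j]

/-- A word for `a₃`. -/
def a3Word : Word :=
  [.u, .u, .v, .v, .u] ++ List.replicate 9 .j ++ [.b, .v, .v, .v, .u, .v, .v, .v] ++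
    List.replicate 8 .j

lemma a1Word_val : a1Word.val = a1 := by
  simp [a1Word, a1, Letter.val, v_inv, pow_succ, mul_assoc]

lemma a2Word_val : a2Word.val = a2 := by
  simp [a2Word, a2, Letter.val, v_inv, pow_succ, mul_assoc]

lemma a3Word_val : a3Word.val = a3 := by
  simp [a3Word, a3, Letter.val, u_inv, v_inv, pow_two, mul_assoc, -List.reduceReplicate]

lemma bCorrect_of_cycMat_eq {p : Coset} {w : Word} (hw : w.val ∈ PiGrp) (n : ℕ)
    (h : Word.cycMat (Coset.word p ++ [.b]) =
      .scalar n * Word.cycMat (w ++ Coset.word (Word.move [.b] (p, 0)).1)) : BCorrect p := by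
  have hb : gb = Word.val [.b] := by simp [Letter.val]
  rwa [BCorrect, IsCorrectAt, hb, Coset.act_val, ← Word.val_append, Word.val_eq_of_cycMat n h,
    Word.val_append, mul_inv_cancel_right]

/-- Cosets at which the value of `b` is checked directly. -/
def baseCosets : List Coset := [(0, 2, 0, 0), (0, 2, 5, 0), (0, 3, 1, 0), (1, 1, 11, 0)]

lemma bCorrect_zero : BCorrect 0 :=
  bCorrect_of_cycMat_eq (w := []) (one_mem PiGrp) 0 (by decide +kernel)

lemma bCorrect_of_mem_baseCosets : ∀ p ∈ baseCosets, BCorrect p := by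
  have h1 : a1Word.val ∈ PiGrp := a1Word_val ▸ a1_mem
  have h2 : a2Word.val ∈ PiGrp := a2Word_val ▸ a2_mem
  have h3 : a3Word.val ∈ PiGrp := a3Word_val ▸ a3_mem
  have h31 : Word.val (a3Word ++ a3Word ++ a3Word ++ a1Word) ∈ PiGrp := by
    simp only [Word.val_append]
    exact mul_mem (mul_mem (mul_mem h3 h3) h3) h1
  simp only [baseCosets, List.forall_mem_cons, List.not_mem_nil, false_imp_iff, forall_const,
    and_true]
  exact ⟨bCorrect_of_cycMat_eq (w := []) (one_mem PiGrp) 0 (by decide +kernel),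
    bCorrect_of_cycMat_eq h1 0 (by decide +kernel),
    bCorrect_of_cycMat_eq h2 0 (by decide +kernel),
    bCorrect_of_cycMat_eq h31 3 (by decide +kernel)⟩

/-- All rules, repeated often enough to reach every coset from `0`. -/
def rules : List (List Coset × Coset) :=
  let l : List Coset := List.finRange 3 ×ˢ List.finRange 6 ×ˢ List.finRange 12 ×ˢ List.finRange 4
  baseCosets.map ([], ·) ++ (l ++ l ++ l).flatMap Coset.rules

lemma saturate_rules_one : saturate rules 1 = 2 ^ 216 - 1 := by
  decide +kernel

lemma bCorrect (p : Coset) : BCorrect p := by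
  have hrules : ∀ r ∈ rules, (∀ q ∈ r.1, BCorrect q) → BCorrect r.2 := by
    intro r hr
    rcases List.mem_append.1 hr with hr | hr
    · obtain ⟨q, hq, rfl⟩ := List.mem_map.1 hr
      exact fun _ => bCorrect_of_mem_baseCosets q hq
    · obtain ⟨q, -, hq⟩ := List.mem_flatMap.1 hr
      exact bCorrect_of_mem_rules q r hq
  refine bCorrect_of_testBit_saturate hrules (m := 1) (fun q hq => ?_) ?_
  · rw [Nat.testBit_one_eq_true_iff_self_eq_zero] at hq
    exact (bCorrect_iff_of_index_eq hq).2 bCorrect_zero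
  · rw [saturate_rules_one, Nat.testBit_two_pow_sub_one, decide_eq_true_iff]
    obtain ⟨⟨r, hr⟩, ⟨i, hi⟩, ⟨c, hc⟩, a⟩ := p
    simp only [Coset.index]
    omega

lemma isCorrectAt (p : Coset) (g : CS) : IsCorrectAt p g := by
  obtain ⟨w, rfl⟩ := exists_word_val_eq g
  induction w generalizing p with
  | nil => exact isCorrectAt_of_mem_K p (one_mem K)
  | cons s w ih =>
    refine (IsCorrectAt.mul_iff ?_ _).2 (ih _)
    cases s with
    | u => exact isCorrectAt_of_mem_K p u_mem_K
    | v => exact isCorrectAt_of_mem_K p v_mem_K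
    | b => exact bCorrect p
    | j => exact isCorrectAt_of_mem_K p j_mem_K

/-! ### The index of `Π` -/

lemma act_a1 : act 0 a1 = (0, 2, 1) := by
  rw [← a1Word_val, act_val]
  decide +kernel

lemma act_a2 : act 0 a2 = (0, 3, -2) := by
  rw [← a2Word_val, act_val]
  decide +kernel

lemma act_a3 : act 0 a3 = (0, 0, -1) := by
  rw [← a3Word_val, act_val]
  decide +kernel

lemma mem_PiGrp_iff {g : CS} : g ∈ PiGrp ↔ Coset.act 0 g = 0 := by
  constructor
  · intro hg
    induction hg using Subgroup.closure_induction with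
    | mem x hx =>
      rcases hx with rfl | rfl | rfl
      exacts [congrArg Prod.fst act_a1, congrArg Prod.fst act_a2, congrArg Prod.fst act_a3]
    | one => exact Coset.act_one 0
    | mul x y _ _ hx hy => rw [Coset.act_mul, hx, hy]
    | inv x _ hx => rw [← hx, ← Coset.act_mul, mul_inv_cancel, Coset.act_one, hx]
  · intro hg
    have h := isCorrectAt 0 g
    have h0 : (Coset.word 0).val = 1 := rfl
    rwa [IsCorrectAt, hg, h0, one_mul, inv_one, mul_one] at h

/-- The action of `CS` on the cosets of `Π`, turned into a left action by inversion. -/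
abbrev Coset.mulAction : MulAction CS Coset where
  smul g p := Coset.act p g⁻¹
  one_smul p := by
    change Coset.act p 1⁻¹ = p
    rw [inv_one, Coset.act_one]
  mul_smul g h p := by
    change Coset.act p (g * h)⁻¹ = Coset.act (Coset.act p h⁻¹) g⁻¹
    rw [mul_inv_rev, Coset.act_mul]

theorem index_PiGrp : PiGrp.index = 864 := by
  let _ := Coset.mulAction
  have hsmul (g : CS) (p : Coset) : g • p = Coset.act p g⁻¹ := rfl
  have hstab : MulAction.stabilizer CS (0 : Coset) = PiGrp := by
    ext g
    rw [MulAction.mem_stabilizer_iff, hsmul, ← mem_PiGrp_iff, inv_mem_iff]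
  have hpre : MulAction.IsPretransitive CS Coset := by
    refine .of_orbit (x₀ := 0) fun p => ⟨(Coset.word p).val⁻¹, ?_⟩
    rw [hsmul, inv_inv, Coset.act]
    exact congrArg Prod.fst (act_zero_word p)
  rw [← hstab, MulAction.index_stabilizer_of_transitive]
  simp [Coset]

/-! ### The abelianization of `Π` -/

/-- The homomorphism `Π → ℤ²` given by the table. -/
def homZ : PiGrp →* Multiplicative (ℤ × ℤ) where
  toFun g := .ofAdd (act 0 (g : CS)).2
  map_one' := by rw [OneMemClass.coe_one, act_one]; rfl
  map_mul' g h := by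
    have hg : act 0 (g : CS) = (0, 0 + (act 0 (g : CS)).2) :=
      Prod.ext (mem_PiGrp_iff.1 g.2) (zero_add _).symm
    rw [Subgroup.coe_mul, act_mul, hg, act_add, add_comm, ofAdd_add, zero_add]
    rfl

/-- The word representing the inverse of a letter. -/
def Letter.inv : Letter → Word
  | .u => [.u, .u]
  | .v => [.v, .v, .v]
  | .b => [.b, .b]
  | .j => List.replicate 11 .j

/-- The word representing the inverse of a word. -/
def Word.inv (w : Word) : Word := w.reverse.flatMap Letter.inv

lemma Word.inv_cons (s : Letter) (w : Word) : Word.inv (s :: w) = Word.inv w ++ s.inv := by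
  simp [Word.inv]

lemma Letter.inv_val (s : Letter) : s.inv.val = s.val⁻¹ := by
  cases s with
  | u => simp [Letter.inv, Letter.val, u_inv]
  | v => simp [Letter.inv, Letter.val, v_inv, mul_assoc]
  | b => simp [Letter.inv, Letter.val, b_inv]
  | j => rw [Letter.inv, Word.val_replicate, Letter.val, j_pow_eleven]

lemma Word.inv_val (w : Word) : (Word.inv w).val = w.val⁻¹ := by
  induction w with
  | nil => exact inv_one.symm
  | cons s w ih =>
    rw [Word.inv_cons, Word.val_append, ih, Letter.inv_val, Word.val_cons, mul_inv_rev]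

lemma relation_a1_a2_a3 :
    a2 * a1 * a2⁻¹ * a2⁻¹ * a1⁻¹ * a3 * a1 * a3 ^ 3 * a1 ^ 2 * a2⁻¹ * a3 ^ 3 = 1 := by
  have h := Word.val_eq_of_cycMat (w' := [])
    (w := a2Word ++ a1Word ++ Word.inv a2Word ++ Word.inv a2Word ++ Word.inv a1Word ++ a3Word ++
      a1Word ++ (a3Word ++ a3Word ++ a3Word) ++ (a1Word ++ a1Word) ++ Word.inv a2Word ++
      (a3Word ++ a3Word ++ a3Word)) 7 (by decide +kernel)
  simpa only [Word.val_append, Word.inv_val, a1Word_val, a2Word_val, a3Word_val, Word.val_nil,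
    ← pow_two, ← pow_succ] using h

lemma bijective_of_closure_eq_top {A : Type*} [AddCommGroup A] {x y z : A}
    (hA : AddSubgroup.closure {x, y, z} = ⊤) (h : 3 • x - 2 • y + 7 • z = 0)
    {f : A →+ ℤ × ℤ} (hx : f x = (2, 1)) (hy : f y = (3, -2)) (hz : f z = (0, -1)) :
    Function.Bijective f := by
  have hf (k l m : ℤ) : f (k • x + l • y + m • z) = (2 * k + 3 * l, k - 2 * l - m) := by
    simp only [map_add, map_zsmul, hx, hy, hz]
    ext <;> simp <;> ring
  refine ⟨(injective_iff_map_eq_zero f).2 fun a ha => ?_, fun ⟨s, t⟩ => ?_⟩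
  · have hmem : a ∈ Submodule.span ℤ {x, y, z} := by
      rw [← Submodule.mem_toAddSubgroup, Submodule.span_int_eq_addSubgroupClosure, hA]
      exact AddSubgroup.mem_top a
    obtain ⟨k, l, m, rfl⟩ := Submodule.mem_span_triple.1 hmem
    rw [hf, Prod.mk_eq_zero] at ha
    obtain ⟨n, rfl⟩ : ∃ n, k = n * 3 := ⟨k + l, by omega⟩
    obtain rfl : l = n * -2 := by omega
    obtain rfl : m = n * 7 := by omega
    simp only [mul_zsmul]
    rw [← zsmul_add, ← zsmul_add]
    convert zsmul_zero n
    rw [← h]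
    abel
  · exact ⟨-s • x + s • y + (-3 * s - t) • z, by rw [hf]; ext <;> simp <;> ring⟩

/-- The class of an element of `Π` in the abelianization of `Π`, written additively. -/
def abClass (g : PiGrp) : Additive (Abelianization PiGrp) := .ofMul (.of g)

lemma closure_abClass_eq_top :
    AddSubgroup.closure {abClass ⟨a1, a1_mem⟩, abClass ⟨a2, a2_mem⟩, abClass ⟨a3, a3_mem⟩} = ⊤ := by
  have hPi :
      Subgroup.closure {⟨a1, a1_mem⟩, ⟨a2, a2_mem⟩, ⟨a3, a3_mem⟩} = (⊤ : Subgroup PiGrp) := by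
    apply Subgroup.map_injective PiGrp.subtype_injective
    rw [MonoidHom.map_closure, Set.image_insert_eq, Set.image_pair, ← MonoidHom.range_eq_map,
      Subgroup.range_subtype]
    rfl
  have h := congrArg (Subgroup.map Abelianization.of) hPi
  rw [MonoidHom.map_closure, Set.image_insert_eq, Set.image_pair, ← MonoidHom.range_eq_map,
    MonoidHom.range_eq_top.2 QuotientGroup.mk_surjective] at h
  exact (Subgroup.toAddSubgroup_closure _).symm.trans (congrArg Subgroup.toAddSubgroup h)

lemma abClass_relation :
    3 • abClass ⟨a1, a1_mem⟩ - 2 • abClass ⟨a2, a2_mem⟩ + 7 • abClass ⟨a3, a3_mem⟩ = 0 := by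
  let x : PiGrp := ⟨a1, a1_mem⟩
  let y : PiGrp := ⟨a2, a2_mem⟩
  let z : PiGrp := ⟨a3, a3_mem⟩
  have h : y * x * y⁻¹ * y⁻¹ * x⁻¹ * z * x * z ^ 3 * x ^ 2 * y⁻¹ * z ^ 3 = 1 :=
    Subtype.ext relation_a1_a2_a3
  have h' := congrArg (fun g => Additive.ofMul (Abelianization.of g)) h
  simp only [map_mul, map_inv, map_pow, map_one, ofMul_mul, ofMul_inv, ofMul_pow, ofMul_one] at h'
  rw [← h']
  simp only [abClass]
  abel

theorem nonempty_abelianization_mulEquiv :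
    Nonempty (Abelianization PiGrp ≃* Multiplicative (ℤ × ℤ)) := by
  have hf (g : PiGrp) :
      MonoidHom.toAdditiveLeft (Abelianization.lift homZ) (abClass g) = (act 0 g).2 :=
    congrArg Multiplicative.toAdd (Abelianization.lift_apply_of homZ g)
  have hbij : Function.Bijective (MonoidHom.toAdditiveLeft (Abelianization.lift homZ)) :=
    bijective_of_closure_eq_top closure_abClass_eq_top abClass_relation
      (by rw [hf, act_a1]) (by rw [hf, act_a2]) (by rw [hf, act_a3])
  exact ⟨MulEquiv.ofBijective (Abelianization.lift homZ) hbij⟩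

/-! ### Torsion -/

lemma Word.b_notMem_inv {w : Word} (hw : Letter.b ∉ w) : Letter.b ∉ Word.inv w := by
  simp only [Word.inv, List.mem_flatMap, List.mem_reverse, not_exists, not_and]
  rintro s hs
  cases s with
  | b => exact absurd hs hw
  | u | v | j => simp [Letter.inv]

lemma Coset.act_fst_of_mem_K {k : CS} (hk : k ∈ K) (p : Coset) : (Coset.act p k).1 = p.1 := by
  obtain ⟨w, hw, rfl⟩ := exists_b_notMem_val_eq hk
  clear hk
  induction w generalizing p with
  | nil => rw [Word.val_nil, Coset.act_one]
  | cons s w ih =>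
    rw [List.mem_cons, not_or] at hw
    rw [Word.val_cons, Coset.act_mul, ih _ hw.2, Coset.act_letter]
    cases s with
    | b => exact absurd rfl hw.1
    | u | v | j => rfl

lemma eq_one_of_mem_K_of_act_eq {k : CS} (hk : k ∈ K) {p : Coset} (h : Coset.act p k = p) :
    k = 1 := by
  have hp := Coset.word_act_val_of_mem_K hk p
  rwa [h, left_eq_mul] at hp

/-- The triple encoding the element of `K` that takes the coset `q'` to the coset `q` in the same
row. -/
def Coset.quotIndex (q' q : Coset) : ℕ × ℕ × ℕ :=
  kNormal (Word.inv (kWord (Coset.kIndex q')) ++ kWord (Coset.kIndex q))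

lemma Coset.quotIndex_act_val {k : CS} (hk : k ∈ K) (q : Coset) :
    (kWord (Coset.quotIndex q (Coset.act q k))).val = k := by
  have h := Coset.word_act_val_of_mem_K hk q
  rw [Coset.word_val, Coset.word_val, Coset.act_fst_of_mem_K hk, mul_assoc, mul_right_inj] at h
  have hb : Letter.b ∉
      Word.inv (kWord (Coset.kIndex q)) ++ kWord (Coset.kIndex (Coset.act q k)) := by
    simp [b_notMem_kWord, Word.b_notMem_inv]
  rw [Coset.quotIndex, kWord_kNormal_val hb, Word.val_append, Word.inv_val, h,
    inv_mul_cancel_left]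

/-- The triples encoding the elements `k` of `K` such that `d k` fixes a coset of `Π`. -/
def fixIndices (d : Word) : Finset (ℕ × ℕ × ℕ) :=
  (Finset.univ.filter fun q : Coset => (d.move (q, 0)).1.1 = q.1).image fun q =>
    Coset.quotIndex (d.move (q, 0)).1 q

lemma exists_mem_fixIndices {d : Word} {k : CS} (hk : k ∈ K) {q : Coset}
    (hq : Coset.act q (d.val * k) = q) : ∃ t ∈ fixIndices d, (kWord t).val = k := by
  rw [Coset.act_mul] at hq
  have hrow := Coset.act_fst_of_mem_K hk (Coset.act q d.val)
  have hval := Coset.quotIndex_act_val hk (Coset.act q d.val)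
  rw [hq, Coset.act_val] at hrow hval
  exact ⟨_, Finset.mem_image.2 ⟨q, Finset.mem_filter.2 ⟨Finset.mem_univ q, hrow.symm⟩, rfl⟩, hval⟩

/-- The square or the cube of the element represented by the word `w` is visibly of height at least
`9`. -/
def Word.HasHighPower (w : Word) : Prop := (w ++ w).IsHigh ∨ (w ++ w ++ w).IsHigh

instance (w : Word) : Decidable w.HasHighPower := inferInstanceAs (Decidable (_ ∨ _))

lemma Word.HasHighPower.exists_nine_le_height {w : Word} (h : w.HasHighPower) :
    ∃ n, 9 ≤ height (w.val ^ n) := by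
  rcases h with h | h
  · exact ⟨2, by simpa only [Word.val_append, ← pow_two] using h.nine_le_height⟩
  · exact ⟨3, by simpa only [Word.val_append, ← pow_two, ← pow_succ] using h.nine_le_height⟩

lemma hasHighPower_b : ∀ t ∈ fixIndices [.b], Word.HasHighPower ([.b] ++ kWord t) := by
  decide +kernel

lemma hasHighPower_c : ∀ t ∈ fixIndices cWord, Word.HasHighPower (cWord ++ kWord t) := by
  decide +kernel

lemma exists_nine_le_height_pow {d : CS} (hd : d = gb ∨ d = gc) {k : CS} (hk : k ∈ K)
    {q : Coset} (hq : Coset.act q (d * k) = q) : ∃ n, 9 ≤ height ((d * k) ^ n) := by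
  obtain ⟨w, rfl, hw⟩ : ∃ w : Word, w.val = d ∧
      ∀ t ∈ fixIndices w, Word.HasHighPower (w ++ kWord t) := by
    rcases hd with rfl | rfl
    · exact ⟨[.b], mul_one _, hasHighPower_b⟩
    · exact ⟨cWord, cWord_val, hasHighPower_c⟩
  obtain ⟨t, ht, rfl⟩ := exists_mem_fixIndices hk hq
  simpa only [Word.val_append] using (hw t ht).exists_nine_le_height

theorem not_isOfFinOrder_of_mem_PiGrp : ∀ x ∈ PiGrp, x ≠ 1 → ¬ IsOfFinOrder x := by
  intro x hx hx1 hfin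
  obtain ⟨g, hg, hlow⟩ := exists_conj_mem_neighbors hfin
  have hfix : Coset.act (Coset.act 0 g) (g⁻¹ * x * g) = Coset.act 0 g := by
    rw [← Coset.act_mul, mul_assoc, mul_inv_cancel_left, Coset.act_mul, mem_PiGrp_iff.1 hx]
  rcases mem_neighbors.1 hg with hK | ⟨d, hd, k, hk, k', hk', heq⟩
  · have h := eq_one_of_mem_K_of_act_eq hK hfix
    rw [mul_assoc, inv_mul_eq_one, right_eq_mul] at h
    exact hx1 h
  · have hconj : d * (k' * k) = k⁻¹ * (g⁻¹ * x * g) * k := by rw [heq]; group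
    have hfix' : Coset.act (Coset.act (Coset.act 0 g) k) (d * (k' * k)) =
        Coset.act (Coset.act 0 g) k := by
      rw [hconj, ← Coset.act_mul, mul_assoc, mul_inv_cancel_left, Coset.act_mul, hfix]
    obtain ⟨n, hn⟩ := exists_nine_le_height_pow hd (mul_mem hk' hk) hfix'
    have hpow := conj_pow (i := n) (a := k⁻¹) (b := g⁻¹ * x * g)
    rw [inv_inv] at hpow
    rw [hconj, hpow, height_mul_of_mem_K_right hk, height_mul_of_mem_K_left (inv_mem hk)] at hn
    exact (hlow n).not_ge hn

end CartwrightSteger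

/-- `Π` has index 864 in `G`, is torsion-free, and its abelianization
is isomorphic to `ℤ²`. -/
theorem stmt_4 :
    PiGrp.index = 864 ∧
    (∀ x ∈ PiGrp, x ≠ 1 → ¬ IsOfFinOrder x) ∧
    Nonempty (Abelianization ↥PiGrp ≃* Multiplicative (ℤ × ℤ)) :=
  ⟨CartwrightSteger.index_PiGrp, CartwrightSteger.not_isOfFinOrder_of_mem_PiGrp,
    CartwrightSteger.nonempty_abelianization_mulEquiv⟩
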